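/- arXiv:1905.04653 — 4 statements merged into one kernel-verified Lean document; each statement's English description precedes it below -/
import Mathlib

section
/- Let 1 ≤ x2, x3 ≤ x1 and let N = 2x1 + x2 + x3 - 2. Then for every partition E(K_N) = E1 ∪ E2 ∪ E3 of the edges of the complete graph on N vertices, there is some i ∈ {1,2,3} such that the graph with edge set Ei contains a connected matching of size at least xi. -/
open SimpleGraph

variable {V : Type*}

/-- `M` is a matching: a finite set of ordered pairs of adjacent vertices
with pairwise disjoint endpoints. -/
def IsMatchingSet (G : SimpleGraph V) (M : Finset (V × V)) : Prop :=
  (∀ e ∈ M, G.Adj e.1 e.2) ∧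
  ∀ e ∈ M, ∀ f ∈ M, e ≠ f →
    e.1 ≠ f.1 ∧ e.1 ≠ f.2 ∧ e.2 ≠ f.1 ∧ e.2 ≠ f.2

/-- `M` is a connected matching in `G`: a matching all of whose edges lie in
one connected component of `G`. -/
def ConnMatching (G : SimpleGraph V) (M : Finset (V × V)) : Prop :=
  IsMatchingSet G M ∧ ∀ e ∈ M, ∀ f ∈ M, G.Reachable e.1 f.1

/-- Vertex `v` is covered by the matching `M`. -/
def Covers (M : Finset (V × V)) (v : V) : Prop :=
  ∃ e ∈ M, v = e.1 ∨ v = e.2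

/-- The color-`i` subgraph of `G` under the edge-coloring `c`. -/
def colorSub (G : SimpleGraph V) {k : ℕ} (c : Sym2 V → Fin k) (i : Fin k) :
    SimpleGraph V :=
  SimpleGraph.fromRel (fun u v => G.Adj u v ∧ c s(u, v) = i)

universe u

section EdgeMatching

open scoped Classical in
/-- The set of vertices covered by a set of edges. -/
noncomputable def edgeSupport (M : Finset (Sym2 V)) : Finset V :=
  M.biUnion Sym2.toFinset

theorem mem_edgeSupport {M : Finset (Sym2 V)} {v : V} :
    v ∈ edgeSupport M ↔ ∃ e ∈ M, v ∈ e := by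
  simp [edgeSupport]

/-- `M` is a set of pairwise disjoint edges of `G`. -/
structure IsEdgeMatching (G : SimpleGraph V) (M : Finset (Sym2 V)) : Prop where
  mem_edgeSet : ∀ e ∈ M, e ∈ G.edgeSet
  eq_of_mem : ∀ e ∈ M, ∀ f ∈ M, ∀ v, v ∈ e → v ∈ f → e = f

/-- `M` is a set of pairwise disjoint edges in one connected component of `G`. -/
structure IsConnEdgeMatching (G : SimpleGraph V) (M : Finset (Sym2 V)) : Prop
    extends IsEdgeMatching G M where
  reachable : ∀ u ∈ edgeSupport M, ∀ v ∈ edgeSupport M, G.Reachable u v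

variable {G : SimpleGraph V} {M N : Finset (Sym2 V)}

theorem isEdgeMatching_empty : IsEdgeMatching G ∅ := ⟨by simp, by simp⟩

theorem isConnEdgeMatching_empty : IsConnEdgeMatching G ∅ :=
  ⟨isEdgeMatching_empty, by simp [edgeSupport]⟩

theorem edgeSupport_mono (h : N ⊆ M) : edgeSupport N ⊆ edgeSupport M := by
  intro v hv
  obtain ⟨e, he, hve⟩ := mem_edgeSupport.1 hv
  exact mem_edgeSupport.2 ⟨e, h he, hve⟩

theorem IsEdgeMatching.subset (hM : IsEdgeMatching G M) (h : N ⊆ M) : IsEdgeMatching G N :=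
  ⟨fun e he => hM.mem_edgeSet e (h he), fun e he f hf => hM.eq_of_mem e (h he) f (h hf)⟩

theorem IsEdgeMatching.card_edgeSupport (hM : IsEdgeMatching G M) :
    (edgeSupport M).card = 2 * M.card := by
  classical
  rw [edgeSupport, Finset.card_biUnion, Finset.sum_congr rfl (g := fun _ => 2)]
  · simp [mul_comm]
  · intro e he
    have := G.not_isDiag_of_mem_edgeSet (hM.mem_edgeSet e he)
    convert Sym2.card_toFinset_of_not_isDiag e this
  · intro e he f hf hef
    refine Finset.disjoint_left.2 fun v hv hv' => ?_
    exact hef (hM.eq_of_mem e he f hf v (by simpa using hv) (by simpa using hv'))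

open scoped Classical in
theorem edgeSupport_insert (a b : V) :
    edgeSupport (insert s(a, b) M) = {a, b} ∪ edgeSupport M := by
  ext v
  simp [mem_edgeSupport, or_assoc]

open scoped Classical in
theorem IsEdgeMatching.insert_edge (hM : IsEdgeMatching G M) {a b : V} (hab : G.Adj a b)
    (ha : a ∉ edgeSupport M) (hb : b ∉ edgeSupport M) :
    IsEdgeMatching G (insert s(a, b) M) := by
  have key : ∀ f ∈ M, ∀ v, v ∈ s(a, b) → v ∉ f := by
    intro f hf v hv hvf
    rcases Sym2.mem_iff.1 hv with rfl | rfl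
    · exact ha (mem_edgeSupport.2 ⟨f, hf, hvf⟩)
    · exact hb (mem_edgeSupport.2 ⟨f, hf, hvf⟩)
  refine ⟨fun e he => ?_, fun e he f hf v hve hvf => ?_⟩
  · rcases Finset.mem_insert.1 he with rfl | he
    · exact hab
    · exact hM.mem_edgeSet e he
  · rcases Finset.mem_insert.1 he with rfl | he <;> rcases Finset.mem_insert.1 hf with rfl | hf
    · rfl
    · exact absurd hvf (key f hf v hve)
    · exact absurd hve (key e he v hvf)
    · exact hM.eq_of_mem e he f hf v hve hvf

open scoped Classical in
theorem card_insert_edge {a b : V} (ha : a ∉ edgeSupport M) :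
    (insert s(a, b) M).card = M.card + 1 :=
  Finset.card_insert_of_notMem fun h => ha (mem_edgeSupport.2 ⟨_, h, Sym2.mem_mk_left a b⟩)

/-- A matching can be extended by matching `B` into `A`, if all edges between `A` and `B` are
present and both sets are uncovered. -/
theorem IsEdgeMatching.exists_extend (B : Finset V) :
    ∀ (A : Finset V) (M : Finset (Sym2 V)), IsEdgeMatching G M →
      Disjoint A B → Disjoint A (edgeSupport M) → Disjoint B (edgeSupport M) →
      (∀ a ∈ A, ∀ b ∈ B, G.Adj a b) → B.card ≤ A.card →
      ∃ M', IsEdgeMatching G M' ∧ M'.card = M.card + B.card ∧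
        ∀ v ∈ edgeSupport M', v ∈ edgeSupport M ∨ v ∈ A ∨ v ∈ B := by
  classical
  induction B using Finset.induction_on with
  | empty => exact fun A M hM _ _ _ _ _ => ⟨M, hM, by simp, fun v hv => Or.inl hv⟩
  | insert b B hb ih =>
    intro A M hM hAB hA hB hadj hcard
    rw [Finset.card_insert_of_notMem hb] at hcard ⊢
    obtain ⟨a, ha⟩ : A.Nonempty := Finset.card_pos.1 (by omega)
    rw [Finset.disjoint_left] at hAB hA hB
    have hne : a ≠ b := fun h => hAB ha (by simp [h])
    have haM := hA ha
    obtain ⟨M', h1, h2, h3⟩ := ih (A.erase a) (insert s(a, b) M)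
      (hM.insert_edge (hadj a ha b (by simp)) haM (hB (by simp)))
      (by rw [Finset.disjoint_left]; intro v hv hv'
          exact hAB (Finset.mem_of_mem_erase hv) (by simp [hv']))
      (by rw [Finset.disjoint_left]; intro v hv hv'
          rw [edgeSupport_insert] at hv'
          have := hA (Finset.mem_of_mem_erase hv)
          have := hAB (Finset.mem_of_mem_erase hv)
          simp_all)
      (by rw [Finset.disjoint_left]; intro v hv hv'
          rw [edgeSupport_insert] at hv'
          have := hB (Finset.mem_insert_of_mem hv)
          have : v ≠ a := fun h => hAB ha (by simp [← h, hv])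
          have : v ≠ b := fun h => hb (h ▸ hv)
          simp_all)
      (fun a' ha' b' hb' => hadj a' (Finset.mem_of_mem_erase ha') b' (by simp [hb']))
      (by rw [Finset.card_erase_of_mem ha]; omega)
    refine ⟨M', h1, by rw [h2, card_insert_edge haM]; omega, fun v hv => ?_⟩
    rcases h3 v hv with h | h | h
    · rw [edgeSupport_insert] at h
      simp only [Finset.mem_union, Finset.mem_insert, Finset.mem_singleton] at h ⊢
      rcases h with (rfl | rfl) | h <;> simp [*]
    · exact Or.inr (Or.inl (Finset.mem_of_mem_erase h))
    · exact Or.inr (Or.inr (by simp [h]))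

/-- A matching inside `A` extends to a connected matching by matching `B` into `A`. -/
theorem IsEdgeMatching.exists_conn_extend {A B : Finset V} (hM : IsEdgeMatching G M)
    (hMA : edgeSupport M ⊆ A) (hAB : Disjoint A B) (hadj : ∀ a ∈ A, ∀ b ∈ B, G.Adj a b)
    (hB : B.Nonempty) (hcard : 2 * M.card + B.card ≤ A.card) :
    ∃ M', IsConnEdgeMatching G M' ∧ M'.card = M.card + B.card := by
  classical
  obtain ⟨M', h1, h2, h3⟩ := IsEdgeMatching.exists_extend B (A \ edgeSupport M) M hM
    (hAB.mono_left Finset.sdiff_subset) Finset.sdiff_disjoint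
    (hAB.symm.mono_right hMA)
    (fun a ha => hadj a (Finset.mem_sdiff.1 ha).1)
    (by rw [Finset.card_sdiff_of_subset hMA, hM.card_edgeSupport]; omega)
  have h4 : ∀ v ∈ edgeSupport M', v ∈ A ∨ v ∈ B := by
    intro v hv
    rcases h3 v hv with h | h | h
    · exact Or.inl (hMA h)
    · exact Or.inl (Finset.mem_sdiff.1 h).1
    · exact Or.inr h
  obtain ⟨b, hb⟩ := hB
  obtain ⟨a, ha⟩ : A.Nonempty :=
    Finset.card_pos.1 (by have := Finset.card_pos.2 ⟨b, hb⟩; omega)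
  have h5 : ∀ v ∈ edgeSupport M', G.Reachable b v := by
    intro v hv
    rcases h4 v hv with h | h
    · exact (hadj v h b hb).reachable.symm
    · exact (hadj a ha b hb).reachable.symm.trans (hadj a ha v h).reachable
  exact ⟨M', ⟨h1, fun u hu v hv => (h5 u hu).symm.trans (h5 v hv)⟩, h2⟩

/-- Complete bipartite graphs contain large connected matchings. -/
theorem exists_isConnEdgeMatching_of_bipartite {A B : Finset V} (hAB : Disjoint A B)
    (hadj : ∀ a ∈ A, ∀ b ∈ B, G.Adj a b) {k : ℕ} (hA : k ≤ A.card) (hB : k ≤ B.card) :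
    ∃ M, IsConnEdgeMatching G M ∧ M.card = k := by
  obtain ⟨B', hB', rfl⟩ := Finset.exists_subset_card_eq hB
  rcases B'.eq_empty_or_nonempty with rfl | hne
  · exact ⟨∅, isConnEdgeMatching_empty, rfl⟩
  · obtain ⟨M, hM, hc⟩ := (isEdgeMatching_empty (G := G)).exists_conn_extend (A := A) (B := B')
      (by simp [edgeSupport]) (hAB.mono_right hB')
      (fun a ha b hb => hadj a ha b (hB' hb)) hne (by simpa using hA)
    exact ⟨M, hM, by simpa using hc⟩

/-- A matching can be exchanged, keeping its size and avoiding `t`, so that it shares more edges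
with another matching. -/
theorem IsEdgeMatching.exchange [DecidableEq V] (hM : IsEdgeMatching G M)
    (hN : IsEdgeMatching G N) {s y t : V} (hsM : s(s, y) ∈ M) (hsN : s ∉ edgeSupport N)
    (hyN : y ∈ edgeSupport N) (hst : s ≠ t) (htN : t ∉ edgeSupport N) :
    ∃ N', IsEdgeMatching G N' ∧ N'.card = N.card ∧ t ∉ edgeSupport N' ∧
      (M ∩ N).card < (M ∩ N').card ∧
      edgeSupport N' ⊆ edgeSupport M ∪ edgeSupport N := by
  classical
  obtain ⟨e, heN, hye⟩ := mem_edgeSupport.1 hyN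
  have hse : s ∉ e := fun h => hsN (mem_edgeSupport.2 ⟨e, heN, h⟩)
  have heM : e ∉ M := fun h =>
    hse (hM.eq_of_mem _ hsM e h y (Sym2.mem_mk_right s y) hye ▸ Sym2.mem_mk_left s y)
  have hsub : N.erase e ⊆ N := Finset.erase_subset e N
  have hs' : s ∉ edgeSupport (N.erase e) := fun h => hsN (edgeSupport_mono hsub h)
  have hy' : y ∉ edgeSupport (N.erase e) := by
    intro h
    obtain ⟨f, hf, hyf⟩ := mem_edgeSupport.1 h
    exact (Finset.mem_erase.1 hf).1
      (hN.eq_of_mem f (Finset.mem_erase.1 hf).2 e heN y hyf hye)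
  have hN' := (hN.subset hsub).insert_edge (hM.mem_edgeSet _ hsM) hs' hy'
  refine ⟨_, hN', ?_, ?_, ?_, ?_⟩
  · rw [card_insert_edge hs', Finset.card_erase_add_one heN]
  · rw [edgeSupport_insert]
    have h1 : t ∉ edgeSupport (N.erase e) := fun h => htN (edgeSupport_mono hsub h)
    have h2 : t ≠ y := fun h => htN (h ▸ hyN)
    simp [h1, h2, hst.symm]
  · apply Finset.card_lt_card
    rw [Finset.ssubset_iff]
    refine ⟨s(s, y), fun h => hsN (mem_edgeSupport.2
      ⟨_, (Finset.mem_inter.1 h).2, Sym2.mem_mk_left s y⟩), ?_⟩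
    intro f hf
    rcases Finset.mem_insert.1 hf with rfl | hf
    · simp [hsM]
    · have hfe : f ≠ e := fun h => heM (h ▸ (Finset.mem_inter.1 hf).1)
      simp_all
  · rw [edgeSupport_insert]
    intro v hv
    simp only [Finset.mem_union, Finset.mem_insert, Finset.mem_singleton] at hv ⊢
    rcases hv with (rfl | rfl) | h
    · exact Or.inl (mem_edgeSupport.2 ⟨_, hsM, Sym2.mem_mk_left _ _⟩)
    · exact Or.inr hyN
    · exact Or.inr (edgeSupport_mono hsub h)

/-- Gallai's lemma: in a connected component with at least `2 * k` vertices and no matching of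
size `k`, some vertex is covered by all the matchings of size `k - 1`. -/
theorem exists_card_add_one_lt_of_avoids [Fintype V] (r : V) (k : ℕ) (C : Finset V)
    (hC : ∀ v, v ∈ C ↔ G.Reachable r v)
    (hlt : ∀ M, IsEdgeMatching G M → edgeSupport M ⊆ C → M.card < k)
    (hk : 2 * k ≤ C.card) :
    ∃ v ∈ C, ∀ M, IsEdgeMatching G M → edgeSupport M ⊆ C → v ∉ edgeSupport M →
      M.card + 1 < k := by
  classical
  by_contra! hcon
  have step : ∀ t ∈ C, ∀ u v, u ≠ v →
      (∀ M, IsEdgeMatching G M → edgeSupport M ⊆ C → M.card + 1 = k →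
        t ∉ edgeSupport M → u ∈ edgeSupport M) →
      (∀ M, IsEdgeMatching G M → edgeSupport M ⊆ C → M.card + 1 = k →
        t ∉ edgeSupport M → v ∈ edgeSupport M) →
      ∀ M, IsEdgeMatching G M → edgeSupport M ⊆ C → M.card + 1 = k →
        u ∉ edgeSupport M → v ∈ edgeSupport M := by
    intro t ht u v huv hu hv M hM hMC hMk huM
    by_contra hvM
    obtain ⟨N₀, hN₀, hN₀C, htN₀, hN₀k⟩ := hcon t ht
    have hN₀k' := hlt N₀ hN₀ hN₀C
    let F : Finset (Finset (Sym2 V)) := Finset.univ.filter fun N =>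
      IsEdgeMatching G N ∧ edgeSupport N ⊆ C ∧ N.card + 1 = k ∧ t ∉ edgeSupport N
    obtain ⟨N, hNF, hmax⟩ := F.exists_max_image (fun N => (M ∩ N).card)
      ⟨N₀, by simp only [F, Finset.mem_filter]; exact ⟨by simp, hN₀, hN₀C, by omega, htN₀⟩⟩
    obtain ⟨-, hN, hNC, hNk, htN⟩ := Finset.mem_filter.1 hNF
    have h2 : 1 < (edgeSupport N \ edgeSupport M).card :=
      Finset.one_lt_card.2 ⟨u, by simp [huM, hu N hN hNC hNk htN],
        v, by simp [hvM, hv N hN hNC hNk htN], huv⟩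
    have h3 : (edgeSupport N \ edgeSupport M).card = (edgeSupport M \ edgeSupport N).card :=
      Finset.card_sdiff_comm (by
        rw [hN.card_edgeSupport, hM.card_edgeSupport]; omega)
    obtain ⟨s, hs, hst⟩ := Finset.exists_mem_ne (h3 ▸ h2) t
    obtain ⟨hsM, hsN⟩ := Finset.mem_sdiff.1 hs
    obtain ⟨e, he, hse⟩ := mem_edgeSupport.1 hsM
    obtain ⟨y, rfl⟩ := Sym2.mem_iff_exists.1 hse
    have hyN : y ∈ edgeSupport N := by
      by_contra hyN
      have h := hlt _ (hN.insert_edge (hM.mem_edgeSet _ he) hsN hyN) (by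
        rw [edgeSupport_insert]
        have hyM : y ∈ edgeSupport M := mem_edgeSupport.2 ⟨_, he, Sym2.mem_mk_right _ _⟩
        intro z hz
        simp only [Finset.mem_union, Finset.mem_insert, Finset.mem_singleton] at hz
        rcases hz with (rfl | rfl) | hz
        exacts [hMC hsM, hMC hyM, hNC hz])
      rw [card_insert_edge hsN] at h
      omega
    obtain ⟨N', hN', hc, htN', hlt', hsub⟩ := hM.exchange hN he hsN hyN hst htN
    have := hmax N' (Finset.mem_filter.2 ⟨by simp, hN',
      hsub.trans (Finset.union_subset hMC hNC), by omega, htN'⟩)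
    omega
  have all : ∀ u v, G.Reachable u v → u ∈ C → u ≠ v →
      ∀ M, IsEdgeMatching G M → edgeSupport M ⊆ C → M.card + 1 = k →
        u ∉ edgeSupport M → v ∈ edgeSupport M := by
    intro u v huv hu
    have adj : ∀ a b, a ∈ C → G.Adj a b →
        ∀ M, IsEdgeMatching G M → edgeSupport M ⊆ C → M.card + 1 = k →
          a ∉ edgeSupport M → b ∈ edgeSupport M := by
      intro a b ha hab M hM hMC hMk haM
      by_contra hbM
      have hb : b ∈ C := (hC b).2 (((hC a).1 ha).trans hab.reachable)
      have h := hlt _ (hM.insert_edge hab haM hbM) (by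
        rw [edgeSupport_insert]
        intro z hz
        simp only [Finset.mem_union, Finset.mem_insert, Finset.mem_singleton] at hz
        rcases hz with (rfl | rfl) | hz
        exacts [ha, hb, hMC hz])
      rw [card_insert_edge haM] at h
      omega
    rw [SimpleGraph.reachable_iff_reflTransGen] at huv
    induction huv with
    | refl => exact fun h => absurd rfl h
    | @tail b c hub hbc ih =>
      intro huc
      have hb : b ∈ C := (hC b).2 (((hC u).1 hu).trans
        ((SimpleGraph.reachable_iff_reflTransGen _ _).2 hub))
      by_cases hub' : u = b
      · subst hub'
        exact adj u c hu hbc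
      · refine step b hb u c huc (fun M hM hMC hMk hbM => ?_) (adj b c hb hbc)
        by_contra huM
        exact hbM (ih hub' M hM hMC hMk huM)
  have hr : r ∈ C := (hC r).2 (SimpleGraph.Reachable.refl r)
  obtain ⟨M, hM, hMC, -, hMk⟩ := hcon r hr
  have hMk' := hlt M hM hMC
  have h1 : 1 < (C \ edgeSupport M).card := by
    rw [Finset.card_sdiff_of_subset hMC, hM.card_edgeSupport]
    omega
  obtain ⟨u, hu, v, hv, huv⟩ := Finset.one_lt_card.1 h1
  obtain ⟨hu1, hu2⟩ := Finset.mem_sdiff.1 hu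
  obtain ⟨hv1, hv2⟩ := Finset.mem_sdiff.1 hv
  exact hv2 (all u v (((hC u).1 hu1).symm.trans ((hC v).1 hv1)) hu1 huv M hM hMC (by omega) hu2)

/-- Transfer of connected matchings from an induced subgraph. -/
theorem IsConnEdgeMatching.of_induce {s : Set V} {M : Finset (Sym2 s)}
    (hM : IsConnEdgeMatching (G.induce s) M) :
    ∃ M', IsConnEdgeMatching G M' ∧ M'.card = M.card ∧ ∀ v ∈ edgeSupport M', v ∈ s := by
  have hinj : Function.Injective (Sym2.map (Subtype.val : s → V)) :=
    Sym2.map.injective Subtype.val_injective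
  have hsupp : ∀ v ∈ edgeSupport (M.map ⟨_, hinj⟩), ∃ w ∈ edgeSupport M, w.1 = v := by
    intro v hv
    obtain ⟨_, h, hve⟩ := mem_edgeSupport.1 hv
    obtain ⟨e, he, rfl⟩ := Finset.mem_map.1 h
    obtain ⟨w, hw, rfl⟩ := Sym2.mem_map.1 hve
    exact ⟨w, mem_edgeSupport.2 ⟨e, he, hw⟩, rfl⟩
  refine ⟨M.map ⟨_, hinj⟩, ⟨⟨?_, ?_⟩, ?_⟩, Finset.card_map _, ?_⟩
  · intro _ h
    obtain ⟨e, he, rfl⟩ := Finset.mem_map.1 h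
    have := hM.mem_edgeSet e he
    induction e with
    | _ a b => simpa using this
  · intro _ h _ h' v hve hvf
    obtain ⟨e, he, rfl⟩ := Finset.mem_map.1 h
    obtain ⟨f, hf, rfl⟩ := Finset.mem_map.1 h'
    obtain ⟨w, hw, rfl⟩ := Sym2.mem_map.1 hve
    obtain ⟨w', hw', hww⟩ := Sym2.mem_map.1 hvf
    obtain rfl := Subtype.val_injective hww
    rw [hM.eq_of_mem e he f hf w' hw hw']
  · intro _ h _ h'
    obtain ⟨u, hu, rfl⟩ := hsupp _ h
    obtain ⟨v, hv, rfl⟩ := hsupp _ h'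
    exact (hM.reachable u hu v hv).map (SimpleGraph.Embedding.induce s).toHom
  · intro v hv
    obtain ⟨w, -, rfl⟩ := hsupp v hv
    exact w.2

/-- A connected set of disjoint edges gives a connected matching of the same size. -/
theorem IsConnEdgeMatching.exists_connMatching (hM : IsConnEdgeMatching G M) :
    ∃ M', ConnMatching G M' ∧ M'.card = M.card := by
  have hmk : ∀ e : Sym2 V, s((Quot.out e).1, (Quot.out e).2) = e := fun e => Quot.out_eq e
  have h1 : ∀ e : Sym2 V, (Quot.out e).1 ∈ e := fun e => Sym2.out_fst_mem e
  have h2 : ∀ e : Sym2 V, (Quot.out e).2 ∈ e := fun e => Sym2.out_snd_mem e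
  refine ⟨M.map ⟨Quot.out, Function.LeftInverse.injective Quot.out_eq⟩, ⟨⟨?_, ?_⟩, ?_⟩, Finset.card_map _⟩
  · intro p hp
    obtain ⟨e, he, rfl⟩ := Finset.mem_map.1 hp
    rw [← SimpleGraph.mem_edgeSet]
    exact (hmk e).symm ▸ hM.mem_edgeSet e he
  · intro p hp q hq hpq
    obtain ⟨e, he, rfl⟩ := Finset.mem_map.1 hp
    obtain ⟨f, hf, rfl⟩ := Finset.mem_map.1 hq
    have hd : ∀ v, v ∈ e → v ∉ f := fun v hv hv' =>
      hpq (by rw [hM.eq_of_mem e he f hf v hv hv'])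
    exact ⟨fun h => hd _ (h1 e) (h ▸ h1 f), fun h => hd _ (h1 e) (h ▸ h2 f),
      fun h => hd _ (h2 e) (h ▸ h1 f), fun h => hd _ (h2 e) (h ▸ h2 f)⟩
  · intro p hp q hq
    obtain ⟨e, he, rfl⟩ := Finset.mem_map.1 hp
    obtain ⟨f, hf, rfl⟩ := Finset.mem_map.1 hq
    exact hM.reachable _ (mem_edgeSupport.2 ⟨e, he, h1 e⟩) _ (mem_edgeSupport.2 ⟨f, hf, h1 f⟩)

end EdgeMatching

section Colouring

theorem exists_third_colour :
    ∀ i j : Fin 3, i ≠ j → ∃ k, i ≠ k ∧ j ≠ k ∧ ∀ l, l = i ∨ l = j ∨ l = k := by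
  decide

theorem sum_three_colours (f : Fin 3 → ℕ) {i j k : Fin 3} (hij : i ≠ j) (hik : i ≠ k)
    (hjk : j ≠ k) : ∑ l, f l = f i + f j + f k := by
  have h : (Finset.univ : Finset (Fin 3)) = {i, j, k} := by
    revert i j k
    decide
  rw [h, Finset.sum_insert (by simp [hij, hik]), Finset.sum_pair hjk, add_assoc]

variable [Fintype V] {G : Fin 3 → SimpleGraph V} {x : Fin 3 → ℕ} {m : ℕ}

open scoped Classical in
/-- The vertex set of the component of `v` in `G`. -/
noncomputable def componentFinset (G : SimpleGraph V) (v : V) : Finset V :=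
  Finset.univ.filter fun w => G.Reachable v w

theorem mem_componentFinset {G : SimpleGraph V} {v w : V} :
    w ∈ componentFinset G v ↔ G.Reachable v w := by
  simp [componentFinset]

/-- Every proper subset of the vertices with at least `m + ∑ l, y l - 2` elements, where `m` is an
upper bound for `y`, contains a connected matching of size `y i` in colour `i` for some `i`. -/
def ProperSubsetsGood (G : Fin 3 → SimpleGraph V) (m : ℕ) : Prop :=
  ∀ (s : Finset V) (y : Fin 3 → ℕ), s.card < Fintype.card V → (∀ i, y i ≤ m) →
    m + ∑ l, y l ≤ s.card + 2 →
    ∃ i M, IsConnEdgeMatching (G i) M ∧ edgeSupport M ⊆ s ∧ y i ≤ M.card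

/-- In a minimal bad colouring, the complement of a large component is large. -/
theorem two_mul_le_card_compl_component (hsub : ProperSubsetsGood G m) (hxm : ∀ i, x i ≤ m)
    (hcard : m + ∑ l, x l ≤ Fintype.card V + 2)
    (hbad : ∀ i M, IsConnEdgeMatching (G i) M → M.card < x i) (i : Fin 3) (r : V)
    (hr : 2 * x i ≤ (componentFinset (G i) r).card) :
    0 < Fintype.card V - (componentFinset (G i) r).card ∧
      2 * x i ≤ Fintype.card V - (componentFinset (G i) r).card + 2 := by
  classical
  have hconn : ∀ M, IsEdgeMatching (G i) M → edgeSupport M ⊆ componentFinset (G i) r →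
      IsConnEdgeMatching (G i) M := fun M hM hMC => ⟨hM, fun u hu v hv =>
    (mem_componentFinset.1 (hMC hu)).symm.trans (mem_componentFinset.1 (hMC hv))⟩
  obtain ⟨v, -, hv⟩ := exists_card_add_one_lt_of_avoids r (x i) (componentFinset (G i) r)
    (fun _ => mem_componentFinset) (fun M hM hMC => hbad i M (hconn M hM hMC)) hr
  have hpos : 0 < x i := hbad i ∅ isConnEdgeMatching_empty
  have hn : 0 < Fintype.card V := Fintype.card_pos_iff.2 ⟨r⟩
  have hsum : ∑ l, Function.update x i (x i - 1) l + 1 = ∑ l, x l := by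
    rw [Finset.sum_update_of_mem (Finset.mem_univ i),
      ← Finset.add_sum_erase _ x (Finset.mem_univ i), Finset.sdiff_singleton_eq_erase]
    omega
  have herase : (Finset.univ.erase v).card = Fintype.card V - 1 := by
    rw [Finset.card_erase_of_mem (Finset.mem_univ v), Finset.card_univ]
  obtain ⟨j, M, hM, hMv, hMx⟩ := hsub (Finset.univ.erase v) (Function.update x i (x i - 1))
    (by omega)
    (fun l => by
      rcases eq_or_ne l i with rfl | hl
      · rw [Function.update_self]
        exact (Nat.sub_le _ _).trans (hxm l)
      · rw [Function.update_of_ne hl]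
        exact hxm l)
    (by omega)
  have hvM : v ∉ edgeSupport M := fun h => by simpa using hMv h
  have hlt := hbad j M hM
  rcases eq_or_ne j i with rfl | hj
  swap
  · rw [Function.update_of_ne hj] at hMx
    omega
  rw [Function.update_self] at hMx
  have hMC : ¬ edgeSupport M ⊆ componentFinset (G j) r := fun h => by
    have := hv M hM.toIsEdgeMatching h hvM
    omega
  obtain ⟨w, hw, hwC⟩ := Finset.not_subset.1 hMC
  have hdisj : edgeSupport M ⊆ (componentFinset (G j) r)ᶜ := by
    intro u hu
    rw [Finset.mem_compl]
    intro huC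
    exact hwC (mem_componentFinset.2 ((mem_componentFinset.1 huC).trans (hM.reachable u hu w hw)))
  have h1 := Finset.card_le_card hdisj
  have h2 : 0 < (edgeSupport M).card := Finset.card_pos.2 ⟨w, hw⟩
  rw [Finset.card_compl] at h1
  rw [hM.card_edgeSupport] at h1 h2
  omega

/-- A minimal bad colouring has no three components of different colours whose complements are
nonempty and disjoint. -/
theorem false_of_disjoint_compl_components (hsub : ProperSubsetsGood G m) (hxm : ∀ i, x i ≤ m)
    (hcard : m + ∑ l, x l ≤ Fintype.card V + 2)
    (hbad : ∀ i M, IsConnEdgeMatching (G i) M → M.card < x i)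
    (hcov : ∀ u v, u ≠ v → ∃ i, (G i).Adj u v)
    (r : Fin 3 → V)
    (hne : ∀ l, ∃ w, ¬ (G l).Reachable (r l) w)
    (hdisj : ∀ l l', l ≠ l' → ∀ w, (G l).Reachable (r l) w ∨ (G l').Reachable (r l') w) :
    False := by
  classical
  have hQ : ∀ l, 0 < ((componentFinset (G l) (r l))ᶜ).card := fun l => by
    obtain ⟨w, hw⟩ := hne l
    exact Finset.card_pos.2 ⟨w, by simpa [mem_componentFinset] using hw⟩
  have hpair : ∀ i j k, i ≠ j → i ≠ k → j ≠ k →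
      ((componentFinset (G i) (r i))ᶜ).card < x k ∨
        ((componentFinset (G j) (r j))ᶜ).card < x k := by
    intro i j k hij hik hjk
    by_contra! h
    have hd : Disjoint (componentFinset (G i) (r i))ᶜ (componentFinset (G j) (r j))ᶜ := by
      rw [Finset.disjoint_left]
      intro w hw hw'
      rw [Finset.mem_compl, mem_componentFinset] at hw hw'
      exact (hdisj i j hij w).elim hw hw'
    obtain ⟨M, hM, hMk⟩ := exists_isConnEdgeMatching_of_bipartite (G := G k) hd (fun a ha b hb => by
      have hab : a ≠ b := fun e => Finset.disjoint_left.1 hd ha (e ▸ hb)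
      rw [Finset.mem_compl, mem_componentFinset] at ha hb
      have hbi := (hdisj i j hij b).resolve_right hb
      have haj := (hdisj i j hij a).resolve_left ha
      obtain ⟨l, hl⟩ := hcov a b hab
      obtain ⟨k', -, -, hk'⟩ := exists_third_colour i j hij
      have hkk : k = k' := by
        rcases hk' k with h | h | h
        exacts [absurd h.symm hik, absurd h.symm hjk, h]
      rcases hk' l with rfl | rfl | rfl
      · exact absurd (hbi.trans hl.symm.reachable) ha
      · exact absurd (haj.trans hl.reachable) hb
      · exact hkk ▸ hl) h.1 h.2
    have := hbad k M hM
    omega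
  have hbig := fun l => two_mul_le_card_compl_component hsub hxm hcard hbad l (r l)
  have hle : ∀ l, (componentFinset (G l) (r l)).card ≤ Fintype.card V :=
    fun l => Finset.card_le_univ _
  simp only [Finset.card_compl] at hQ hpair
  have := hpair 0 1 2 (by decide) (by decide) (by decide)
  have := hpair 0 2 1 (by decide) (by decide) (by decide)
  have := hpair 1 2 0 (by decide) (by decide) (by decide)
  rw [Fin.sum_univ_three] at hcard
  have := hQ 0
  have := hQ 1
  have := hQ 2
  have := hbig 0
  have := hbig 1
  have := hbig 2
  have := hxm 0
  have := hxm 1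
  have := hxm 2
  have := hle 0
  have := hle 1
  have := hle 2
  generalize Fintype.card V = n at *
  generalize (componentFinset (G 0) (r 0)).card = c₀ at *
  generalize (componentFinset (G 1) (r 1)).card = c₁ at *
  generalize (componentFinset (G 2) (r 2)).card = c₂ at *
  omega

/-- In a minimal bad colouring, no two components of different colours with a common vertex cover
everything. -/
theorem exists_not_reachable_pair (hsub : ProperSubsetsGood G m) (hxm : ∀ i, x i ≤ m)
    (hcard : m + ∑ l, x l ≤ Fintype.card V + 2)
    (hbad : ∀ i M, IsConnEdgeMatching (G i) M → M.card < x i)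
    (hcov : ∀ u v, u ≠ v → ∃ i, (G i).Adj u v)
    (hne : ∀ i v, ∃ w, ¬ (G i).Reachable v w) (v : V) (i j : Fin 3) (hij : i ≠ j) :
    ∃ w, ¬ (G i).Reachable v w ∧ ¬ (G j).Reachable v w := by
  by_contra! hcon
  obtain ⟨k, hik, hjk, hk⟩ := exists_third_colour i j hij
  obtain ⟨b, hb⟩ := hne i v
  obtain ⟨a, ha⟩ := hne j v
  have hor : ∀ w, (G i).Reachable v w ∨ (G j).Reachable v w := fun w =>
    or_iff_not_imp_left.2 (hcon w)
  have cross : ∀ p q, ¬ (G i).Reachable v p → ¬ (G j).Reachable v q → (G k).Reachable p q := by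
    intro p q hp hq
    have hpj := (hor p).resolve_left hp
    have hqi := (hor q).resolve_right hq
    obtain ⟨l, hl⟩ := hcov p q (fun h => hq (h ▸ hpj))
    rcases hk l with rfl | rfl | rfl
    · exact absurd (hqi.trans hl.symm.reachable) hp
    · exact absurd (hpj.trans hl.reachable) hq
    · exact hl.reachable
  have hik' : ∀ w, (G i).Reachable v w ∨ (G k).Reachable a w := fun w =>
    or_iff_not_imp_left.2 fun hw => (cross w a hw ha).symm
  have hjk' : ∀ w, (G j).Reachable v w ∨ (G k).Reachable a w := fun w =>
    or_iff_not_imp_left.2 fun hw => (cross b a hb ha).symm.trans (cross b w hb hw)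
  have hi : (if i = k then a else v) = v := if_neg hik
  have hj : (if j = k then a else v) = v := if_neg hjk
  refine false_of_disjoint_compl_components hsub hxm hcard hbad hcov
    (fun l => if l = k then a else v) (fun l => hne l _) (fun l l' hll' w => ?_)
  rcases hk l with rfl | rfl | rfl <;> rcases hk l' with rfl | rfl | rfl <;>
    first
    | exact absurd rfl hll'
    | simp only [hi, hj, if_true]
      first
      | exact hor w
      | exact (hor w).symm
      | exact hik' w
      | exact (hik' w).symm
      | exact hjk' w
      | exact (hjk' w).symm

/-- A colouring all of whose proper subsets are good is good. -/
theorem exists_isConnEdgeMatching_of_properSubsetsGood (hsub : ProperSubsetsGood G m)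
    (hxm : ∀ i, x i ≤ m) (hcard : m + ∑ l, x l ≤ Fintype.card V + 2)
    (hcov : ∀ u v, u ≠ v → ∃ i, (G i).Adj u v) :
    ∃ i M, IsConnEdgeMatching (G i) M ∧ x i ≤ M.card := by
  classical
  by_contra! hbad
  have hpos : ∀ i, 0 < x i := fun i => hbad i ∅ isConnEdgeMatching_empty
  have hne : ∀ i v, ∃ w, ¬ (G i).Reachable v w := by
    intro i v
    by_contra! h
    have huniv : componentFinset (G i) v = Finset.univ := by
      ext w
      simp [mem_componentFinset, h w]
    have hx : 2 * x i ≤ Fintype.card V := by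
      rw [Fin.sum_univ_three] at hcard
      have := hpos 0
      have := hpos 1
      have := hpos 2
      have := hxm i
      fin_cases i <;> simp at * <;> omega
    have := two_mul_le_card_compl_component hsub hxm hcard hbad i v
      (by rw [huniv, Finset.card_univ]; exact hx)
    rw [huniv, Finset.card_univ] at this
    omega
  have hpair := exists_not_reachable_pair hsub hxm hcard hbad hcov hne
  have hall : ∀ v w i j, i ≠ j → (G i).Reachable v w → (G j).Reachable v w →
      ∀ l, (G l).Reachable v w := by
    intro v w i j hij hi hj l
    obtain ⟨k, hik, hjk, hk⟩ := exists_third_colour i j hij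
    obtain ⟨z, hzi, hzj⟩ := hpair v i j hij
    have hz : ∀ p, (G i).Reachable v p → (G j).Reachable v p → (G k).Reachable p z := by
      intro p hpi hpj
      obtain ⟨l, hl⟩ := hcov p z (fun h => hzi (h ▸ hpi))
      rcases hk l with rfl | rfl | rfl
      · exact absurd (hpi.trans hl.reachable) hzi
      · exact absurd (hpj.trans hl.reachable) hzj
      · exact hl.reachable
    rcases hk l with rfl | rfl | rfl
    · exact hi
    · exact hj
    · exact (hz v (.refl v) (.refl v)).trans (hz w hi hj).symm
  let P₀ : V → Finset V := fun v => Finset.univ.filter fun w => ∀ l, (G l).Reachable v w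
  have hV : Nonempty V := by
    rw [← Fintype.card_pos_iff]
    rw [Fin.sum_univ_three] at hcard
    have := hpos 0
    have := hpos 1
    have := hpos 2
    have := hxm 0
    omega
  obtain ⟨v, -, hmax⟩ := Finset.univ.exists_max_image (fun v => (P₀ v).card)
    Finset.univ_nonempty
  let P : Fin 3 → Finset V := fun i => componentFinset (G i) v \ P₀ v
  have mem_P₀ : ∀ {u w}, w ∈ P₀ u ↔ ∀ l, (G l).Reachable u w := by simp [P₀]
  have mem_P : ∀ {i w}, w ∈ P i ↔ (G i).Reachable v w ∧ w ∉ P₀ v := by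
    simp [P, mem_componentFinset]
  have not_reach : ∀ {i j w}, w ∈ P i → i ≠ j → ¬ (G j).Reachable v w := fun hw hij hj =>
    (mem_P.1 hw).2 (mem_P₀.2 (hall v _ _ _ hij (mem_P.1 hw).1 hj))
  have hPne : ∀ i, (P i).Nonempty := by
    intro i
    obtain ⟨j, hij⟩ := exists_ne i
    obtain ⟨k, hik, hjk, hk⟩ := exists_third_colour i j hij.symm
    obtain ⟨z, hzj, hzk⟩ := hpair v j k hjk
    obtain ⟨l, hl⟩ := hcov v z (fun h => hzj (h ▸ .refl v))
    refine ⟨z, mem_P.2 ⟨?_, fun h => hzj (mem_P₀.1 h j)⟩⟩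
    rcases hk l with rfl | rfl | rfl
    exacts [hl.reachable, absurd hl.reachable hzj, absurd hl.reachable hzk]
  have hadj : ∀ i, ∀ p ∈ P₀ v, ∀ q ∈ P i, (G i).Adj p q := by
    intro i p hp q hq
    obtain ⟨l, hl⟩ := hcov p q (fun h => (mem_P.1 hq).2 (h ▸ hp))
    by_cases hil : i = l
    · exact hil ▸ hl
    · exact absurd ((mem_P₀.1 hp l).trans hl.reachable) (not_reach hq hil)
  have hdisj : ∀ i, Disjoint (P₀ v) (P i) := fun i => Finset.disjoint_sdiff
  have hle : ∀ i, (P i).card ≤ (P₀ v).card := by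
    intro i
    obtain ⟨u, hu⟩ := hPne i
    refine le_trans (Finset.card_le_card fun w hw => ?_) (hmax u (Finset.mem_univ u))
    obtain ⟨j, hij⟩ := exists_ne i
    obtain ⟨k, hik, hjk, hk⟩ := exists_third_colour i j hij.symm
    obtain ⟨z, hz⟩ := hPne j
    have hkz : ∀ p ∈ P i, (G k).Reachable p z := by
      intro p hp
      obtain ⟨l, hl⟩ := hcov p z (fun h => not_reach hp hij.symm (h ▸ (mem_P.1 hz).1))
      rcases hk l with rfl | rfl | rfl
      · exact absurd ((mem_P.1 hp).1.trans hl.reachable) (not_reach hz hij)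
      · exact absurd ((mem_P.1 hz).1.trans hl.symm.reachable) (not_reach hp hij.symm)
      · exact hl.reachable
    exact mem_P₀.2 (hall u w i k hik ((mem_P.1 hu).1.symm.trans (mem_P.1 hw).1)
      ((hkz u hu).trans (hkz w hw).symm))
  have hlt : ∀ i, (P i).card < x i := by
    intro i
    obtain ⟨M, hM, hMc⟩ := exists_isConnEdgeMatching_of_bipartite (hdisj i) (hadj i) (hle i) le_rfl
    exact hMc ▸ hbad i M hM
  have hunion : Fintype.card V ≤ (P₀ v).card + ∑ i, (P i).card := by
    have h : (Finset.univ : Finset V) ⊆ P₀ v ∪ Finset.univ.biUnion P := by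
      intro w _
      by_cases hw : w ∈ P₀ v
      · exact Finset.mem_union_left _ hw
      · obtain ⟨l, hl⟩ := hcov v w (fun h => hw (h ▸ mem_P₀.2 fun l => .refl v))
        exact Finset.mem_union_right _
          (Finset.mem_biUnion.2 ⟨l, Finset.mem_univ l, mem_P.2 ⟨hl.reachable, hw⟩⟩)
    rw [← Finset.card_univ]
    exact (Finset.card_le_card h).trans ((Finset.card_union_le _ _).trans
      (Nat.add_le_add_left Finset.card_biUnion_le _))
  have hproper : (P₀ v).card < Fintype.card V := by
    obtain ⟨w, hw⟩ := hPne 0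
    exact Finset.card_lt_univ_of_notMem (mem_P.1 hw).2
  have hsum : ∑ i, (x i - (P i).card) + ∑ i, (P i).card = ∑ i, x i := by
    rw [← Finset.sum_add_distrib]
    exact Finset.sum_congr rfl fun i _ => Nat.sub_add_cancel (hlt i).le
  obtain ⟨i, M, hM, hMP, hMx⟩ := hsub (P₀ v) (fun i => x i - (P i).card) hproper
    (fun i => (Nat.sub_le _ _).trans (hxm i)) (by omega)
  obtain ⟨M', hM', hM'c⟩ := Finset.exists_subset_card_eq hMx
  have hroom : 2 * M'.card + (P i).card ≤ (P₀ v).card := by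
    obtain ⟨j, hij⟩ := exists_ne i
    obtain ⟨k, hik, hjk, -⟩ := exists_third_colour i j hij.symm
    rw [sum_three_colours _ hij.symm hik hjk] at hsum
    have := hlt i
    have := hlt j
    have := hlt k
    have := hxm i
    omega
  obtain ⟨M'', hM'', hc⟩ := (hM.toIsEdgeMatching.subset hM').exists_conn_extend
    ((edgeSupport_mono hM').trans hMP) (hdisj i) (hadj i) (hPne i) hroom
  have := hbad i M'' hM''
  have := hlt i
  omega

/-- Every covering of the edges of a complete graph on at least `m + ∑ l, x l - 2` vertices by three
graphs, where `m` is an upper bound for `x`, has a connected matching of size `x i` in the `i`-th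
graph for some `i`. -/
theorem exists_isConnEdgeMatching_of_three_colouring (n : ℕ) :
    ∀ (V : Type u) [Fintype V] (G : Fin 3 → SimpleGraph V) (x : Fin 3 → ℕ) (m : ℕ),
      Fintype.card V = n → (∀ i, x i ≤ m) → m + ∑ l, x l ≤ Fintype.card V + 2 →
      (∀ u v, u ≠ v → ∃ i, (G i).Adj u v) →
      ∃ i M, IsConnEdgeMatching (G i) M ∧ x i ≤ M.card := by
  induction n using Nat.strong_induction_on with
  | _ n ih =>
    intro V _ G x m hn hxm hcard hcov
    refine exists_isConnEdgeMatching_of_properSubsetsGood (fun s y hs hy hys => ?_) hxm hcard hcov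
    obtain ⟨i, M, hM, hMy⟩ := ih s.card (hn ▸ hs) (s : Set V)
      (fun i => (G i).induce (s : Set V)) y m (by simp) hy (by simpa using hys)
      (fun u v huv => hcov u v (fun h => huv (Subtype.ext h)))
    obtain ⟨M', hM', hc, hs'⟩ := hM.of_induce
    exact ⟨i, M', hM', fun v hv => by simpa using hs' v hv, hc ▸ hMy⟩

end Colouring

/-- 3-color version: in every 3-edge-coloring of `K_N` with
`N = 2x₁ + x₂ + x₃ - 2` (where `1 ≤ x₂, x₃ ≤ x₁`), some color `i` contains a
connected matching of size at least `xᵢ`. -/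
theorem stmt3 (x : Fin 3 → ℕ) (h1 : 1 ≤ x 1) (h2 : 1 ≤ x 2)
    (h12 : x 1 ≤ x 0) (h13 : x 2 ≤ x 0)
    (N : ℕ) (hN : N = 2 * x 0 + x 1 + x 2 - 2)
    (c : Sym2 (Fin N) → Fin 3) :
    ∃ i : Fin 3, ∃ M,
      ConnMatching (colorSub (⊤ : SimpleGraph (Fin N)) c i) M ∧ x i ≤ M.card := by
  have hcov : ∀ u v : Fin N, u ≠ v → ∃ i, (colorSub (⊤ : SimpleGraph (Fin N)) c i).Adj u v :=
    fun u v huv => ⟨c s(u, v), by simp [colorSub, huv]⟩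
  obtain ⟨i, M, hM, hMx⟩ := exists_isConnEdgeMatching_of_three_colouring N (Fin N)
    (colorSub ⊤ c) x (x 0) (by simp) (fun i => by fin_cases i <;> simp [h12, h13])
    (by rw [Fin.sum_univ_three, Fintype.card_fin]; omega) hcov
  obtain ⟨M', hM', hc⟩ := hM.exists_connMatching
  exact ⟨i, M', hM', hc ▸ hMx⟩
end

section
/- In every 3-coloring of the edges of the complete graph K_{4n-2} (n ≥ 1), there is a monochromatic connected matching with at least n edges. -/
open SimpleGraph

variable {V : Type*}

/-- Fibers of `f` inside `W` obey the size bounds forced by a barrier of size `s`,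
except that one fiber may merely have fewer than `n` elements. -/
structure SmallFibers {V : Type*} (n s : ℕ) (f : V → ℕ) (W : Finset V) : Prop where
  lt : s < n
  card_le : ∀ A ⊆ W, (∀ u ∈ A, ∀ v ∈ A, f u = f v) → A.card + 2 * s < 2 * n ∨ A.card < n
  card_add_card_le : ∀ A ⊆ W, ∀ B ⊆ W, Disjoint A B → (∀ u ∈ A, ∀ v ∈ A, f u = f v) →
    (∀ u ∈ B, ∀ v ∈ B, f u = f v) → A.card + B.card + 2 * s + 2 ≤ 3 * n

theorem SmallFibers.mono {V : Type*} {n s : ℕ} {f : V → ℕ} {W W' : Finset V}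
    (h : SmallFibers n s f W) (hW : W' ⊆ W) : SmallFibers n s f W' :=
  ⟨h.lt, fun A hA => h.card_le A (hA.trans hW),
    fun A hA B hB => h.card_add_card_le A (hA.trans hW) B (hB.trans hW)⟩

theorem SmallFibers.card_filter {V : Type*} {n s : ℕ} {f : V → ℕ} {W : Finset V}
    (h : SmallFibers n s f W) (w : V) :
    (W.filter (fun v => f v = f w)).card + 2 * s < 2 * n ∨
      (W.filter (fun v => f v = f w)).card < n :=
  h.card_le _ (Finset.filter_subset _ _) (by grind)

theorem SmallFibers.card_le_of_two_fibers {V : Type*} [DecidableEq V] {n s : ℕ} {f : V → ℕ}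
    {W : Finset V} (h : SmallFibers n s f W) {x y : V}
    (hxy : ∀ w ∈ W, f w = f x ∨ f w = f y) : W.card + 2 * s + 2 ≤ 3 * n := by
  have h1 := h.card_add_card_le (W.filter (fun v => f v = f x)) (Finset.filter_subset _ _)
    (W.filter (fun v => ¬ f v = f x)) (Finset.filter_subset _ _)
    (Finset.disjoint_filter_filter_not _ _ _) (by grind) (by grind)
  rwa [Finset.card_filter_add_card_filter_not] at h1

/-- If two partitions cover all pairs between `X` and its complement in `W`, then either some
vertex is equivalent to all of `W`, or two fibers of each partition suffice to cover `W`. -/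
theorem exists_center_or_two_fibers {V : Type*} {f g : V → ℕ} {X W : Finset V} (hXW : X ⊆ W)
    (hX : X.Nonempty) (hY : ∃ y ∈ W, y ∉ X)
    (hc : ∀ x ∈ X, ∀ y ∈ W, y ∉ X → f x = f y ∨ g x = g y) :
    (∃ w ∈ W, ∀ v ∈ W, f v = f w ∨ g v = g w) ∨
      ∃ x y, ∀ w ∈ W, (f w = f x ∨ f w = f y) ∧ (g w = g x ∨ g w = g y) := by
  by_cases h : ∃ w ∈ W, ∀ v ∈ W, f v = f w ∨ g v = g w
  · exact Or.inl h
  · right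
    push Not at h
    obtain ⟨x, hx⟩ := hX
    obtain ⟨y, hyW, hy⟩ := hY
    obtain ⟨x', hx'W, hx'⟩ := h x (hXW hx)
    obtain ⟨y', hy'W, hy'⟩ := h y hyW
    have hx'X : x' ∈ X := by grind
    have hy'X : y' ∉ X := by grind
    refine ⟨x, x', fun w hw => ?_⟩
    by_cases hwX : w ∈ X
    · grind
    · grind

theorem false_of_cut {V : Type*} [DecidableEq V] {n s t : ℕ} {f g : V → ℕ} {X W : Finset V}
    (hf : SmallFibers n s f W) (hg : SmallFibers n t g W)
    (hW : 4 * n ≤ W.card + s + t + 2) (hXW : X ⊆ W)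
    (hX : X.Nonempty) (hY : ∃ y ∈ W, y ∉ X)
    (hc : ∀ x ∈ X, ∀ y ∈ W, y ∉ X → f x = f y ∨ g x = g y) : False := by
  have hs := hf.lt
  have ht := hg.lt
  rcases exists_center_or_two_fibers hXW hX hY hc with ⟨w, hw, h⟩ | ⟨x, y, h⟩
  · have h1 := hf.card_filter w
    have h2 := hg.card_filter w
    have h3 := Finset.card_union_add_card_inter (W.filter (fun v => f v = f w))
      (W.filter (fun v => g v = g w))
    have h4 : W.filter (fun v => f v = f w) ∪ W.filter (fun v => g v = g w) = W := by grind
    have h5 : 0 < (W.filter (fun v => f v = f w) ∩ W.filter (fun v => g v = g w)).card :=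
      Finset.card_pos.2 ⟨w, by grind⟩
    rw [h4] at h3
    omega
  · have h1 := hf.card_le_of_two_fibers fun w hw => (h w hw).1
    have h2 := hg.card_le_of_two_fibers fun w hw => (h w hw).2
    omega

theorem false_of_three_partitions {V : Type*} [DecidableEq V] {n s t r : ℕ} {f g h : V → ℕ}
    {W : Finset V} (hf : SmallFibers n s f W) (hg : SmallFibers n t g W)
    (hh : SmallFibers n r h W)
    (hh' : ∀ A ⊆ W, (∀ u ∈ A, ∀ v ∈ A, h u = h v) → A.card + 2 * r < 2 * n)
    (hW : 4 * n ≤ W.card + s + t + r + 2)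
    (hc : ∀ x ∈ W, ∀ y ∈ W, x ≠ y → f x = f y ∨ g x = g y ∨ h x = h y) : False := by
  have hs := hf.lt
  have ht := hg.lt
  have hr := hh.lt
  by_cases htot : ∀ x ∈ W, ∀ y ∈ W, h x = h y
  · have := hh.card_le W subset_rfl htot
    omega
  push Not at htot
  obtain ⟨a, ha, b, hb, hab⟩ := htot
  rcases exists_center_or_two_fibers (f := f) (g := g) (X := W.filter (fun v => h v = h a))
    (Finset.filter_subset _ _) ⟨a, by grind⟩ ⟨b, by grind⟩ (by grind) with ⟨w, hw, H⟩ | ⟨x, y, H⟩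
  · have h1 := hf.card_filter w
    have h2 := hg.card_filter w
    have h3 := Finset.card_union_add_card_inter (W.filter (fun v => f v = f w))
      (W.filter (fun v => g v = g w))
    have h4 : W.filter (fun v => f v = f w) ∪ W.filter (fun v => g v = g w) = W := by grind
    rw [h4] at h3
    by_cases hfw : ∀ v ∈ W, f v = f w
    · rw [Finset.filter_true_of_mem hfw] at h1
      omega
    by_cases hgw : ∀ v ∈ W, g v = g w
    · rw [Finset.filter_true_of_mem hgw] at h2
      omega
    push Not at hfw hgw
    obtain ⟨p, hp, hpw⟩ := hfw
    obtain ⟨q, hq, hqw⟩ := hgw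
    have hpq : ∀ v ∈ W, ¬ (f v = f w ∧ g v = g w) → h v = h p := by
      intro v hv hvw
      have e1 : h p = h q := by grind
      by_cases hfv : f v = f w
      · grind
      · grind
    have h5 := hh' (W \ (W.filter (fun v => f v = f w) ∩ W.filter (fun v => g v = g w)))
      Finset.sdiff_subset (by
        intro u hu v hv
        rw [hpq u (by grind) (by grind), hpq v (by grind) (by grind)])
    have h6 := Finset.card_sdiff_add_card_eq_card
      (s := W.filter (fun v => f v = f w) ∩ W.filter (fun v => g v = g w)) (t := W) (by grind)
    omega
  · have h1 := hf.card_le_of_two_fibers fun w hw => (H w hw).1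
    have h2 := hg.card_le_of_two_fibers fun w hw => (H w hw).2
    omega

/-- `G` together with `d` new vertices adjacent to everything. -/
def addUniversal {V : Type*} (G : SimpleGraph V) (d : ℕ) : SimpleGraph (V ⊕ Fin d) where
  Adj x y := x ≠ y ∧ ∀ u v, x = Sum.inl u → y = Sum.inl v → G.Adj u v
  symm := ⟨fun _ _ h => ⟨h.1.symm, fun u v hu hv => (h.2 v u hv hu).symm⟩⟩
  loopless := ⟨fun _ h => h.1 rfl⟩

theorem exists_isMatchingSet_of_isPerfectMatching {V : Type*} [Fintype V] [LinearOrder V]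
    {G : SimpleGraph V} {d : ℕ} {P : (addUniversal G d).Subgraph} (hP : P.IsPerfectMatching) :
    ∃ M, IsMatchingSet G M ∧ Fintype.card V ≤ 2 * M.card + d := by
  classical
  rw [Subgraph.isPerfectMatching_iff] at hP
  choose p hp hp' using hP
  have hpp : ∀ x, p (p x) = x := fun x => (hp' _ _ (hp x).symm).symm
  have hadj : ∀ x, (addUniversal G d).Adj x (p x) := fun x => (hp x).adj_sub
  let M : Finset (V × V) :=
    Finset.univ.filter fun e => p (Sum.inl e.1) = Sum.inl e.2 ∧ e.1 < e.2
  have hM : ∀ e, e ∈ M ↔ p (Sum.inl e.1) = Sum.inl e.2 ∧ e.1 < e.2 := by simp [M]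
  refine ⟨M, ⟨fun e he => ?_, fun e he f hf hef => ?_⟩, ?_⟩
  · exact (hadj (Sum.inl e.1)).2 _ _ rfl ((hM e).1 he).1
  · obtain ⟨he1, he2⟩ := (hM e).1 he
    obtain ⟨hf1, hf2⟩ := (hM f).1 hf
    have he3 := hpp (Sum.inl e.1)
    have hf3 := hpp (Sum.inl f.1)
    obtain ⟨a, b⟩ := e
    obtain ⟨a', b'⟩ := f
    simp only at *
    refine ⟨?_, ?_, ?_, ?_⟩
    · rintro rfl; grind
    · rintro rfl
      rw [hf1] at hf3
      have : b = a' := Sum.inl_injective (he1.symm.trans hf3)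
      grind
    · rintro rfl
      rw [he1] at he3
      have : a = b' := Sum.inl_injective (he3.symm.trans hf1)
      grind
    · rintro rfl
      rw [he1] at he3
      rw [hf1, he3] at hf3
      have : a = a' := Sum.inl_injective hf3
      grind
  · have hsub : (Finset.univ : Finset V) ⊆ (M.image Prod.fst ∪ M.image Prod.snd) ∪
        (Finset.univ.filter fun v => ∃ j, p (Sum.inl v) = Sum.inr j) := by
      intro v _
      rcases h : p (Sum.inl v) with w | j
      · have hvw : v ≠ w := by
          rintro rfl
          exact (hadj (Sum.inl v)).1 h.symm
        rcases lt_or_gt_of_ne hvw with hlt | hlt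
        · refine Finset.mem_union_left _ (Finset.mem_union_left _ ?_)
          exact Finset.mem_image.2 ⟨(v, w), (hM _).2 ⟨h, hlt⟩, rfl⟩
        · refine Finset.mem_union_left _ (Finset.mem_union_right _ ?_)
          refine Finset.mem_image.2 ⟨(w, v), (hM _).2 ⟨?_, hlt⟩, rfl⟩
          rw [← h, hpp]
      · exact Finset.mem_union_right _ (by simpa using ⟨j, h⟩)
    have hd : (Finset.univ.filter fun v : V => ∃ j, p (Sum.inl v) = Sum.inr j).card ≤ d := by
      have : (Finset.univ.filter fun v : V => ∃ j, p (Sum.inl v) = Sum.inr j) ⊆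
          Finset.univ.biUnion fun j : Fin d =>
            Finset.univ.filter fun v : V => p (Sum.inl v) = Sum.inr j := by
        intro v; simp
      refine (Finset.card_le_card this).trans ((Finset.card_biUnion_le_card_mul _ _ 1 ?_).trans ?_)
      · intro j _
        refine Finset.card_le_one.2 fun a ha b hb => ?_
        have ha := (Finset.mem_filter.1 ha).2
        have hb := (Finset.mem_filter.1 hb).2
        exact Sum.inl_injective ((hpp _).symm.trans ((congrArg p (ha.trans hb.symm)).trans (hpp _)))
      · simp
    have h1 := Finset.card_le_card hsub
    have h2 := Finset.card_union_le (M.image Prod.fst ∪ M.image Prod.snd)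
      (Finset.univ.filter fun v => ∃ j, p (Sum.inl v) = Sum.inr j)
    have h3 := Finset.card_union_le (M.image Prod.fst) (M.image Prod.snd)
    have h4 := Finset.card_image_le (s := M) (f := Prod.fst)
    have h5 := Finset.card_image_le (s := M) (f := Prod.snd)
    rw [Finset.card_univ] at h1
    omega

/-- A deficiency version of the hard direction of the Tutte–Berge formula. -/
theorem exists_barrier {V : Type*} [Fintype V] [LinearOrder V] {G : SimpleGraph V} {n : ℕ}
    (hn : 1 ≤ n) (hV : 2 * n ≤ Fintype.card V)
    (hM : ∀ M, IsMatchingSet G M → M.card < n) :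
    ∃ (S : Finset V) (f : V → ℕ) (k : ℕ), (∀ u ∉ S, ∀ v ∉ S, G.Adj u v → f u = f v) ∧
      S.card + Fintype.card V + 2 ≤ k + 2 * n ∧ ∀ i < k, ∃ v ∉ S, f v = i := by
  classical
  set d := Fintype.card V - 2 * n with hd
  set H := addUniversal G d with hH
  obtain ⟨U, hU⟩ : ∃ U, H.IsTutteViolator U := by
    by_contra! hno
    obtain ⟨P, hP⟩ := tutte.2 hno
    obtain ⟨M, hMM, hc⟩ := exists_isMatchingSet_of_isPerfectMatching hP
    have := hM M hMM
    omega
  rw [IsTutteViolator] at hU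
  set K := ((⊤ : H.Subgraph).deleteVerts U).coe with hK
  have hverts : ∀ x, x ∈ ((⊤ : H.Subgraph).deleteVerts U).verts ↔ x ∉ U := by simp
  have hKadj : ∀ x y, K.Adj x y ↔ H.Adj x.1 y.1 := by
    rintro ⟨x, hx⟩ ⟨y, hy⟩
    have hx' := (hverts x).1 hx
    have hy' := (hverts y).1 hy
    simp [hK, hx', hy']
  have hcardK : Nat.card ((⊤ : H.Subgraph).deleteVerts U).verts + U.ncard =
      2 * (Fintype.card V - n) := by
    have h1 : ((⊤ : H.Subgraph).deleteVerts U).verts = Uᶜ := by ext; simp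
    rw [h1, Nat.card_coe_set_eq, add_comm, Set.ncard_add_ncard_compl, Nat.card_eq_fintype_card]
    simp
    omega
  have hodd := K.odd_ncard_oddComponents
  have hge : U.ncard + 2 ≤ K.oddComponents.ncard := by
    rcases Nat.even_or_odd U.ncard with h | h <;> grind
  have hle : K.oddComponents.ncard ≤ Nat.card K.ConnectedComponent :=
    Set.ncard_le_card _
  have hinr : ∀ j, Sum.inr j ∈ U := by
    intro j
    by_contra hj
    have : Subsingleton K.ConnectedComponent := by
      have key : ∀ C : K.ConnectedComponent,
          C = K.connectedComponentMk ⟨Sum.inr j, (hverts _).2 hj⟩ := by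
        intro C
        induction C using ConnectedComponent.ind with
        | _ x =>
          by_cases hx : x = ⟨Sum.inr j, (hverts _).2 hj⟩
          · rw [hx]
          · refine ConnectedComponent.sound (Adj.reachable ((hKadj _ _).2 ⟨?_, by simp⟩))
            exact fun h => hx (Subtype.ext h)
      exact ⟨fun a b => (key a).trans (key b).symm⟩
    have := Finite.card_le_one_iff_subsingleton (α := K.ConnectedComponent) |>.2 this
    omega
  let e := Finite.equivFin K.ConnectedComponent
  have hvert : ∀ v, v ∉ Finset.univ.filter (fun v : V => Sum.inl v ∈ U) →
      Sum.inl v ∈ ((⊤ : H.Subgraph).deleteVerts U).verts := by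
    intro v hv
    exact (hverts _).2 (by simpa using hv)
  refine ⟨Finset.univ.filter fun v => Sum.inl v ∈ U,
    fun v => if h : Sum.inl v ∈ ((⊤ : H.Subgraph).deleteVerts U).verts then
      (e (K.connectedComponentMk ⟨Sum.inl v, h⟩) : ℕ) else 0,
    Nat.card K.ConnectedComponent, ?_, ?_, ?_⟩
  · intro u hu v hv huv
    beta_reduce
    rw [dif_pos (hvert u hu), dif_pos (hvert v hv)]
    congr 2
    refine ConnectedComponent.sound (Adj.reachable ((hKadj _ _).2 ⟨?_, ?_⟩))
    · simpa using huv.ne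
    · grind
  · have hUcard : U.ncard = (Finset.univ.filter fun v : V => Sum.inl v ∈ U).card + d := by
      have : U.ncard = (U.toFinset).card := Set.ncard_eq_toFinset_card' U
      have h2 : U.toFinset = (Finset.univ.filter fun v : V => Sum.inl v ∈ U).disjSum
          (Finset.univ : Finset (Fin d)) := by
        ext x
        rcases x with v | j
        · simp
        · simpa using hinr j
      rw [this, h2, Finset.card_disjSum]
      simp
    omega
  · intro i hi
    obtain ⟨x, hx⟩ := (e.symm ⟨i, hi⟩).exists_rep
    obtain ⟨x | j, hxU⟩ := x
    · refine ⟨x, by simpa using (hverts _).1 hxU, ?_⟩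
      beta_reduce
      rw [dif_pos hxU]
      have : K.connectedComponentMk ⟨Sum.inl x, hxU⟩ = e.symm ⟨i, hi⟩ := hx
      rw [this]
      simp
    · exact absurd (hinr j) ((hverts _).1 hxU)

/-- Deleting `S` splits `G[D]` into parts, given by the fibers of `f`, that are so numerous that
`G[D]` has no matching with `n` edges. -/
structure IsBarrier {V : Type*} (n : ℕ) (G : SimpleGraph V) (D S : Finset V) (f : V → ℕ) :
    Prop where
  eq_of_adj : ∀ u ∈ D, u ∉ S → ∀ v ∈ D, v ∉ S → G.Adj u v → f u = f v
  card_lt : ∀ A, Disjoint A S → (∀ u ∈ A, ∀ v ∈ A, f u = f v) → A.card + 2 * S.card < 2 * n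
  card_add_card_le : ∀ A B, Disjoint A S → Disjoint B S → Disjoint A B →
    (∀ u ∈ A, ∀ v ∈ A, f u = f v) → (∀ u ∈ B, ∀ v ∈ B, f u = f v) →
    A.card + B.card + 2 * S.card ≤ 2 * n

theorem exists_isBarrier {V : Type*} [Fintype V] [LinearOrder V] {G : SimpleGraph V} {n : ℕ}
    (hn : 1 ≤ n) (hV : 2 * n ≤ Fintype.card V) (hM : ∀ M, ConnMatching G M → M.card < n)
    {D : Finset V} (hD : ∀ u ∈ D, ∀ v ∈ D, G.Reachable u v) :
    ∃ S f, IsBarrier n G D S f := by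
  let G' : SimpleGraph V :=
    { Adj := fun u v => G.Adj u v ∧ u ∈ D ∧ v ∈ D
      symm := ⟨fun _ _ h => ⟨h.1.symm, h.2.2, h.2.1⟩⟩
      loopless := ⟨fun _ h => h.1.ne rfl⟩ }
  obtain ⟨S, f, k, hadj, hk, hsurj⟩ := exists_barrier (G := G') hn hV fun M hMM =>
    hM M ⟨⟨fun e he => (hMM.1 e he).1, hMM.2⟩,
      fun e he f hf => hD _ (hMM.1 e he).2.1 _ (hMM.1 f hf).2.1⟩
  have himage : ∀ A : Finset V, (∀ u ∈ A, ∀ v ∈ A, f u = f v) → (A.image f).card ≤ 1 := by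
    intro A hA
    refine Finset.card_le_one.2 ?_
    simp only [Finset.mem_image]
    rintro _ ⟨u, hu, rfl⟩ _ ⟨v, hv, rfl⟩
    exact hA u hu v hv
  have hcount : ∀ B : Finset V, Disjoint B S →
      k + S.card + B.card ≤ Fintype.card V + (B.image f).card := by
    intro B hB
    have h1 : Finset.range k ⊆ (Finset.univ \ (S ∪ B)).image f ∪ B.image f := by
      intro i hi
      obtain ⟨v, hv, rfl⟩ := hsurj i (Finset.mem_range.1 hi)
      by_cases hvB : v ∈ B
      · exact Finset.mem_union_right _ (Finset.mem_image_of_mem _ hvB)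
      · exact Finset.mem_union_left _ (Finset.mem_image_of_mem _ (by simp [hv, hvB]))
    have h2 := Finset.card_le_card h1
    have h3 := Finset.card_union_le ((Finset.univ \ (S ∪ B)).image f) (B.image f)
    have h4 := Finset.card_image_le (s := Finset.univ \ (S ∪ B)) (f := f)
    have h5 := Finset.card_sdiff_add_card_eq_card (Finset.subset_univ (S ∪ B))
    rw [Finset.card_union_of_disjoint hB.symm, Finset.card_univ] at h5
    rw [Finset.card_range] at h2
    omega
  refine ⟨S, f, fun u hu huS v hv hvS huv => hadj u huS v hvS ⟨huv, hu, hv⟩, ?_, ?_⟩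
  · intro A hAS hA
    have h1 := hcount A hAS
    have h2 := himage A hA
    omega
  · intro A B hAS hBS hAB hA hB
    have h1 := hcount (A ∪ B) (Finset.disjoint_union_left.2 ⟨hAS, hBS⟩)
    have h2 := himage A hA
    have h3 := himage B hB
    rw [Finset.image_union, Finset.card_union_of_disjoint hAB] at h1
    have h4 := Finset.card_union_le (A.image f) (B.image f)
    omega

theorem IsBarrier.card_lt_of_mem {V : Type*} {n : ℕ} {G : SimpleGraph V} {D S : Finset V}
    {f : V → ℕ} (h : IsBarrier n G D S f) : S.card < n := by
  have := h.card_lt ∅ (by simp) (by simp)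
  simp at this
  omega

theorem IsBarrier.smallFibers {V : Type*} {n : ℕ} {G : SimpleGraph V} {D S : Finset V}
    {f : V → ℕ} (h : IsBarrier n G D S f) (hn : 2 ≤ n) {W : Finset V} (hW : Disjoint W S) :
    SmallFibers n S.card f W where
  lt := h.card_lt_of_mem
  card_le A hA hf := Or.inl (h.card_lt A (hW.mono_left hA) hf)
  card_add_card_le A hA B hB hAB hf hf' := by
    have := h.card_add_card_le A B (hW.mono_left hA) (hW.mono_left hB) hAB hf hf'
    omega

theorem IsBarrier.of_biclique {V : Type*} [DecidableEq V] {n : ℕ} {G : SimpleGraph V}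
    {D S : Finset V} {f : V → ℕ} (h : IsBarrier n G D S f) {A B : Finset V} (hA : A ⊆ D)
    (hB : B ⊆ D) (hAB : ∀ u ∈ A, ∀ v ∈ B, G.Adj u v) :
    A ⊆ S ∨ B ⊆ S ∨ ∀ u ∈ (A ∪ B) \ S, ∀ v ∈ (A ∪ B) \ S, f u = f v := by
  by_cases h1 : A ⊆ S
  · exact Or.inl h1
  by_cases h2 : B ⊆ S
  · exact Or.inr (Or.inl h2)
  obtain ⟨a, ha, haS⟩ := Finset.not_subset.1 h1
  obtain ⟨b, hb, hbS⟩ := Finset.not_subset.1 h2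
  have key : ∀ u ∈ A, u ∉ S → ∀ v ∈ B, v ∉ S → f u = f v := fun u hu huS v hv hvS =>
    h.eq_of_adj u (hA hu) huS v (hB hv) hvS (hAB u hu v hv)
  have all : ∀ u ∈ (A ∪ B) \ S, f u = f a := by
    intro u hu
    simp only [Finset.mem_sdiff, Finset.mem_union] at hu
    rcases hu with ⟨hu | hu, huS⟩
    · rw [key u hu huS b hb hbS, key a ha haS b hb hbS]
    · rw [key a ha haS u hu huS]
  exact Or.inr (Or.inr fun u hu v hv => (all u hu).trans (all v hv).symm)

theorem reachable_of_biclique {V : Type*} [DecidableEq V] {G : SimpleGraph V} {A B : Finset V}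
    (hA : A.Nonempty) (hB : B.Nonempty) (hAB : ∀ u ∈ A, ∀ v ∈ B, G.Adj u v) :
    ∀ u ∈ A ∪ B, ∀ v ∈ A ∪ B, G.Reachable u v := by
  obtain ⟨a, ha⟩ := hA
  obtain ⟨b, hb⟩ := hB
  have all : ∀ u ∈ A ∪ B, G.Reachable u a := by
    intro u hu
    rcases Finset.mem_union.1 hu with hu | hu
    · exact (hAB u hu b hb).reachable.trans (hAB a ha b hb).symm.reachable
    · exact (hAB a ha u hu).symm.reachable
  exact fun u hu v hv => (all u hu).trans (all v hv).symm

theorem exists_isBarrier_of_biclique {V : Type*} [Fintype V] [LinearOrder V] {G : SimpleGraph V}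
    {n : ℕ} (hn : 1 ≤ n) (hM : ∀ M, ConnMatching G M → M.card < n) {A B : Finset V}
    (hA : A.Nonempty) (hB : B.Nonempty) (hd : Disjoint A B) (hAB : ∀ u ∈ A, ∀ v ∈ B, G.Adj u v)
    (hAn : n ≤ A.card) (hc : 2 * n ≤ A.card + B.card) :
    ∃ S f, IsBarrier n G (A ∪ B) S f ∧ B ⊆ S := by
  have hV : 2 * n ≤ Fintype.card V := by
    have := Finset.card_le_univ (A ∪ B)
    rw [Finset.card_union_of_disjoint hd] at this
    omega
  obtain ⟨S, f, h⟩ := exists_isBarrier hn hV hM (reachable_of_biclique hA hB hAB)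
  refine ⟨S, f, h, ?_⟩
  rcases h.of_biclique Finset.subset_union_left Finset.subset_union_right hAB with h1 | h1 | h1
  · have := Finset.card_le_card h1
    have := h.card_lt_of_mem
    omega
  · exact h1
  · have h2 := h.card_lt _ Finset.sdiff_disjoint h1
    have h3 := Finset.le_card_sdiff S (A ∪ B)
    rw [Finset.card_union_of_disjoint hd] at h3
    omega

theorem card_lt_of_biclique {V : Type*} [Fintype V] [LinearOrder V] {G : SimpleGraph V}
    {n : ℕ} (hn : 1 ≤ n) (hM : ∀ M, ConnMatching G M → M.card < n) {A B : Finset V}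
    (hd : Disjoint A B) (hAB : ∀ u ∈ A, ∀ v ∈ B, G.Adj u v) (hAn : n ≤ A.card) :
    B.card < n := by
  by_contra! hB
  obtain ⟨S, f, h, hS⟩ := exists_isBarrier_of_biclique hn hM (Finset.card_pos.1 (by omega))
    (Finset.card_pos.1 (by omega)) hd hAB hAn (by omega)
  have := Finset.card_le_card hS
  have := h.card_lt_of_mem
  omega

/-- Some component of `G` misses fewer than `n` vertices. -/
def IsAlmostSpanning {V : Type*} [Fintype V] [DecidableEq V] (n : ℕ) (G : SimpleGraph V) : Prop :=
  ∃ D : Finset V, (∀ u ∈ D, ∀ v ∈ D, G.Reachable u v) ∧ (∀ u ∈ D, ∀ v, G.Adj u v → v ∈ D) ∧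
    (Finset.univ \ D).card < n

theorem exists_separation {V : Type*} [Fintype V] [DecidableEq V] {n : ℕ} {G : SimpleGraph V}
    (hn : 1 ≤ n) (hV : 3 * n ≤ Fintype.card V + 2) (h : ¬ IsAlmostSpanning n G) :
    ∃ X : Finset V, (∀ u ∈ X, ∀ v, G.Adj u v → v ∈ X) ∧ n ≤ X.card ∧
      n ≤ (Finset.univ \ X).card := by
  classical
  obtain ⟨X, hX, hmin⟩ := Finset.exists_min_image
    (Finset.univ.filter fun X : Finset V => (∀ u ∈ X, ∀ v, G.Adj u v → v ∈ X) ∧ n ≤ X.card)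
    Finset.card ⟨Finset.univ, by simp; omega⟩
  simp only [Finset.mem_filter, Finset.mem_univ, true_and] at hX hmin
  refine ⟨X, hX.1, hX.2, ?_⟩
  obtain ⟨x, hx⟩ := Finset.card_pos.1 (by omega : 0 < X.card)
  set C := X.filter fun v => G.Reachable x v with hC
  have hCclosed : ∀ u ∈ C, ∀ v, G.Adj u v → v ∈ C := by
    intro u hu v huv
    simp only [hC, Finset.mem_filter] at hu ⊢
    exact ⟨hX.1 u hu.1 v huv, hu.2.trans huv.reachable⟩
  have hCconn : ∀ u ∈ C, ∀ v ∈ C, G.Reachable u v := by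
    intro u hu v hv
    simp only [hC, Finset.mem_filter] at hu hv
    exact hu.2.symm.trans hv.2
  have hCX : C ⊆ X := Finset.filter_subset _ _
  have hcard := Finset.card_sdiff_add_card_eq_card hCX
  have hcardX := Finset.card_sdiff_add_card_eq_card (Finset.subset_univ X)
  have hcardC := Finset.card_sdiff_add_card_eq_card (Finset.subset_univ C)
  rw [Finset.card_univ] at hcardX hcardC
  by_cases hCn : n ≤ C.card
  · have h1 := hmin C ⟨hCclosed, hCn⟩
    have h2 : ¬ (Finset.univ \ C).card < n := fun h2 => h ⟨C, hCconn, hCclosed, h2⟩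
    omega
  · have hpos : 0 < C.card := Finset.card_pos.2 ⟨x, by simp [hC, hx]⟩
    have h1 : (X \ C).card < n := by
      by_contra! h1
      have := hmin (X \ C) ⟨fun u hu v huv => ?_, h1⟩
      · omega
      · rw [Finset.mem_sdiff] at hu ⊢
        exact ⟨hX.1 u hu.1 v huv, fun hv => hu.2 (hCclosed v hv u huv.symm)⟩
    omega

theorem IsAlmostSpanning.exists_smallFibers {V : Type*} [Fintype V] [LinearOrder V] {n : ℕ}
    {G : SimpleGraph V} (h : IsAlmostSpanning n G) (hn : 2 ≤ n) (hV : 2 * n ≤ Fintype.card V)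
    (hM : ∀ M, ConnMatching G M → M.card < n) :
    ∃ (S : Finset V) (f : V → ℕ), (∀ u ∉ S, ∀ v ∉ S, G.Adj u v → f u = f v) ∧
      SmallFibers n S.card f (Finset.univ \ S) := by
  obtain ⟨D, hD, hclosed, hcard⟩ := h
  obtain ⟨S, f, hB⟩ := exists_isBarrier (by omega) hV hM hD
  have hs := hB.card_lt_of_mem
  have hcase : ∀ A : Finset V, A ⊆ Finset.univ \ S →
      (∀ u ∈ A, ∀ v ∈ A, (if u ∈ D then f u + 1 else 0) = if v ∈ D then f v + 1 else 0) →
      Disjoint A S ∧ ((∀ u ∈ A, ∀ v ∈ A, f u = f v) ∨ A ⊆ Finset.univ \ D) := by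
    intro A hA hf
    refine ⟨Finset.disjoint_left.2 fun u hu => (Finset.mem_sdiff.1 (hA hu)).2, ?_⟩
    by_cases hAD : A ⊆ Finset.univ \ D
    · exact Or.inr hAD
    · obtain ⟨a, ha, haD⟩ := Finset.not_subset.1 hAD
      left
      intro u hu v hv
      have h1 := hf u hu a ha
      have h2 := hf v hv a ha
      grind
  refine ⟨S, fun v => if v ∈ D then f v + 1 else 0, ?_, ⟨hs, ?_, ?_⟩⟩
  · intro u hu v hv huv
    have h1 := hclosed u
    have h2 := hclosed v
    have h3 := hB.eq_of_adj u
    have := huv.symm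
    grind
  · intro A hA hf
    obtain ⟨hAS, h1 | h1⟩ := hcase A hA hf
    · exact Or.inl (hB.card_lt A hAS h1)
    · exact Or.inr ((Finset.card_le_card h1).trans_lt hcard)
  · intro A hA B hB' hAB hfA hfB
    obtain ⟨hAS, hA1⟩ := hcase A hA hfA
    obtain ⟨hBS, hB1⟩ := hcase B hB' hfB
    rcases hA1 with h1 | h1 <;> rcases hB1 with h2 | h2
    · have := hB.card_add_card_le A B hAS hBS hAB h1 h2
      omega
    · have := hB.card_lt A hAS h1
      have := Finset.card_le_card h2
      omega
    · have := hB.card_lt B hBS h2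
      have := Finset.card_le_card h1
      omega
    · have h3 := Finset.card_le_card (Finset.union_subset h1 h2)
      rw [Finset.card_union_of_disjoint hAB] at h3
      omega

theorem false_of_two_almostSpanning {V : Type*} [Fintype V] [LinearOrder V] {n : ℕ}
    (hn : 2 ≤ n) (hV : Fintype.card V + 2 = 4 * n) {G₁ G₂ G₃ : SimpleGraph V}
    (hc : ∀ u v, u ≠ v → G₁.Adj u v ∨ G₂.Adj u v ∨ G₃.Adj u v)
    (h₁ : ∀ M, ConnMatching G₁ M → M.card < n) (h₂ : ∀ M, ConnMatching G₂ M → M.card < n)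
    (h₃ : ∀ M, ConnMatching G₃ M → M.card < n) (hs₂ : IsAlmostSpanning n G₂)
    (hs₃ : IsAlmostSpanning n G₃) : False := by
  obtain ⟨S, f, hf, hSf⟩ := hs₂.exists_smallFibers hn (by omega) h₂
  obtain ⟨T, g, hg, hTg⟩ := hs₃.exists_smallFibers hn (by omega) h₃
  set W := Finset.univ \ (S ∪ T) with hW
  have hfW : SmallFibers n S.card f W := hSf.mono (by grind)
  have hgW : SmallFibers n T.card g W := hTg.mono (by grind)
  have hWc : (Finset.univ : Finset V).card - (S ∪ T).card ≤ W.card := Finset.le_card_sdiff _ _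
  have hST := Finset.card_union_le S T
  rw [Finset.card_univ] at hWc
  have hcW : ∀ u ∈ W, ∀ v ∈ W, u ≠ v → G₁.Adj u v ∨ f u = f v ∨ g u = g v := by
    intro u hu v hv huv
    simp only [hW, Finset.mem_sdiff, Finset.mem_union, Finset.mem_univ, true_and, not_or] at hu hv
    rcases hc u v huv with h | h | h
    · exact Or.inl h
    · exact Or.inr (Or.inl (hf u hu.1 v hv.1 h))
    · exact Or.inr (Or.inr (hg u hu.2 v hv.2 h))
  have hconn : ∀ u ∈ W, ∀ v ∈ W, G₁.Reachable u v := by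
    classical
    by_contra! hno
    obtain ⟨u, hu, v, hv, huv⟩ := hno
    refine false_of_cut hfW hgW (by omega) (X := W.filter fun x => G₁.Reachable u x)
      (Finset.filter_subset _ _) ⟨u, by simp [hu]⟩ ⟨v, hv, by simp [huv]⟩ ?_
    intro x hx y hy hyX
    simp only [Finset.mem_filter, not_and] at hx hyX
    rcases hcW x hx.1 y hy (fun h => hyX hy (h ▸ hx.2)) with h | h
    · exact absurd (hx.2.trans h.reachable) (hyX hy)
    · exact h
  obtain ⟨R, h, hB⟩ := exists_isBarrier (by omega) (by omega) h₁ hconn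
  have hdisj : Disjoint (W \ R) R := Finset.sdiff_disjoint
  have hWR := Finset.le_card_sdiff R W
  refine false_of_three_partitions (hfW.mono Finset.sdiff_subset) (hgW.mono Finset.sdiff_subset)
    (hB.smallFibers hn hdisj) (fun A hA => hB.card_lt A (hdisj.mono_left hA)) (by omega) ?_
  intro x hx y hy hxy
  rw [Finset.mem_sdiff] at hx hy
  rcases hcW x hx.1 y hy.1 hxy with h' | h' | h'
  · exact Or.inr (Or.inr (hB.eq_of_adj x hx.1 hx.2 y hy.1 hy.2 h'))
  · exact Or.inl h'
  · exact Or.inr (Or.inl h')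

theorem false_of_connected_four_cells {V : Type*} [Fintype V] [LinearOrder V] {n : ℕ}
    (hn : 2 ≤ n) (hV : Fintype.card V + 2 = 4 * n) {G : SimpleGraph V}
    (hM : ∀ M, ConnMatching G M → M.card < n) (hG : ∀ u v, G.Reachable u v)
    {a b c d : Finset V} (hab : Disjoint a b) (hac : Disjoint a c) (had : Disjoint a d)
    (hbc : Disjoint b c) (hbd : Disjoint b d) (hcd : Disjoint c d)
    (hcard : a.card + b.card + c.card + d.card = Fintype.card V)
    (hab' : n ≤ a.card + b.card) (hac' : n ≤ a.card + c.card) (hbd' : n ≤ b.card + d.card)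
    (hcd' : n ≤ c.card + d.card) (hba : b.card ≤ a.card) (hca : c.card ≤ a.card)
    (hda : d.card ≤ a.card)
    (had₁ : ∀ u ∈ a, ∀ v ∈ d, G.Adj u v) (hbc₁ : ∀ u ∈ b, ∀ v ∈ c, G.Adj u v) : False := by
  obtain ⟨S, f, h⟩ := exists_isBarrier (D := Finset.univ) (by omega) (by omega) hM
    fun u _ v _ => hG u v
  have hs := h.card_lt_of_mem
  rcases h.of_biclique (Finset.subset_univ a) (Finset.subset_univ d) had₁ with h1 | h1 | h1
  · have := Finset.card_le_card h1
    omega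
  · rcases h.of_biclique (Finset.subset_univ b) (Finset.subset_univ c) hbc₁ with h2 | h2 | h2
    · have := Finset.card_le_card (Finset.union_subset h2 h1)
      rw [Finset.card_union_of_disjoint hbd] at this
      omega
    · have := Finset.card_le_card (Finset.union_subset h2 h1)
      rw [Finset.card_union_of_disjoint hcd] at this
      omega
    · have h3 := h.card_lt _ Finset.sdiff_disjoint h2
      have h4 : ((b ∪ c) ∪ S).card ≤ ((b ∪ c) \ S).card + S.card := by
        rw [← Finset.sdiff_union_self_eq_union]
        exact Finset.card_union_le _ _
      have h5 : (b ∪ c ∪ d).card ≤ ((b ∪ c) ∪ S).card :=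
        Finset.card_le_card (Finset.union_subset_union_right h1)
      rw [Finset.card_union_of_disjoint (Finset.disjoint_union_left.2 ⟨hbd, hcd⟩),
        Finset.card_union_of_disjoint hbc] at h5
      have := Finset.card_le_card h1
      omega
  · have side : ∀ e : Finset V, Disjoint a e → Disjoint d e → n ≤ e.card + d.card →
        n ≤ a.card + e.card → e ⊆ S → False := by
      intro e hae hde hed hae' heS
      have h3 := h.card_lt _ Finset.sdiff_disjoint h1
      have h4 : ((a ∪ d) ∪ S).card ≤ ((a ∪ d) \ S).card + S.card := by
        rw [← Finset.sdiff_union_self_eq_union]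
        exact Finset.card_union_le _ _
      have h5 : (a ∪ d ∪ e).card ≤ ((a ∪ d) ∪ S).card :=
        Finset.card_le_card (Finset.union_subset_union_right heS)
      rw [Finset.card_union_of_disjoint (Finset.disjoint_union_left.2 ⟨hae, hde⟩),
        Finset.card_union_of_disjoint had] at h5
      have := Finset.card_le_card heS
      omega
    rcases h.of_biclique (Finset.subset_univ b) (Finset.subset_univ c) hbc₁ with h2 | h2 | h2
    · exact side b hab hbd.symm hbd' hab' h2
    · exact side c hac hcd.symm hcd' hac' h2
    · have h3 := h.card_add_card_le _ _ Finset.sdiff_disjoint Finset.sdiff_disjoint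
        (Disjoint.mono Finset.sdiff_subset Finset.sdiff_subset
          (Finset.disjoint_union_left.2 ⟨Finset.disjoint_union_right.2 ⟨hab, hac⟩,
            Finset.disjoint_union_right.2 ⟨hbd.symm, hcd.symm⟩⟩)) h1 h2
      have h4 := Finset.card_union_le ((a ∪ d) \ S ∪ (b ∪ c) \ S) S
      have h5 := Finset.card_union_le ((a ∪ d) \ S) ((b ∪ c) \ S)
      have h6 : (a ∪ d) ∪ (b ∪ c) ⊆ (a ∪ d) \ S ∪ (b ∪ c) \ S ∪ S := by grind
      have h7 := Finset.card_le_card h6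
      rw [Finset.card_union_of_disjoint
          (Finset.disjoint_union_left.2 ⟨Finset.disjoint_union_right.2 ⟨hab, hac⟩,
            Finset.disjoint_union_right.2 ⟨hbd.symm, hcd.symm⟩⟩),
        Finset.card_union_of_disjoint had, Finset.card_union_of_disjoint hbc] at h7
      omega

theorem false_of_four_cells {V : Type*} [Fintype V] [LinearOrder V] {n : ℕ}
    (hn : 2 ≤ n) (hV : Fintype.card V + 2 = 4 * n) {G₁ G₂ G₃ : SimpleGraph V}
    (hc : ∀ u v, u ≠ v → G₁.Adj u v ∨ G₂.Adj u v ∨ G₃.Adj u v)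
    (h₁ : ∀ M, ConnMatching G₁ M → M.card < n) (h₂ : ∀ M, ConnMatching G₂ M → M.card < n)
    (h₃ : ∀ M, ConnMatching G₃ M → M.card < n)
    {a b c d : Finset V} (hab : Disjoint a b) (hac : Disjoint a c) (had : Disjoint a d)
    (hbc : Disjoint b c) (hbd : Disjoint b d) (hcd : Disjoint c d)
    (huniv : ∀ v, v ∈ a ∨ v ∈ b ∨ v ∈ c ∨ v ∈ d)
    (hab' : n ≤ a.card + b.card) (hac' : n ≤ a.card + c.card) (hbd' : n ≤ b.card + d.card)
    (hcd' : n ≤ c.card + d.card) (hba : b.card ≤ a.card) (hca : c.card ≤ a.card)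
    (hda : d.card ≤ a.card)
    (had₁ : ∀ u ∈ a, ∀ v ∈ d, G₁.Adj u v) (hbc₁ : ∀ u ∈ b, ∀ v ∈ c, G₁.Adj u v)
    (hab₃ : ∀ u ∈ a, ∀ v ∈ b, ¬ G₃.Adj u v) (hac₂ : ∀ u ∈ a, ∀ v ∈ c, ¬ G₂.Adj u v) :
    False := by
  have hcard : a.card + b.card + c.card + d.card = Fintype.card V := by
    rw [← Finset.card_union_of_disjoint hab, ← Finset.card_union_of_disjoint
      (Finset.disjoint_union_left.2 ⟨hac, hbc⟩), ← Finset.card_union_of_disjoint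
      (Finset.disjoint_union_left.2 ⟨Finset.disjoint_union_left.2 ⟨had, hbd⟩, hcd⟩),
      ← Finset.card_univ]
    congr 1
    grind
  have hn1 : 1 ≤ n := by omega
  have han : n ≤ a.card := by omega
  have hd := card_lt_of_biclique hn1 h₁ had had₁ han
  have hd0 : 0 < d.card := by
    by_contra! h0
    have := card_lt_of_biclique hn1 h₁ hbc hbc₁ (by omega)
    omega
  have ha : a.Nonempty := Finset.card_pos.1 (by omega)
  have hb : b.Nonempty := Finset.card_pos.1 (by omega)
  have hc0 : c.Nonempty := Finset.card_pos.1 (by omega)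
  have hd' : d.Nonempty := Finset.card_pos.1 hd0
  have hrad := reachable_of_biclique ha hd' had₁
  have hrbc := reachable_of_biclique hb hc0 hbc₁
  by_cases hx : ∃ u ∈ a ∪ d, ∃ v ∈ b ∪ c, G₁.Reachable u v
  · obtain ⟨x, hx, y, hy, hxy⟩ := hx
    have all : ∀ u, G₁.Reachable u x := by
      intro u
      by_cases hu : u ∈ a ∪ d
      · exact hrad u hu x hx
      · exact (hrbc u (by grind) y hy).trans hxy.symm
    exact false_of_connected_four_cells hn hV h₁ (fun u v => (all u).trans (all v).symm)
      hab hac had hbc hbd hcd hcard hab' hac' hbd' hcd' hba hca hda had₁ hbc₁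
  · push Not at hx
    have hno : ∀ u ∈ a ∪ d, ∀ v ∈ b ∪ c, ¬ G₁.Adj u v := fun u hu v hv h =>
      hx u hu v hv h.reachable
    have hab₂ : ∀ u ∈ a, ∀ v ∈ b, G₂.Adj u v := by
      intro u hu v hv
      have h1 := hc u v (fun h => Finset.disjoint_left.1 hab hu (h ▸ hv))
      have h2 := hab₃ u hu v hv
      have h3 := hno u (Finset.mem_union_left _ hu) v (Finset.mem_union_left _ hv)
      tauto
    have hac₃ : ∀ u ∈ a, ∀ v ∈ c, G₃.Adj u v := by
      intro u hu v hv
      have h1 := hc u v (fun h => Finset.disjoint_left.1 hac hu (h ▸ hv))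
      have h2 := hac₂ u hu v hv
      have h3 := hno u (Finset.mem_union_left _ hu) v (Finset.mem_union_right _ hv)
      tauto
    have hbn := card_lt_of_biclique hn1 h₂ hab hab₂ han
    have hcn := card_lt_of_biclique hn1 h₃ hac hac₃ han
    obtain ⟨R, f, hR, hdR⟩ := exists_isBarrier_of_biclique hn1 h₁ ha hd' had had₁ han (by omega)
    obtain ⟨S, g, hS, hbS⟩ := exists_isBarrier_of_biclique hn1 h₂ ha hb hab hab₂ han (by omega)
    obtain ⟨T, h, hT, hcT⟩ := exists_isBarrier_of_biclique hn1 h₃ ha hc0 hac hac₃ han (by omega)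
    set W := Finset.univ \ (R ∪ S ∪ T) with hW
    have hWc : (Finset.univ : Finset V).card - (R ∪ S ∪ T).card ≤ W.card :=
      Finset.le_card_sdiff _ _
    have hRS := Finset.card_union_le R S
    have hRST := Finset.card_union_le (R ∪ S) T
    rw [Finset.card_univ] at hWc
    have hWmem : ∀ v ∈ W, v ∈ a ∧ v ∉ R ∧ v ∉ S ∧ v ∉ T := by
      intro v hv
      have := huniv v
      have := @hdR v
      have := @hbS v
      have := @hcT v
      grind
    have hWR : Disjoint W R := Finset.disjoint_left.2 fun v hv => (hWmem v hv).2.1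
    have hWS : Disjoint W S := Finset.disjoint_left.2 fun v hv => (hWmem v hv).2.2.1
    have hWT : Disjoint W T := Finset.disjoint_left.2 fun v hv => (hWmem v hv).2.2.2
    refine false_of_three_partitions (hR.smallFibers hn hWR) (hS.smallFibers hn hWS)
      (hT.smallFibers hn hWT) (fun A hA => hT.card_lt A (hWT.mono_left hA)) (by omega) ?_
    intro x hx y hy hxy
    obtain ⟨hxa, hxR, hxS, hxT⟩ := hWmem x hx
    obtain ⟨hya, hyR, hyS, hyT⟩ := hWmem y hy
    have hl : ∀ e : Finset V, a ⊆ a ∪ e := fun e => Finset.subset_union_left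
    rcases hc x y hxy with h' | h' | h'
    · exact Or.inl (hR.eq_of_adj x (hl _ hxa) hxR y (hl _ hya) hyR h')
    · exact Or.inr (Or.inl (hS.eq_of_adj x (hl _ hxa) hxS y (hl _ hya) hyS h'))
    · exact Or.inr (Or.inr (hT.eq_of_adj x (hl _ hxa) hxT y (hl _ hya) hyT h'))

theorem false_of_two_not_almostSpanning {V : Type*} [Fintype V] [LinearOrder V] {n : ℕ}
    (hn : 2 ≤ n) (hV : Fintype.card V + 2 = 4 * n) {G₁ G₂ G₃ : SimpleGraph V}
    (hc : ∀ u v, u ≠ v → G₁.Adj u v ∨ G₂.Adj u v ∨ G₃.Adj u v)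
    (h₁ : ∀ M, ConnMatching G₁ M → M.card < n) (h₂ : ∀ M, ConnMatching G₂ M → M.card < n)
    (h₃ : ∀ M, ConnMatching G₃ M → M.card < n) (hs₂ : ¬ IsAlmostSpanning n G₂)
    (hs₃ : ¬ IsAlmostSpanning n G₃) : False := by
  obtain ⟨X, hX, hXn, hXn'⟩ := exists_separation (by omega) (by omega) hs₂
  obtain ⟨Y, hY, hYn, hYn'⟩ := exists_separation (by omega) (by omega) hs₃
  -- Replacing `X` and `Y` by their complements, `X ∩ Y` may be taken to be the largest cell.
  have key : ∀ X Y : Finset V, (∀ u ∈ X, ∀ v ∉ X, ¬ G₂.Adj u v) →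
      (∀ u ∈ Y, ∀ v ∉ Y, ¬ G₃.Adj u v) → n ≤ X.card → n ≤ Xᶜ.card → n ≤ Y.card →
      n ≤ Yᶜ.card → (X ∩ Yᶜ).card ≤ (X ∩ Y).card → (Xᶜ ∩ Y).card ≤ (X ∩ Y).card →
      (Xᶜ ∩ Yᶜ).card ≤ (X ∩ Y).card → False := by
    intro X Y hX hY hXn hXn' hYn hYn' m1 m2 m3
    have split : ∀ P Q : Finset V, (P ∩ Q).card + (P ∩ Qᶜ).card = P.card := by
      intro P Q
      rw [← Finset.sdiff_eq_inter_compl, Finset.card_inter_add_card_sdiff]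
    have e1 := split X Y
    have e2 := split Xᶜ Y
    have e3 := split Y X
    have e4 := split Yᶜ X
    rw [Finset.inter_comm Y, Finset.inter_comm Y] at e3
    rw [Finset.inter_comm Yᶜ, Finset.inter_comm Yᶜ] at e4
    have hcross : ∀ u v, (u ∈ X ↔ v ∉ X) → (u ∈ Y ↔ v ∉ Y) → G₁.Adj u v := by
      intro u v hx hy
      have h0 := hc u v (by grind)
      have h2 : ¬ G₂.Adj u v := by
        by_cases hu : u ∈ X
        · exact hX u hu v (hx.1 hu)
        · exact fun h => hX v (by tauto) u hu h.symm
      have h3 : ¬ G₃.Adj u v := by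
        by_cases hu : u ∈ Y
        · exact hY u hu v (hy.1 hu)
        · exact fun h => hY v (by tauto) u hu h.symm
      tauto
    refine false_of_four_cells hn hV hc h₁ h₂ h₃ (a := X ∩ Y) (b := X ∩ Yᶜ) (c := Xᶜ ∩ Y)
      (d := Xᶜ ∩ Yᶜ) ?_ ?_ ?_ ?_ ?_ ?_ (by clear * -; grind [Finset.mem_compl]) (by omega) (by omega)
      (by omega) (by omega) m1 m2 m3 ?_ ?_ ?_ ?_
    iterate 6 exact Finset.disjoint_left.2 (by clear * -; grind [Finset.mem_compl])
    · intro u hu v hv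
      simp only [Finset.mem_inter, Finset.mem_compl] at hu hv
      exact hcross u v (iff_of_true hu.1 hv.1) (iff_of_true hu.2 hv.2)
    · intro u hu v hv
      simp only [Finset.mem_inter, Finset.mem_compl] at hu hv
      exact hcross u v (iff_of_true hu.1 hv.1) (iff_of_false hu.2 (not_not.2 hv.2))
    · intro u hu v hv
      simp only [Finset.mem_inter, Finset.mem_compl] at hu hv
      exact hY u hu.2 v hv.2
    · intro u hu v hv
      simp only [Finset.mem_inter, Finset.mem_compl] at hu hv
      exact hX u hu.1 v hv.1
  rw [← Finset.compl_eq_univ_sdiff] at hXn' hYn'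
  have hX1 : ∀ u ∈ X, ∀ v ∉ X, ¬ G₂.Adj u v := fun u hu v hv h => hv (hX u hu v h)
  have hY1 : ∀ u ∈ Y, ∀ v ∉ Y, ¬ G₃.Adj u v := fun u hu v hv h => hv (hY u hu v h)
  have hX2 : ∀ u ∈ Xᶜ, ∀ v ∉ Xᶜ, ¬ G₂.Adj u v := fun u hu v hv h =>
    Finset.mem_compl.1 hu (hX v (by simpa using hv) u h.symm)
  have hY2 : ∀ u ∈ Yᶜ, ∀ v ∉ Yᶜ, ¬ G₃.Adj u v := fun u hu v hv h =>
    Finset.mem_compl.1 hu (hY v (by simpa using hv) u h.symm)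
  have k1 := key X Y hX1 hY1 hXn hXn' hYn hYn'
  have k2 := key X Yᶜ hX1 hY2 hXn hXn' hYn'
  have k3 := key Xᶜ Y hX2 hY1 hXn'
  have k4 := key Xᶜ Yᶜ hX2 hY2 hXn'
  rw [compl_compl] at k2 k3
  rw [compl_compl, compl_compl] at k4
  specialize k2 hYn
  specialize k3 hXn hYn hYn'
  specialize k4 hXn hYn' hYn
  rcases le_total (X ∩ Y).card (X ∩ Yᶜ).card with h | h <;>
  rcases le_total (Xᶜ ∩ Y).card (Xᶜ ∩ Yᶜ).card with h' | h' <;>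
  rcases le_total (max (X ∩ Y).card (X ∩ Yᶜ).card) (max (Xᶜ ∩ Y).card (Xᶜ ∩ Yᶜ).card)
    with h'' | h'' <;>
  first
  | exact k1 (by omega) (by omega) (by omega)
  | exact k2 (by omega) (by omega) (by omega)
  | exact k3 (by omega) (by omega) (by omega)
  | exact k4 (by omega) (by omega) (by omega)

theorem exists_connMatching_of_three_cover {V : Type*} [Fintype V] [LinearOrder V] {n : ℕ}
    (hn : 2 ≤ n) (hV : Fintype.card V + 2 = 4 * n) {G : Fin 3 → SimpleGraph V}
    (hc : ∀ u v, u ≠ v → ∃ i, (G i).Adj u v) : ∃ i M, ConnMatching (G i) M ∧ n ≤ M.card := by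
  by_contra! hM
  have perm : ∀ i j k : Fin 3, i ≠ j → i ≠ k → j ≠ k →
      ∀ u v, u ≠ v → (G i).Adj u v ∨ (G j).Adj u v ∨ (G k).Adj u v := by
    intro i j k hij hik hjk u v huv
    obtain ⟨l, hl⟩ := hc u v huv
    have : l = i ∨ l = j ∨ l = k := by omega
    rcases this with rfl | rfl | rfl <;> simp [hl]
  have all : ∀ i j k : Fin 3, i ≠ j → i ≠ k → j ≠ k →
      (IsAlmostSpanning n (G j) ↔ ¬ IsAlmostSpanning n (G k)) := by
    intro i j k hij hik hjk
    have h1 := false_of_two_almostSpanning hn hV (perm i j k hij hik hjk) (hM i) (hM j) (hM k)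
    have h2 := false_of_two_not_almostSpanning hn hV (perm i j k hij hik hjk) (hM i) (hM j) (hM k)
    tauto
  have h01 := all 2 0 1 (by decide) (by decide) (by decide)
  have h02 := all 1 0 2 (by decide) (by decide) (by decide)
  have h12 := all 0 1 2 (by decide) (by decide) (by decide)
  tauto

/-- In every 3-edge-coloring of `K_{4n-2}` there is a monochromatic connected
matching with at least `n` edges. -/
theorem stmt5 (n : ℕ) (hn : 1 ≤ n)
    (c : Sym2 (Fin (4 * n - 2)) → Fin 3) :
    ∃ i : Fin 3, ∃ M,
      ConnMatching (colorSub (⊤ : SimpleGraph (Fin (4 * n - 2))) c i) M ∧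
      n ≤ M.card := by
  have hadj : ∀ u v, u ≠ v →
      (colorSub (⊤ : SimpleGraph (Fin (4 * n - 2))) c (c s(u, v))).Adj u v := by
    intro u v huv
    simp [colorSub, huv]
  rcases hn.eq_or_lt with rfl | hn
  · refine ⟨c s(0, 1), {(0, 1)}, ⟨⟨?_, ?_⟩, ?_⟩, by simp⟩
    · simpa using hadj 0 1 (by decide)
    · simp
    · simp
  · exact exists_connMatching_of_three_cover hn (by simp; omega) fun u v huv => ⟨_, hadj u v huv⟩
end

section
/- Let G be a graph with Gallai–Edmonds decomposition (A, C, D), where A is the set of vertices of B (vertices covered by every maximum matching) having a neighbor outside B, C = B - A, and D = V(G) - B. Let G1, ..., Gk be the components of G[D]. Then every maximum matching M of G covers C, matches every vertex of A to vertices in distinct components of G[D], each Gi is factor-critical and M restricted to Gi is a near-perfect matching of Gi; moreover, for every nonempty S ⊆ A, the neighborhood N(S) intersects at least |S| + 1 of the components G1, ..., Gk. -/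
open SimpleGraph

variable {V : Type*}

/-- `M` is a maximum matching of `G`. -/
def IsMaxMatching [Fintype V] (G : SimpleGraph V) (M : Finset (V × V)) : Prop :=
  IsMatchingSet G M ∧ ∀ M', IsMatchingSet G M' → M'.card ≤ M.card

/-- `a` is matched to `d` by `M`. -/
def MatchedTo (M : Finset (V × V)) (a d : V) : Prop :=
  ∃ e ∈ M, (e.1 = a ∧ e.2 = d) ∨ (e.1 = d ∧ e.2 = a)

theorem zpow_apply_eq_iff_minimalPeriod_dvd (p : Equiv.Perm V) (x : V) (n : ℤ) :
    (p ^ n) x = x ↔ (Function.minimalPeriod p x : ℤ) ∣ n := by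
  have h := MulAction.zpow_smul_eq_iff_minimalPeriod_dvd (a := p) (b := x) (n := n)
  simpa using h

theorem zpow_apply_involution {f g : Equiv.Perm V} (hf : f * f = 1) (hg : g * g = 1) {x : V}
    (hx : f x = x) (n : ℤ) :
    f (((g * f) ^ n) x) = ((g * f) ^ (-n)) x ∧ g (((g * f) ^ n) x) = ((g * f) ^ (1 - n)) x := by
  have hfi : f⁻¹ = f := inv_eq_of_mul_eq_one_left hf
  have hgi : g⁻¹ = g := inv_eq_of_mul_eq_one_left hg
  have hinv : (g * f)⁻¹ = f * g := by rw [mul_inv_rev, hfi, hgi]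
  have h1 : f * (g * f) ^ n * f⁻¹ = (g * f) ^ (-n) := by
    rw [← conj_zpow, zpow_neg, ← inv_zpow, hinv, ← mul_assoc, mul_inv_cancel_right]
  have h2 : f (((g * f) ^ n) x) = ((g * f) ^ (-n)) x := by
    rw [← h1, hfi]; simp [hx]
  refine ⟨h2, ?_⟩
  have h3 : g (((g * f) ^ n) x) = (g * f) (f (((g * f) ^ n) x)) := by
    have := DFunLike.congr_fun hf (((g * f) ^ n) x)
    simp only [Equiv.Perm.mul_apply, Equiv.Perm.one_apply] at this ⊢
    rw [this]
  rw [h3, h2, sub_eq_add_neg, zpow_add, zpow_one]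
  rfl

theorem fixed_unique_of_sameCycle {f g : Equiv.Perm V} (hf : f * f = 1) (hg : g * g = 1)
    {x y z : V} (hx : f x = x) (hy : (g * f).SameCycle x y) (hz : (g * f).SameCycle x z)
    (hyx : y ≠ x) (hzx : z ≠ x) (hyf : f y = y ∨ g y = y) (hzf : f z = z ∨ g z = z) :
    y = z := by
  obtain ⟨n, rfl⟩ := hy
  obtain ⟨k, rfl⟩ := hz
  have key : ∀ i j : ℤ, ((g * f) ^ i) x = ((g * f) ^ j) x ↔
      (Function.minimalPeriod (g * f) x : ℤ) ∣ i - j := by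
    intro i j
    rw [← zpow_apply_eq_iff_minimalPeriod_dvd, sub_eq_neg_add, zpow_add, zpow_neg,
      Equiv.Perm.mul_apply, Equiv.Perm.inv_eq_iff_eq]
  have hn := zpow_apply_involution hf hg hx n
  have hk := zpow_apply_involution hf hg hx k
  have e0 : ∀ i : ℤ, ((g * f) ^ i) x ≠ x ↔ ¬ (Function.minimalPeriod (g * f) x : ℤ) ∣ i :=
    fun i => (zpow_apply_eq_iff_minimalPeriod_dvd _ _ _).not
  rw [hn.1, hn.2, key, key] at hyf
  rw [hk.1, hk.2, key, key] at hzf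
  rw [e0] at hyx hzx
  rw [key]
  generalize (Function.minimalPeriod (g * f) x : ℤ) = m at *
  have hodd : ∀ i j : ℤ, m ∣ 1 - i - i → m ∣ j + j → m ∣ j := by
    intro i j ⟨a, ha⟩ ⟨b, hb⟩
    exact ⟨j * a + i * b, by linear_combination j * ha + i * hb⟩
  rcases hyf with hy | hy <;> rcases hzf with hz | hz
  · obtain ⟨a, ha⟩ := hy
    obtain ⟨b, hb⟩ := hz
    rcases Int.even_or_odd' a with ⟨a', rfl | rfl⟩
    · exact absurd ⟨-a', by linarith⟩ hyx
    rcases Int.even_or_odd' b with ⟨b', rfl | rfl⟩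
    · exact absurd ⟨-b', by linarith⟩ hzx
    exact ⟨b' - a', by linarith⟩
  · exact absurd (hodd k n hz (dvd_neg.1 (by simpa [sub_eq_add_neg] using hy))) hyx
  · exact absurd (hodd n k hy (dvd_neg.1 (by simpa [sub_eq_add_neg] using hz))) hzx
  · exact hodd n _ hy (by have := dvd_sub hz hy; ring_nf at this ⊢; exact this)

theorem exists_alternating_component {f g : V → V} (hf : f.Involutive) (hg : g.Involutive) {x : V}
    (hx : f x = x) :
    ∃ K : Set V, x ∈ K ∧ (∀ v ∈ K, f v ∈ K) ∧ (∀ v ∈ K, g v ∈ K) ∧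
      ∀ y ∈ K, ∀ z ∈ K, y ≠ x → z ≠ x → (f y = y ∨ g y = y) → (f z = z ∨ g z = z) → y = z := by
  have hf2 : hf.toPerm * hf.toPerm = 1 := Equiv.ext hf
  have hg2 : hg.toPerm * hg.toPerm = 1 := Equiv.ext hg
  refine ⟨{v | (hg.toPerm * hf.toPerm).SameCycle x v}, Equiv.Perm.SameCycle.refl _ _, ?_, ?_, ?_⟩
  · rintro v ⟨n, rfl⟩
    exact ⟨-n, (zpow_apply_involution hf2 hg2 hx n).1.symm⟩
  · rintro v ⟨n, rfl⟩
    exact ⟨1 - n, (zpow_apply_involution hf2 hg2 hx n).2.symm⟩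
  · intro y hy z hz hyx hzx hyf hzf
    exact fixed_unique_of_sameCycle hf2 hg2 hx hy hz hyx hzx hyf hzf

theorem ncard_fixedPoints_piecewise [Finite V] (f g : V → V) (K : Set V)
    [DecidablePred (· ∈ K)] :
    (Function.fixedPoints (K.piecewise g f)).ncard +
        (Function.fixedPoints (K.piecewise f g)).ncard =
      (Function.fixedPoints f).ncard + (Function.fixedPoints g).ncard := by
  rw [← Set.ncard_union_add_ncard_inter, ← Set.ncard_union_add_ncard_inter (Function.fixedPoints f)]
  congr 2 <;> ext v <;>
    by_cases hv : v ∈ K <;> simp [Function.mem_fixedPoints, Function.IsFixedPt, hv] <;> tauto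

theorem Function.Involutive.ncard_fixedPoints_modEq [Finite V] {f : V → V} (hf : f.Involutive) :
    (Function.fixedPoints f).ncard ≡ Nat.card V [MOD 2] := by
  have := Fintype.ofFinite V
  classical
  have hf2 : (show Function.End V from f) ^ 2 ^ 1 = 1 := funext hf
  have h := Equiv.Perm.card_fixedPoints_modEq hf2
  rw [← Nat.card_eq_fintype_card, ← Nat.card_eq_fintype_card, Nat.card_coe_set_eq] at h
  exact h.symm

/-- An involution encoding a matching of `G`: each vertex is sent to its partner, and the
uncovered vertices are fixed. -/
def IsPartnerMap (G : SimpleGraph V) (f : V → V) : Prop :=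
  f.Involutive ∧ ∀ v, f v ≠ v → G.Adj v (f v)

/-- A partner map with the fewest possible uncovered vertices. -/
def IsMaxPartnerMap (G : SimpleGraph V) (f : V → V) : Prop :=
  IsPartnerMap G f ∧
    ∀ g, IsPartnerMap G g → (Function.fixedPoints f).ncard ≤ (Function.fixedPoints g).ncard

/-- The vertices missed by some maximum matching. -/
def inessential (G : SimpleGraph V) : Set V :=
  {v | ∃ f, IsMaxPartnerMap G f ∧ f v = v}

/-- The graph `G` with all edges meeting `S` deleted. -/
def isolate (G : SimpleGraph V) (S : Set V) : SimpleGraph V where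
  Adj u v := G.Adj u v ∧ u ∉ S ∧ v ∉ S
  symm := ⟨fun _ _ h => ⟨h.1.symm, h.2.2, h.2.1⟩⟩
  loopless := ⟨fun _ h => h.1.ne rfl⟩

theorem isolate_isolate (G : SimpleGraph V) (S T : Set V) :
    isolate (isolate G S) T = isolate G (T ∪ S) := by
  ext u v
  simp only [isolate, Set.mem_union]
  tauto

theorem isPartnerMap_isolate {G : SimpleGraph V} {S : Set V} {f : V → V} :
    IsPartnerMap (isolate G S) f ↔ IsPartnerMap G f ∧ ∀ s ∈ S, f s = s := by
  constructor
  · intro h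
    exact ⟨⟨h.1, fun v hv => (h.2 v hv).1⟩, fun s hs => by_contra fun hne => (h.2 s hne).2.1 hs⟩
  · rintro ⟨h, hS⟩
    refine ⟨h.1, fun v hv => ⟨h.2 v hv, fun hvS => hv (hS v hvS), fun hvS => hv ?_⟩⟩
    rw [← hS _ hvS, h.1]

theorem IsPartnerMap.piecewise {G : SimpleGraph V} {f g : V → V} (hf : IsPartnerMap G f)
    (hg : IsPartnerMap G g) {K : Set V} [DecidablePred (· ∈ K)] (hfK : ∀ v ∈ K, f v ∈ K)
    (hgK : ∀ v ∈ K, g v ∈ K) : IsPartnerMap G (K.piecewise g f) := by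
  have hfK' : ∀ v ∉ K, f v ∉ K := fun v hv h => hv (hf.1 v ▸ hfK _ h)
  constructor
  · intro v
    by_cases hv : v ∈ K
    · simp [hv, hgK v hv, hg.1 v]
    · simp [hv, hfK' v hv, hf.1 v]
  · intro v
    by_cases hv : v ∈ K
    · simpa [hv] using hg.2 v
    · simpa [hv] using hf.2 v

open Classical in
/-- Remove the matching edge at `a`, if there is one. -/
noncomputable def detach (f : V → V) (a : V) : V → V :=
  fun v => if v = a ∨ v = f a then v else f v

theorem IsPartnerMap.isolate_detach {G : SimpleGraph V} {f : V → V} (hf : IsPartnerMap G f)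
    (a : V) :
    IsPartnerMap (isolate G {a}) (detach f a) := by
  rw [isPartnerMap_isolate]
  refine ⟨⟨fun v => ?_, fun v => ?_⟩, ?_⟩
  · by_cases hv : v = a ∨ v = f a
    · simp [detach, hv]
    · have h1 : f v ≠ a := fun h => hv (Or.inr (by rw [← h, hf.1]))
      have h2 : f v ≠ f a := fun h => hv (Or.inl (hf.1.injective h))
      simp [detach, hv, h1, h2, hf.1 v]
  · by_cases hv : v = a ∨ v = f a
    · simp [detach, hv]
    · simpa [detach, hv] using hf.2 v
  · simp [detach]

theorem ncard_fixedPoints_detach [Finite V] {f : V → V} (hf : f.Involutive) {a : V}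
    (ha : f a ≠ a) :
    (Function.fixedPoints (detach f a)).ncard = (Function.fixedPoints f).ncard + 2 := by
  have h : Function.fixedPoints (detach f a) =
      insert a (insert (f a) (Function.fixedPoints f)) := by
    ext v
    by_cases hv : v = a ∨ v = f a
    · simp [detach, Function.IsFixedPt, hv, ← or_assoc]
    · simp [detach, Function.IsFixedPt, hv, ← or_assoc]
  rw [h, Set.ncard_insert_of_notMem, Set.ncard_insert_of_notMem]
  · simpa [Function.IsFixedPt, hf a] using ha.symm
  · simpa [Function.IsFixedPt] using ⟨ha.symm, ha⟩

/-- Adding an edge between two uncovered vertices. -/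
theorem IsPartnerMap.exists_attach [Finite V] {G : SimpleGraph V} {f : V → V}
    (hf : IsPartnerMap G f) {a d : V} (ha : f a = a) (hd : f d = d) (had : G.Adj a d) :
    ∃ g, IsPartnerMap G g ∧
      (Function.fixedPoints g).ncard + 2 = (Function.fixedPoints f).ncard ∧
      ∀ v, v ≠ a → v ≠ d → g v = f v := by
  classical
  have hne := had.ne
  have hg : IsPartnerMap G (fun v => if v = a then d else if v = d then a else f v) := by
    constructor
    · intro v
      by_cases h1 : v = a
      · simp [h1, hne.symm]
      by_cases h2 : v = d
      · simp [h2]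
      have h3 : f v ≠ a := fun h => h1 (hf.1.injective (h.trans ha.symm))
      have h4 : f v ≠ d := fun h => h2 (hf.1.injective (h.trans hd.symm))
      simp [h1, h2, h3, h4, hf.1 v]
    · intro v
      by_cases h1 : v = a
      · simp [h1, had]
      by_cases h2 : v = d
      · simp [h2, hne.symm, had.symm]
      simpa [h1, h2] using hf.2 v
  refine ⟨_, hg, ?_, fun v h1 h2 => by simp [h1, h2]⟩
  rw [← ncard_fixedPoints_detach hg.1 (a := a) (by simpa using hne.symm)]
  congr 2
  ext v
  by_cases h1 : v = a
  · simp [detach, h1, ha]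
  by_cases h2 : v = d
  · simp [detach, h2, hd]
  simp [detach, h1, h2]

theorem IsMaxPartnerMap.not_adj [Finite V] {G : SimpleGraph V} {f : V → V}
    (hf : IsMaxPartnerMap G f) {u v : V} (hu : f u = u) (hv : f v = v) : ¬ G.Adj u v := by
  intro huv
  obtain ⟨g, hg, hcard, -⟩ := hf.1.exists_attach hu hv huv
  have := hf.2 g hg
  omega

/-- If no maximum matching misses both `u` and `t`, nor both `t` and `v`, then none misses both
`u` and `v`, provided some maximum matching misses `t`. -/
theorem eq_of_missed_trans [Finite V] {G : SimpleGraph V} {u t v : V} (ht : t ∈ inessential G)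
    (hut : ∀ f, IsMaxPartnerMap G f → f u = u → f t = t → u = t)
    (htv : ∀ f, IsMaxPartnerMap G f → f t = t → f v = v → t = v)
    {f : V → V} (hf : IsMaxPartnerMap G f) (hu : f u = u) (hv : f v = v) : u = v := by
  classical
  obtain ⟨g, hg, hgt⟩ := ht
  obtain ⟨K, htK, hgK, hfK, huniq⟩ := exists_alternating_component hg.1.1 hf.1.1 hgt
  have hmax : IsMaxPartnerMap G (K.piecewise g f) := by
    refine ⟨hf.1.piecewise hg.1 hfK hgK, fun p hp => ?_⟩
    have h1 := ncard_fixedPoints_piecewise f g K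
    have h2 := hg.2 _ (hg.1.piecewise hf.1 hgK hfK)
    have h3 := hf.2 p hp
    omega
  have ht' : K.piecewise g f t = t := by simp [htK, hgt]
  by_cases huK : u ∈ K
  · by_cases hvK : v ∈ K
    · by_cases hu' : u = t
      · subst hu'; exact htv f hf hu hv
      by_cases hv' : v = t
      · subst hv'; exact hut f hf hu hv
      exact huniq u huK v hvK hu' hv' (Or.inr hu) (Or.inr hv)
    · have := htv _ hmax ht' (by simp [hvK, hv])
      exact absurd (this ▸ htK) hvK
  · have := hut _ hmax (by simp [huK, hu]) ht'
    exact absurd (this ▸ htK) huK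

/-- Gallai's lemma: a maximum matching misses at most one vertex of a connected set of
inessential vertices. -/
theorem IsMaxPartnerMap.eq_of_reachable [Finite V] {G H : SimpleGraph V}
    (hH : ∀ u v, H.Adj u v → G.Adj u v ∧ v ∈ inessential G)
    {f : V → V} (hf : IsMaxPartnerMap G f) {u v : V} (huv : H.Reachable u v)
    (hu : f u = u) (hv : f v = v) : u = v := by
  rw [SimpleGraph.reachable_iff_reflTransGen] at huv
  induction huv generalizing f with
  | refl => rfl
  | @tail t w hut htw ih =>
    have htw' := hH _ _ htw
    have ht : t ∈ inessential G := (hH _ _ htw.symm).2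
    exact eq_of_missed_trans ht (fun f hf hu ht => ih hf hu ht)
      (fun f hf ht hw => absurd htw'.1 (hf.not_adj ht hw)) hf hu hv

section Stability

variable [Finite V] {G : SimpleGraph V}

theorem IsMaxPartnerMap.add_two_le {f g : V → V} {a : V} (hf : IsMaxPartnerMap G f)
    (ha : a ∉ inessential G) (hg : IsPartnerMap G g) (hga : g a = a) :
    (Function.fixedPoints f).ncard + 2 ≤ (Function.fixedPoints g).ncard := by
  have hlt : (Function.fixedPoints f).ncard < (Function.fixedPoints g).ncard := by
    by_contra h
    exact ha ⟨g, ⟨hg, fun p hp => (not_lt.1 h).trans (hf.2 p hp)⟩, hga⟩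
  have hmod := hf.1.1.ncard_fixedPoints_modEq.trans hg.1.ncard_fixedPoints_modEq.symm
  unfold Nat.ModEq at hmod
  omega

theorem IsMaxPartnerMap.isolate_detach {f : V → V} {a : V} (hf : IsMaxPartnerMap G f)
    (ha : a ∉ inessential G) : IsMaxPartnerMap (isolate G {a}) (detach f a) := by
  refine ⟨hf.1.isolate_detach a, fun g hg => ?_⟩
  rw [isPartnerMap_isolate] at hg
  rw [ncard_fixedPoints_detach hf.1.1 fun h => ha ⟨f, hf, h⟩]
  exact hf.add_two_le ha hg.1 (hg.2 a rfl)

/-- The stability lemma: deleting an essential neighbour `a` of an inessential vertex creates no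
inessential vertex other than `a`. -/
theorem inessential_isolate_singleton {a d : V} (ha : a ∉ inessential G)
    (hd : d ∈ inessential G) (had : G.Adj a d) :
    inessential (isolate G {a}) = insert a (inessential G) := by
  classical
  obtain ⟨f, hf, hfd⟩ := hd
  ext x
  constructor
  · rintro ⟨g, hg, hgx⟩
    by_cases hxa : x = a
    · exact Or.inl hxa
    by_cases hxd : x = d
    · subst hxd; exact Or.inr ⟨f, hf, hfd⟩
    have hle : (Function.fixedPoints g).ncard ≤ (Function.fixedPoints f).ncard + 2 := by
      rw [← ncard_fixedPoints_detach hf.1.1 fun h => ha ⟨f, hf, h⟩]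
      exact hg.2 _ (hf.1.isolate_detach a)
    have hg' := isPartnerMap_isolate.1 hg.1
    have hga : g a = a := hg'.2 a rfl
    obtain ⟨K, hxK, hgK, hfK, huniq⟩ := exists_alternating_component hg'.1.1 hf.1.1 hgx
    have hcard := ncard_fixedPoints_piecewise f g K
    have hP := hf.1.piecewise hg'.1 hfK hgK
    have hQ := hg'.1.piecewise hf.1 hgK hfK
    have hPx : K.piecewise g f x = x := by simp [hxK, hgx]
    right
    by_cases haK : a ∈ K
    · have hdK : d ∉ K := fun hdK => had.ne
        (huniq a haK d hdK (Ne.symm hxa) (Ne.symm hxd) (Or.inl hga) (Or.inr hfd))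
      obtain ⟨h, hh, hhcard, hheq⟩ := hP.exists_attach (a := a) (d := d)
        (by simp [haK, hga]) (by simp [hdK, hfd]) had
      refine ⟨h, ⟨hh, fun p hp => ?_⟩, (hheq x hxa hxd).trans hPx⟩
      have h1 := hf.2 p hp
      have h2 := hf.2 _ hQ
      omega
    · refine ⟨_, ⟨hP, fun p hp => ?_⟩, hPx⟩
      have h1 := hf.2 p hp
      have h2 := hg.2 (K.piecewise f g)
        (isPartnerMap_isolate.2 ⟨hQ, by simp [haK, hga]⟩)
      omega
  · intro hx
    rcases hx with rfl | ⟨g, hg, hgx⟩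
    · exact ⟨detach f x, hf.isolate_detach ha, by simp [detach]⟩
    · refine ⟨detach g a, hg.isolate_detach ha, ?_⟩
      unfold detach
      split_ifs <;> simp [hgx]

/-- The stability lemma for a set of essential neighbours of inessential vertices, together with
the effect of the deletion on maximum matchings. -/
theorem inessential_isolate {S : Set V}
    (hS : ∀ s ∈ S, s ∉ inessential G ∧ ∃ d ∈ inessential G, G.Adj s d) :
    inessential (isolate G S) = S ∪ inessential G ∧
      ∀ f, IsMaxPartnerMap G f → ∃ f', IsMaxPartnerMap (isolate G S) f' ∧
        (∀ v, f' v = v ∨ f' v = f v) ∧ ∀ v, f v ∈ S → f' v = v := by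
  induction S, S.toFinite using Set.Finite.induction_on with
  | empty =>
    have h0 : isolate G ∅ = G := by ext; simp [isolate]
    rw [h0]
    exact ⟨by simp, fun f hf => ⟨f, hf, fun v => Or.inr rfl, by simp⟩⟩
  | @insert a S haS _ ih =>
    obtain ⟨ih1, ih2⟩ := ih fun s hs => hS s (Or.inr hs)
    obtain ⟨ha, d, hd, had⟩ := hS a (Or.inl rfl)
    have ha' : a ∉ inessential (isolate G S) := by simp [ih1, haS, ha]
    have hdS : d ∉ S := fun h => (hS d (Or.inr h)).1 hd
    have hiso : isolate G (insert a S) = isolate (isolate G S) {a} := by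
      rw [isolate_isolate, Set.singleton_union]
    rw [hiso]
    refine ⟨?_, fun f hf => ?_⟩
    · rw [inessential_isolate_singleton ha' (d := d) (by simp [ih1, hd]) ⟨had, haS, hdS⟩, ih1,
        Set.insert_union]
    · obtain ⟨f', hf', h1, h2⟩ := ih2 f hf
      refine ⟨detach f' a, hf'.isolate_detach ha', fun v => ?_, fun v hv => ?_⟩
      · unfold detach
        split_ifs
        · exact Or.inl rfl
        · exact h1 v
      · unfold detach
        split_ifs with h
        · rfl
        · rcases hv with hv | hv
          · rcases h1 v with h3 | h3
            · exact h3
            · exact absurd (Or.inr (by rw [← hv, ← h3, hf'.1.1])) h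
          · exact h2 v hv

end Stability

/-- The essential vertices adjacent to an inessential vertex. -/
def essentialBoundary (G : SimpleGraph V) : Set V :=
  {a | a ∉ inessential G ∧ ∃ d ∈ inessential G, G.Adj a d}

/-- The subgraph spanned by the edges between inessential vertices. -/
def inessentialGraph (G : SimpleGraph V) : SimpleGraph V :=
  isolate G (inessential G)ᶜ

theorem inessentialGraph_adj {G : SimpleGraph V} {u v : V} :
    (inessentialGraph G).Adj u v ↔ G.Adj u v ∧ u ∈ inessential G ∧ v ∈ inessential G := by
  simp [inessentialGraph, isolate]

theorem inessentialGraph_le (G : SimpleGraph V) : inessentialGraph G ≤ G :=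
  fun _ _ h => h.1

theorem mem_inessential_of_reachable {G : SimpleGraph V} {d v : V} (hd : d ∈ inessential G)
    (h : (inessentialGraph G).Reachable d v) : v ∈ inessential G := by
  rw [SimpleGraph.reachable_iff_reflTransGen] at h
  induction h with
  | refl => exact hd
  | tail _ h _ => exact (inessentialGraph_adj.1 h).2.2

theorem IsPartnerMap.mono {G H : SimpleGraph V} (hGH : G ≤ H) {f : V → V}
    (hf : IsPartnerMap G f) : IsPartnerMap H f :=
  ⟨hf.1, fun v hv => hGH (hf.2 v hv)⟩

open Classical in
/-- Keep only the matching edges lying in `H`. -/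
noncomputable def restrictTo (H : SimpleGraph V) (f : V → V) : V → V :=
  fun v => if H.Adj v (f v) then f v else v

theorem isPartnerMap_restrictTo {f : V → V} (hf : f.Involutive) (H : SimpleGraph V) :
    IsPartnerMap H (restrictTo H f) := by
  constructor
  · intro v
    by_cases h : H.Adj v (f v)
    · simp [restrictTo, h, hf v, h.symm]
    · simp [restrictTo, h]
  · intro v
    by_cases h : H.Adj v (f v) <;> simp [restrictTo, h]

theorem restrictTo_ne {f : V → V} {H : SimpleGraph V} {v : V} (h : H.Adj v (f v)) :
    restrictTo H f v ≠ v := by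
  simpa [restrictTo, h] using h.ne.symm

theorem IsMaxPartnerMap.inessentialGraph_adj_apply {G : SimpleGraph V} {f : V → V}
    (hf : IsMaxPartnerMap G f) {v : V} (hv : v ∈ inessential G) (h1 : f v ≠ v)
    (h2 : f v ∉ essentialBoundary G) : (inessentialGraph G).Adj v (f v) := by
  have hadj := hf.1.2 v h1
  refine inessentialGraph_adj.2 ⟨hadj, hv, ?_⟩
  by_contra h
  exact h2 ⟨h, v, hv, hadj.symm⟩

section Structure

variable [Finite V] {G : SimpleGraph V} {f : V → V}

theorem IsMaxPartnerMap.eq_of_reachable_of_unmatched (hf : IsMaxPartnerMap G f) {u v : V}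
    (huv : (inessentialGraph G).Reachable u v)
    (hu : f u = u ∨ f u ∈ essentialBoundary G) (hv : f v = v ∨ f v ∈ essentialBoundary G) :
    u = v := by
  obtain ⟨h1, h2⟩ := inessential_isolate (G := G) (S := essentialBoundary G) fun _ hs => hs
  obtain ⟨f', hf', h3, h4⟩ := h2 f hf
  have key : ∀ w, (f w = w ∨ f w ∈ essentialBoundary G) → f' w = w := by
    rintro w (hw | hw)
    · exact (h3 w).elim id fun h => h.trans hw
    · exact h4 w hw
  refine hf'.eq_of_reachable (H := inessentialGraph G) ?_ huv (key u hu) (key v hv)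
  intro x y hxy
  obtain ⟨hadj, hx, hy⟩ := inessentialGraph_adj.1 hxy
  exact ⟨⟨hadj, fun h => h.1 hx, fun h => h.1 hy⟩, h1 ▸ Or.inr hy⟩

theorem IsMaxPartnerMap.apply_mem_inessential (hf : IsMaxPartnerMap G f) {a : V}
    (ha : a ∈ essentialBoundary G) : f a ∈ inessential G := by
  obtain ⟨hae, d, hd, had⟩ := ha
  have h : f a ∈ inessential (isolate G {a}) :=
    ⟨_, hf.isolate_detach hae, by simp [detach]⟩
  rw [inessential_isolate_singleton hae hd had] at h
  exact h.resolve_left fun h => hae ⟨f, hf, h⟩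

theorem IsMaxPartnerMap.inessentialGraph_adj_of_missed (hf : IsMaxPartnerMap G f) {d u : V}
    (hd : f d = d) (hdu : (inessentialGraph G).Reachable d u) (hne : u ≠ d) :
    (inessentialGraph G).Adj u (f u) := by
  have hu := mem_inessential_of_reachable ⟨f, hf, hd⟩ hdu
  have key := fun h => hne (hf.eq_of_reachable_of_unmatched hdu (Or.inl hd) h).symm
  exact hf.inessentialGraph_adj_apply hu (fun h => key (Or.inl h)) fun h => key (Or.inr h)

theorem exists_missed_of_isPartnerMap_inessentialGraph {p : V → V}
    (hp : IsPartnerMap (inessentialGraph G) p) {d : V} (hd : d ∈ inessential G) :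
    ∃ u, (inessentialGraph G).Reachable d u ∧ p u = u := by
  classical
  by_contra! hcon
  obtain ⟨f, hf, hfd⟩ := hd
  let K : Set V := {u | (inessentialGraph G).Reachable d u}
  have hpK : ∀ v ∈ K, p v ∈ K := fun v hv => hv.trans (hp.2 v (hcon v hv)).reachable
  have hfK : ∀ v ∈ K, f v ∈ K := by
    intro v hv
    by_cases h : v = d
    · rw [h, hfd]
      exact .rfl
    · exact hv.trans (hf.inessentialGraph_adj_of_missed hfd hv h).reachable
  have hmax := hf.2 _ (hf.1.piecewise (hp.mono (inessentialGraph_le G)) hfK hpK)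
  refine hmax.not_gt (Set.ncard_lt_ncard ⟨fun v hv => ?_, fun h => ?_⟩)
  · by_cases hvK : v ∈ K
    · exact absurd (by simpa [Function.IsFixedPt, hvK] using hv) (hcon v hvK)
    · simpa [Function.IsFixedPt, hvK] using hv
  · have hdK : d ∈ K := SimpleGraph.Reachable.rfl
    exact hcon d hdK (by simpa [Function.IsFixedPt, hdK] using h hfd)

theorem IsMaxPartnerMap.existsUnique_unmatched (hf : IsMaxPartnerMap G f) {d : V}
    (hd : d ∈ inessential G) :
    ∃! v, (inessentialGraph G).Reachable d v ∧
      (f v = v ∨ ¬ (inessentialGraph G).Reachable d (f v)) := by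
  obtain ⟨u, hu, hpu⟩ := exists_missed_of_isPartnerMap_inessentialGraph
    (isPartnerMap_restrictTo hf.1.1 (inessentialGraph G)) hd
  have key : ∀ v, (inessentialGraph G).Reachable d v →
      (f v = v ∨ ¬ (inessentialGraph G).Reachable d (f v)) →
      f v = v ∨ f v ∈ essentialBoundary G := by
    intro v hv h
    by_contra! hcon
    have hadj := hf.inessentialGraph_adj_apply (mem_inessential_of_reachable hd hv) hcon.1 hcon.2
    exact h.elim hcon.1 fun h => h (hv.trans hadj.reachable)
  have hu' : f u = u ∨ ¬ (inessentialGraph G).Reachable d (f u) := by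
    by_contra! hcon
    refine restrictTo_ne (inessentialGraph_adj.2 ⟨hf.1.2 u hcon.1, ?_, ?_⟩) hpu
    · exact mem_inessential_of_reachable hd hu
    · exact mem_inessential_of_reachable hd hcon.2
  refine ⟨u, ⟨hu, hu'⟩, fun v hv => ?_⟩
  exact hf.eq_of_reachable_of_unmatched (hv.1.symm.trans hu) (key v hv.1 hv.2) (key u hu hu')

theorem exists_transversal_of_subset_essentialBoundary {S : Finset V}
    (hS : ↑S ⊆ essentialBoundary G) (hne : S.Nonempty) :
    ∃ T : Finset V, T.card = S.card + 1 ∧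
      (∀ t ∈ T, t ∈ inessential G ∧ ∃ a ∈ S, G.Adj a t) ∧
      ∀ t ∈ T, ∀ t' ∈ T, t ≠ t' → ¬ (inessentialGraph G).Reachable t t' := by
  classical
  obtain ⟨s, hs⟩ := hne
  obtain ⟨-, d, ⟨f, hf, hfd⟩, hsd⟩ := hS hs
  have hT : ∀ t ∈ insert d (S.image f), f t = t ∨ f t ∈ essentialBoundary G := by
    intro t ht
    rcases Finset.mem_insert.1 ht with rfl | ht
    · exact Or.inl hfd
    · obtain ⟨a, ha, rfl⟩ := Finset.mem_image.1 ht
      exact Or.inr (by rw [hf.1.1 a]; exact hS ha)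
  refine ⟨insert d (S.image f), ?_, fun t ht => ?_, fun t ht t' ht' hne h => ?_⟩
  · rw [Finset.card_insert_of_notMem, Finset.card_image_of_injective _ hf.1.1.injective]
    intro h
    obtain ⟨a, ha, rfl⟩ := Finset.mem_image.1 h
    rw [hf.1.1 a] at hfd
    exact (hS ha).1 ⟨f, hf, hfd.symm⟩
  · rcases Finset.mem_insert.1 ht with rfl | ht
    · exact ⟨⟨f, hf, hfd⟩, s, hs, hsd⟩
    · obtain ⟨a, ha, rfl⟩ := Finset.mem_image.1 ht
      exact ⟨hf.apply_mem_inessential (hS ha), a, ha,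
        hf.1.2 a fun h => (hS ha).1 ⟨f, hf, h⟩⟩
  · exact hne (hf.eq_of_reachable_of_unmatched h (hT t ht) (hT t' ht'))

end Structure

/-- `f` sends each vertex covered by `M` to its partner and fixes the other vertices. -/
def Encodes (M : Finset (V × V)) (f : V → V) : Prop :=
  ∀ v w, MatchedTo M v w ↔ f v = w ∧ v ≠ w

theorem covers_iff_exists_matchedTo {M : Finset (V × V)} {v : V} :
    Covers M v ↔ ∃ w, MatchedTo M v w := by
  constructor
  · rintro ⟨e, he, rfl | rfl⟩
    · exact ⟨e.2, e, he, Or.inl ⟨rfl, rfl⟩⟩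
    · exact ⟨e.1, e, he, Or.inr ⟨rfl, rfl⟩⟩
  · rintro ⟨w, e, he, h | h⟩
    · exact ⟨e, he, Or.inl h.1.symm⟩
    · exact ⟨e, he, Or.inr h.2.symm⟩

theorem Encodes.covers_iff {M : Finset (V × V)} {f : V → V} (h : Encodes M f) {v : V} :
    Covers M v ↔ f v ≠ v := by
  rw [covers_iff_exists_matchedTo]
  constructor
  · rintro ⟨w, hw⟩
    obtain ⟨rfl, hne⟩ := (h v w).1 hw
    exact hne.symm
  · intro hv
    exact ⟨f v, (h v (f v)).2 ⟨rfl, hv.symm⟩⟩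

theorem MatchedTo.symm {M : Finset (V × V)} {v w : V} (h : MatchedTo M v w) : MatchedTo M w v :=
  let ⟨e, he, h⟩ := h
  ⟨e, he, h.symm⟩

theorem IsMatchingSet.adj {G : SimpleGraph V} {M : Finset (V × V)} (hM : IsMatchingSet G M)
    {v w : V} (h : MatchedTo M v w) : G.Adj v w := by
  obtain ⟨e, he, ⟨rfl, rfl⟩ | ⟨rfl, rfl⟩⟩ := h
  · exact hM.1 e he
  · exact (hM.1 e he).symm

theorem IsMatchingSet.matchedTo_unique {G : SimpleGraph V} {M : Finset (V × V)}
    (hM : IsMatchingSet G M) {v w w' : V} (h : MatchedTo M v w) (h' : MatchedTo M v w') :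
    w = w' := by
  obtain ⟨e, he, hvw⟩ := h
  obtain ⟨e', he', hvw'⟩ := h'
  by_cases hee : e = e'
  · subst hee
    have := (hM.1 e he).ne
    grind
  · have := hM.2 e he e' he' hee
    grind

theorem IsMatchingSet.exists_encodes {G : SimpleGraph V} {M : Finset (V × V)}
    (hM : IsMatchingSet G M) : ∃ f, IsPartnerMap G f ∧ Encodes M f := by
  classical
  have hex : ∀ v, ∃ w, MatchedTo M v w ∨ (w = v ∧ ¬ Covers M v) := by
    intro v
    by_cases h : Covers M v
    · obtain ⟨w, hw⟩ := covers_iff_exists_matchedTo.1 h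
      exact ⟨w, Or.inl hw⟩
    · exact ⟨v, Or.inr ⟨rfl, h⟩⟩
  choose f hf using hex
  have henc : Encodes M f := by
    intro v w
    constructor
    · intro h
      refine ⟨?_, (hM.adj h).ne⟩
      rcases hf v with h' | h'
      · exact hM.matchedTo_unique h' h
      · exact absurd (covers_iff_exists_matchedTo.2 ⟨w, h⟩) h'.2
    · rintro ⟨rfl, hne⟩
      exact (hf v).resolve_right fun h => hne h.1.symm
  refine ⟨f, ⟨fun v => ?_, fun v hv => hM.adj ((henc v _).2 ⟨rfl, hv.symm⟩)⟩, henc⟩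
  by_cases hv : f v = v
  · rw [hv, hv]
  · exact ((henc _ _).1 ((henc v _).2 ⟨rfl, Ne.symm hv⟩).symm).1

theorem IsPartnerMap.exists_encodes [Finite V] {G : SimpleGraph V} {f : V → V}
    (hf : IsPartnerMap G f) : ∃ M, IsMatchingSet G M ∧ Encodes M f := by
  classical
  have := Fintype.ofFinite V
  let : LinearOrder V := LinearOrder.lift' (Fintype.equivFin V) (Fintype.equivFin V).injective
  have hinv := hf.1
  refine ⟨Finset.univ.filter fun e : V × V => f e.1 = e.2 ∧ e.1 < e.2, ⟨?_, ?_⟩, ?_⟩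
  · rintro ⟨u, v⟩ he
    simp only [Finset.mem_filter, Finset.mem_univ, true_and] at he
    obtain ⟨rfl, hlt⟩ := he
    exact hf.2 u hlt.ne'
  · rintro ⟨u, v⟩ he ⟨u', v'⟩ he' hne
    simp only [Finset.mem_filter, Finset.mem_univ, true_and] at he he'
    obtain ⟨rfl, hlt⟩ := he
    obtain ⟨rfl, hlt'⟩ := he'
    have hu : u ≠ u' := fun h => hne (by rw [h])
    refine ⟨hu, ?_, ?_, fun h => hu (hinv.injective h)⟩
    · rintro rfl
      rw [hinv] at hlt
      exact lt_asymm hlt hlt'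
    · rintro rfl
      rw [hinv] at hlt'
      exact lt_asymm hlt hlt'
  · intro v w
    simp only [MatchedTo, Finset.mem_filter, Finset.mem_univ, true_and]
    constructor
    · rintro ⟨⟨a, b⟩, ⟨hab, hlt⟩, ⟨rfl, rfl⟩ | ⟨rfl, rfl⟩⟩ <;> obtain rfl : f a = b := hab
      · exact ⟨rfl, hlt.ne⟩
      · exact ⟨hinv _, hlt.ne'⟩
    · rintro ⟨rfl, hne⟩
      rcases lt_or_gt_of_ne hne with h | h
      · exact ⟨(v, f v), ⟨rfl, h⟩, Or.inl ⟨rfl, rfl⟩⟩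
      · exact ⟨(f v, v), ⟨hinv v, h⟩, Or.inr ⟨rfl, rfl⟩⟩

theorem IsMatchingSet.ncard_covers {G : SimpleGraph V} {M : Finset (V × V)}
    (hM : IsMatchingSet G M) : {v | Covers M v}.ncard = 2 * M.card := by
  have h : {v | Covers M v} = Prod.fst '' (M : Set (V × V)) ∪ Prod.snd '' (M : Set (V × V)) := by
    ext v
    simp only [Covers, Set.mem_ofPred_eq, Set.mem_union, Set.mem_image, Finset.mem_coe]
    grind
  rw [h, Set.ncard_union_eq, Set.InjOn.ncard_image, Set.InjOn.ncard_image,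
    Set.ncard_coe_finset, two_mul]
  · intro e he e' he' hee
    by_contra hne
    exact (hM.2 e he e' he' hne).2.2.2 hee
  · intro e he e' he' hee
    by_contra hne
    exact (hM.2 e he e' he' hne).1 hee
  · rw [Set.disjoint_left]
    rintro _ ⟨e, he, rfl⟩ ⟨e', he', hee⟩
    by_cases hne : e = e'
    · subst hne
      exact (hM.1 e he).ne hee.symm
    · exact (hM.2 e he e' he' hne).2.1 hee.symm

theorem Encodes.ncard_fixedPoints_add [Finite V] {G : SimpleGraph V} {M : Finset (V × V)}
    {f : V → V} (h : Encodes M f) (hM : IsMatchingSet G M) :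
    (Function.fixedPoints f).ncard + 2 * M.card = Nat.card V := by
  rw [← hM.ncard_covers, ← Set.ncard_add_ncard_compl (Function.fixedPoints f)]
  congr 2
  ext v
  exact h.covers_iff

section Maximum

variable [Fintype V] {G : SimpleGraph V}

theorem IsMaxMatching.exists_encodes {M : Finset (V × V)} (hM : IsMaxMatching G M) :
    ∃ f, IsMaxPartnerMap G f ∧ Encodes M f := by
  obtain ⟨f, hf, hMf⟩ := hM.1.exists_encodes
  refine ⟨f, ⟨hf, fun g hg => ?_⟩, hMf⟩
  obtain ⟨N, hN, hNg⟩ := hg.exists_encodes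
  have h1 := hMf.ncard_fixedPoints_add hM.1
  have h2 := hNg.ncard_fixedPoints_add hN
  have h3 := hM.2 N hN
  omega

theorem IsMaxPartnerMap.exists_encodes {f : V → V} (hf : IsMaxPartnerMap G f) :
    ∃ M, IsMaxMatching G M ∧ Encodes M f := by
  obtain ⟨M, hM, hMf⟩ := hf.1.exists_encodes
  refine ⟨M, ⟨hM, fun N hN => ?_⟩, hMf⟩
  obtain ⟨g, hg, hNg⟩ := hN.exists_encodes
  have h1 := hMf.ncard_fixedPoints_add hM
  have h2 := hNg.ncard_fixedPoints_add hN
  have h3 := hf.2 g hg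
  omega

theorem mem_inessential_iff {v : V} :
    v ∈ inessential G ↔ ¬ ∀ M, IsMaxMatching G M → Covers M v := by
  push Not
  constructor
  · rintro ⟨f, hf, hv⟩
    obtain ⟨M, hM, hMf⟩ := hf.exists_encodes
    exact ⟨M, hM, fun h => hMf.covers_iff.1 h hv⟩
  · rintro ⟨M, hM, hv⟩
    obtain ⟨f, hf, hMf⟩ := hM.exists_encodes
    exact ⟨f, hf, by_contra fun h => hv (hMf.covers_iff.2 h)⟩

end Maximum

/-- The Gallai–Edmonds structure theorem. Here `B` is the set of vertices
covered by every maximum matching, `A ⊆ B` are those with a neighbor outside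
`B`, `C = B \ A`, `D = V \ B`, and `GD` is the subgraph of `G` induced by `D`
(so for `d ∈ D`, the set `{v | GD.Reachable d v}` is the component of `d` in
`G[D]`). Every maximum matching `M` covers `C`, matches each vertex of `A`
into `D`, with distinct vertices of `A` matched into distinct components of
`G[D]`; each component of `G[D]` is factor-critical and `M` restricted to it
is near-perfect; and the neighborhood of any nonempty `S ⊆ A` meets at least
`|S| + 1` components of `G[D]`. -/
theorem stmt8 {V : Type*} [Fintype V] (G : SimpleGraph V)
    (B A C D : Set V)
    (hB : B = {v | ∀ M, IsMaxMatching G M → Covers M v})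
    (hA : A = {v ∈ B | ∃ u, G.Adj v u ∧ u ∉ B})
    (hC : C = B \ A) (hD : D = Bᶜ)
    (GD : SimpleGraph V)
    (hGD : GD = SimpleGraph.fromRel (fun u v => G.Adj u v ∧ u ∈ D ∧ v ∈ D))
    (M : Finset (V × V)) (hM : IsMaxMatching G M) :
    -- (a) M covers C, and matches A into distinct components of G[D]
    (∀ v ∈ C, Covers M v) ∧
    (∀ a ∈ A, ∃ d ∈ D, MatchedTo M a d) ∧
    (∀ a ∈ A, ∀ a' ∈ A, ∀ d ∈ D, ∀ d' ∈ D, a ≠ a' →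
      MatchedTo M a d → MatchedTo M a' d' → ¬ GD.Reachable d d') ∧
    -- (b) each component of G[D] is factor-critical and meets M in a
    -- near-perfect matching of the component
    (∀ d ∈ D,
      (∀ v, GD.Reachable d v →
        ∃ M', IsMatchingSet GD M' ∧ ¬ Covers M' v ∧
          ∀ u, GD.Reachable d u → u ≠ v → Covers M' u) ∧
      ¬ (∃ M', IsMatchingSet GD M' ∧ ∀ u, GD.Reachable d u → Covers M' u) ∧
      (∃! v, GD.Reachable d v ∧ ∀ e ∈ M,
        ¬ ((e.1 = v ∧ GD.Reachable d e.2) ∨ (e.2 = v ∧ GD.Reachable d e.1)))) ∧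
    -- (c) N(S) meets at least |S| + 1 components of G[D]
    (∀ S : Finset V, ↑S ⊆ A → S.Nonempty →
      ∃ T : Finset V, T.card = S.card + 1 ∧
        (∀ t ∈ T, t ∈ D ∧ ∃ a ∈ S, G.Adj a t) ∧
        ∀ t ∈ T, ∀ t' ∈ T, t ≠ t' → ¬ GD.Reachable t t') := by
  have hDi : D = inessential G := by
    ext v
    rw [hD, hB, mem_inessential_iff]
    rfl
  have hBi : ∀ v, v ∈ B ↔ v ∉ inessential G := by
    intro v
    rw [← hDi, hD, Set.mem_compl_iff, not_not]
  have hAi : A = essentialBoundary G := by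
    ext v
    rw [hA]
    simp only [Set.mem_ofPred_eq, hBi, not_not, essentialBoundary]
    exact and_congr_right fun _ => exists_congr fun _ => and_comm
  have hGDi : GD = inessentialGraph G := by
    ext u v
    rw [hGD, hDi, SimpleGraph.fromRel_adj, inessentialGraph_adj]
    have := G.adj_comm u v
    have : G.Adj u v → u ≠ v := fun h => h.ne
    tauto
  clear hA hD hGD
  subst hDi hAi hGDi
  obtain ⟨f, hf, hMf⟩ := hM.exists_encodes
  refine ⟨fun v hv => ?_, fun a ha => ?_, fun a ha a' ha' d hd d' hd' hne h h' hr => ?_,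
    fun d hd => ⟨fun v hv => ?_, ?_, ?_⟩, fun S hS hne => ?_⟩
  · rw [hC, hB] at hv
    exact hv.1 M hM
  · exact ⟨f a, hf.apply_mem_inessential ha,
      (hMf a (f a)).2 ⟨rfl, fun h => ha.1 ⟨f, hf, h.symm⟩⟩⟩
  · have hfd := ((hMf _ _).1 h.symm).1
    have hfd' := ((hMf _ _).1 h'.symm).1
    have := hf.eq_of_reachable_of_unmatched hr (Or.inr (hfd ▸ ha)) (Or.inr (hfd' ▸ ha'))
    exact hne (by rw [← hfd, ← hfd', this])
  · obtain ⟨g, hg, hgv⟩ := mem_inessential_of_reachable hd hv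
    obtain ⟨N, hN, hNg⟩ :=
      (isPartnerMap_restrictTo hg.1.1 (inessentialGraph G)).exists_encodes
    refine ⟨N, hN, ?_, fun u hu hne => ?_⟩
    · rw [hNg.covers_iff]
      simp [restrictTo, hgv]
    · rw [hNg.covers_iff]
      exact restrictTo_ne (hg.inessentialGraph_adj_of_missed hgv (hv.symm.trans hu) hne)
  · rintro ⟨N, hN, hcov⟩
    obtain ⟨p, hp, hNp⟩ := hN.exists_encodes
    obtain ⟨u, hu, hpu⟩ := exists_missed_of_isPartnerMap_inessentialGraph hp hd
    exact hNp.covers_iff.1 (hcov u hu) hpu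
  · refine (existsUnique_congr fun v => and_congr_right fun _ =>
      ⟨fun h => ?_, fun h e he hev => ?_⟩).2 (hf.existsUnique_unmatched hd)
    · by_contra! hcon
      obtain ⟨e, he, hev⟩ := (hMf v (f v)).2 ⟨rfl, hcon.1.symm⟩
      refine h e he (hev.imp (fun h => ⟨h.1, ?_⟩) fun h => ⟨h.2, ?_⟩)
      · rw [h.2]
        exact hcon.2
      · rw [h.1]
        exact hcon.2
    · obtain ⟨w, hw, hr⟩ : ∃ w, MatchedTo M v w ∧ (inessentialGraph G).Reachable d w := by
        rcases hev with ⟨h1, h2⟩ | ⟨h1, h2⟩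
        · exact ⟨_, ⟨e, he, Or.inl ⟨h1, rfl⟩⟩, h2⟩
        · exact ⟨_, ⟨e, he, Or.inr ⟨rfl, h1⟩⟩, h2⟩
      obtain ⟨rfl, hvw⟩ := (hMf _ _).1 hw
      exact h.elim hvw.symm fun h => h hr
  · exact exists_transversal_of_subset_essentialBoundary hS hne
end

section
/- Let G = K_{2x1 + x2 + x3 - 2} with 1 ≤ x2, x3 ≤ x1, with a 3-edge-coloring E1 ∪ E2 ∪ E3. Suppose for some i ∈ {2,3} the graph Gi = G[Ei] has no connected component with more than x1 + xi - 1 vertices. Then for some j ∈ {1,2,3}, Gj contains a connected matching of size at least xj. -/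
open SimpleGraph

variable {V : Type*}

/-- `G` has a matching of size `k` all of whose endpoints lie in `S`. -/
def HasMatchingIn (G : SimpleGraph V) (S : Finset V) (k : ℕ) : Prop :=
  ∃ M, IsMatchingSet G M ∧ (∀ v, Covers M v → v ∈ S) ∧ M.card = k

section Surgery

lemma IsMatchingSet.subset {G : SimpleGraph V} {M M' : Finset (V × V)}
    (hM : IsMatchingSet G M) (h : M' ⊆ M) : IsMatchingSet G M' :=
  ⟨fun e he => hM.1 e (h he), fun e he f hf => hM.2 e (h he) f (h hf)⟩

lemma IsMatchingSet.mono {G G' : SimpleGraph V} {M : Finset (V × V)}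
    (hM : IsMatchingSet G M) (h : ∀ e ∈ M, G'.Adj e.1 e.2) : IsMatchingSet G' M :=
  ⟨h, hM.2⟩

lemma Covers.mono {M M' : Finset (V × V)} (h : M' ⊆ M) {v : V} (hv : Covers M' v) :
    Covers M v := by
  obtain ⟨e, he, hev⟩ := hv
  exact ⟨e, h he, hev⟩

lemma hasMatchingIn_zero (G : SimpleGraph V) (S : Finset V) : HasMatchingIn G S 0 :=
  ⟨∅, ⟨by simp, by simp⟩, by simp [Covers], rfl⟩

variable [DecidableEq V]

lemma IsMatchingSet.not_covers_erase {G : SimpleGraph V} {M : Finset (V × V)}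
    (hM : IsMatchingSet G M) {e : V × V} (he : e ∈ M) :
    ¬ Covers (M.erase e) e.1 ∧ ¬ Covers (M.erase e) e.2 := by
  constructor
  all_goals
    rintro ⟨f, hf, h⟩
    rw [Finset.mem_erase] at hf
    have := hM.2 e he f hf.2 hf.1.symm
    tauto

lemma covers_insert {M : Finset (V × V)} {u v w : V} :
    Covers (insert (u, v) M) w ↔ w = u ∨ w = v ∨ Covers M w := by
  simp [Covers, or_assoc]

lemma IsMatchingSet.insert {G : SimpleGraph V} {M : Finset (V × V)} (hM : IsMatchingSet G M)
    {u v : V} (huv : G.Adj u v) (hu : ¬ Covers M u) (hv : ¬ Covers M v) :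
    IsMatchingSet G (insert (u, v) M) ∧ (insert (u, v) M).card = M.card + 1 := by
  have key : ∀ f ∈ M, u ≠ f.1 ∧ u ≠ f.2 ∧ v ≠ f.1 ∧ v ≠ f.2 := fun f hf =>
    ⟨fun h => hu ⟨f, hf, .inl h⟩, fun h => hu ⟨f, hf, .inr h⟩,
      fun h => hv ⟨f, hf, .inl h⟩, fun h => hv ⟨f, hf, .inr h⟩⟩
  refine ⟨⟨?_, ?_⟩, Finset.card_insert_of_notMem fun h => (key _ h).1 rfl⟩
  · intro e he
    rcases Finset.mem_insert.1 he with rfl | he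
    · exact huv
    · exact hM.1 e he
  · intro e he f hf hef
    rcases Finset.mem_insert.1 he with rfl | he <;> rcases Finset.mem_insert.1 hf with rfl | hf
    · exact absurd rfl hef
    · exact key f hf
    · obtain ⟨h1, h2, h3, h4⟩ := key e he
      exact ⟨h1.symm, h3.symm, h2.symm, h4.symm⟩
    · exact hM.2 e he f hf hef

lemma HasMatchingIn.extend {G : SimpleGraph V} {S S' : Finset V} {k : ℕ}
    (h : HasMatchingIn G S' k) (hS : S' ⊆ S) {u v : V} (huv : G.Adj u v)
    (hu : u ∈ S) (hv : v ∈ S) (hu' : u ∉ S') (hv' : v ∉ S') :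
    HasMatchingIn G S (k + 1) := by
  obtain ⟨M, hM, hMS, rfl⟩ := h
  obtain ⟨h1, h2⟩ := hM.insert huv (fun h => hu' (hMS _ h)) (fun h => hv' (hMS _ h))
  refine ⟨_, h1, fun w hw => ?_, h2⟩
  rcases covers_insert.1 hw with rfl | rfl | hw
  · exact hu
  · exact hv
  · exact hS (hMS _ hw)

/-- A complete bipartite pair with both sides of size at least `k` has a matching of size `k`
directed from the first side to the second. -/
lemma exists_matching_of_biclique {G : SimpleGraph V} (k : ℕ) :
    ∀ A B : Finset V, (∀ u ∈ A, ∀ v ∈ B, G.Adj u v) → k ≤ A.card → k ≤ B.card →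
    ∃ M, IsMatchingSet G M ∧ (∀ e ∈ M, e.1 ∈ A ∧ e.2 ∈ B) ∧ M.card = k := by
  induction k with
  | zero => exact fun A B _ _ _ => ⟨∅, ⟨by simp, by simp⟩, by simp, rfl⟩
  | succ k ih =>
    intro A B hAB hA hB
    obtain ⟨u, hu⟩ : A.Nonempty := Finset.card_pos.1 (by omega)
    obtain ⟨v, hv⟩ : B.Nonempty := Finset.card_pos.1 (by omega)
    obtain ⟨M, hM, hMAB, rfl⟩ := ih (A.erase u) (B.erase v)
      (fun x hx y hy => hAB x (Finset.mem_of_mem_erase hx) y (Finset.mem_of_mem_erase hy))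
      (by rw [Finset.card_erase_of_mem hu]; omega) (by rw [Finset.card_erase_of_mem hv]; omega)
    have hdis : ∀ w ∈ A, w ∉ B := fun w hwA hwB => G.loopless.irrefl w (hAB w hwA w hwB)
    obtain ⟨h1, h2⟩ := hM.insert (hAB u hu v hv) (by
      rintro ⟨e, he, rfl | rfl⟩
      · exact absurd (hMAB e he).1 (by simp)
      · exact hdis _ hu (Finset.mem_of_mem_erase (hMAB e he).2)) (by
      rintro ⟨e, he, rfl | rfl⟩
      · exact hdis _ (Finset.mem_of_mem_erase (hMAB e he).1) hv
      · exact absurd (hMAB e he).2 (by simp))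
    refine ⟨_, h1, fun e he => ?_, h2⟩
    rcases Finset.mem_insert.1 he with rfl | he
    · exact ⟨hu, hv⟩
    · exact ⟨Finset.mem_of_mem_erase (hMAB e he).1, Finset.mem_of_mem_erase (hMAB e he).2⟩

lemma exists_connMatching_of_biclique {G : SimpleGraph V} {k : ℕ} {A B : Finset V}
    (hAB : ∀ u ∈ A, ∀ v ∈ B, G.Adj u v) (hA : k ≤ A.card) (hB : k ≤ B.card) :
    ∃ M, ConnMatching G M ∧ M.card = k := by
  obtain ⟨M, hM, hMAB, hc⟩ := exists_matching_of_biclique k A B hAB hA hB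
  refine ⟨M, ⟨hM, fun e he f hf => ?_⟩, hc⟩
  exact (hAB _ (hMAB e he).1 _ (hMAB e he).2).reachable.trans
    (hAB _ (hMAB f hf).1 _ (hMAB e he).2).symm.reachable

end Surgery

section Multipartite

variable {ι : Type*} [DecidableEq ι]

lemma exists_two_largest_parts (p : V → ι) (S : Finset V) (hS : S.Nonempty)
    (h : ∀ r, 0 < (S.filter (p · ≠ r)).card) :
    ∃ u ∈ S, ∃ v ∈ S, p u ≠ p v ∧
      ∀ r, r ≠ p u → (S.filter (p · = r)).card ≤ (S.filter (p · = p u)).card ∧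
        (r ≠ p v → (S.filter (p · = r)).card ≤ (S.filter (p · = p v)).card) := by
  obtain ⟨u, hu, hmax⟩ := S.exists_max_image (fun w => (S.filter (p · = p w)).card) hS
  obtain ⟨v, hv, hmax'⟩ := (S.filter (p · ≠ p u)).exists_max_image
    (fun w => (S.filter (p · = p w)).card) (Finset.card_pos.1 (h _))
  rw [Finset.mem_filter] at hv
  refine ⟨u, hu, v, hv.1, hv.2.symm, fun r hr => ?_⟩
  rcases (S.filter (p · = r)).eq_empty_or_nonempty with h0 | ⟨w, hw⟩
  · simp [h0]
  · rw [Finset.mem_filter] at hw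
    obtain ⟨hwS, rfl⟩ := hw
    exact ⟨hmax w hwS, fun _ => hmax' w (Finset.mem_filter.2 ⟨hwS, hr⟩)⟩

lemma card_part_add_card_outside (p : V → ι) (S : Finset V) (r : ι) :
    (S.filter (p · = r)).card + (S.filter (p · ≠ r)).card = S.card :=
  Finset.card_filter_add_card_filter_not _

variable [DecidableEq V]

lemma card_parts_le_outside (p : V → ι) (S : Finset V) {r s t : ι} (hst : s ≠ t)
    (hs : r ≠ s) (ht : r ≠ t) :
    (S.filter (p · = s)).card + (S.filter (p · = t)).card ≤ (S.filter (p · ≠ r)).card := by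
  rw [← Finset.card_union_of_disjoint]
  · apply Finset.card_le_card
    intro w hw
    simp only [Finset.mem_union, Finset.mem_filter] at hw ⊢
    rcases hw with ⟨hw, rfl⟩ | ⟨hw, rfl⟩
    · exact ⟨hw, hs.symm⟩
    · exact ⟨hw, ht.symm⟩
  · rw [Finset.disjoint_filter]
    rintro w - rfl
    exact hst

lemma card_outside_sdiff (p : V → ι) (S D : Finset V) (r : ι) :
    (S.filter (p · ≠ r)).card ≤ ((S \ D).filter (p · ≠ r)).card + D.card ∧
    ((∃ d ∈ D, p d = r) →
      (S.filter (p · ≠ r)).card < ((S \ D).filter (p · ≠ r)).card + D.card) := by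
  have h1 : (S.filter (p · ≠ r)).card ≤
      ((S \ D).filter (p · ≠ r)).card + (D.filter (p · ≠ r)).card := by
    refine (Finset.card_le_card ?_).trans (Finset.card_union_le _ _)
    intro w hw
    simp only [Finset.mem_union, Finset.mem_filter, Finset.mem_sdiff] at hw ⊢
    tauto
  refine ⟨h1.trans (by gcongr; exact Finset.filter_subset _ _), ?_⟩
  rintro ⟨d, hd, hdr⟩
  have : (D.filter (p · ≠ r)).card < D.card := by
    apply Finset.card_lt_card
    rw [Finset.filter_ssubset]
    exact ⟨d, hd, by simpa using hdr⟩
  omega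

/-- A complete multipartite graph on at least `2a` vertices in which every part misses at least
`a` vertices has a matching of size `a`. -/
lemma hasMatchingIn_of_multipartite {G : SimpleGraph V} (p : V → ι) (a : ℕ) :
    ∀ S : Finset V, (∀ u ∈ S, ∀ v ∈ S, p u ≠ p v → G.Adj u v) → 2 * a ≤ S.card →
    (∀ r, a ≤ (S.filter (p · ≠ r)).card) → HasMatchingIn G S a := by
  induction a with
  | zero => exact fun S _ _ _ => hasMatchingIn_zero G S
  | succ a ih =>
    intro S hG hcard hout
    obtain ⟨u, hu, v, hv, huv, hmax⟩ := exists_two_largest_parts p S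
      (Finset.card_pos.1 (by omega)) (fun r => by have := hout r; omega)
    have hne : u ≠ v := fun h => huv (congrArg p h)
    have hD : ({u, v} : Finset V).card = 2 := Finset.card_pair hne
    have hDS : ({u, v} : Finset V) ⊆ S := by
      intro w hw
      simp only [Finset.mem_insert, Finset.mem_singleton] at hw
      rcases hw with rfl | rfl <;> assumption
    refine (ih (S \ {u, v}) (fun x hx y hy => hG x (Finset.mem_sdiff.1 hx).1 y
      (Finset.mem_sdiff.1 hy).1) ?_ ?_).extend Finset.sdiff_subset (hG u hu v hv huv) hu hv
      (by simp) (by simp)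
    · rw [Finset.card_sdiff_of_subset hDS]; omega
    · intro r
      obtain ⟨h1, h2⟩ := card_outside_sdiff p S {u, v} r
      have h3 := hout r
      by_cases hr : p u = r ∨ p v = r
      · have := h2 (by simpa using hr)
        omega
      · push Not at hr
        have h4 := card_parts_le_outside p S huv hr.1.symm hr.2.symm
        obtain ⟨h5, h6⟩ := hmax r hr.1.symm
        have h7 := h6 hr.2.symm
        have h8 := card_part_add_card_outside p S r
        omega

/-- A vertex with a first-color neighbour `u` and a different second-color neighbour `w`. -/
def IsCherry (R B : SimpleGraph V) (S : Finset V) (v u w : V) : Prop :=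
  v ∈ S ∧ u ∈ S ∧ w ∈ S ∧ u ≠ w ∧ R.Adj v u ∧ B.Adj v w

lemma hasMatchingIn_of_cherry {p : V → ι} {R B : SimpleGraph V} {S : Finset V} {a b : ℕ}
    {v u w : V} (hch : IsCherry R B S v u w)
    (ih : 2 * a + b ≤ (S \ {v, u, w}).card + 1 → a + 2 * b ≤ (S \ {v, u, w}).card + 1 →
      (∀ r, a + b ≤ ((S \ {v, u, w}).filter (p · ≠ r)).card + 1) →
      HasMatchingIn R (S \ {v, u, w}) a ∨ HasMatchingIn B (S \ {v, u, w}) b)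
    (h1 : 2 * (a + 1) + (b + 1) ≤ S.card + 1) (h2 : (a + 1) + 2 * (b + 1) ≤ S.card + 1)
    (hout : ∀ r, (a + 1) + (b + 1) ≤ (S.filter (p · ≠ r)).card + 1)
    (htight : ∀ r, (a + 1) + (b + 1) = (S.filter (p · ≠ r)).card + 1 →
      ∃ d ∈ ({v, u, w} : Finset V), p d = r) :
    HasMatchingIn R S (a + 1) ∨ HasMatchingIn B S (b + 1) := by
  obtain ⟨hv, hu, hw, huw, hR, hB⟩ := hch
  have hD : ({v, u, w} : Finset V).card = 3 :=
    Finset.card_eq_three.2 ⟨v, u, w, hR.ne, hB.ne, huw, rfl⟩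
  have hDS : ({v, u, w} : Finset V) ⊆ S := by
    intro z hz
    simp only [Finset.mem_insert, Finset.mem_singleton] at hz
    rcases hz with rfl | rfl | rfl <;> assumption
  have hc := Finset.card_sdiff_of_subset hDS
  rcases ih (by omega) (by omega) (fun r => by
    obtain ⟨h3, h4⟩ := card_outside_sdiff p S {v, u, w} r
    have h5 := hout r
    by_cases ht : (a + 1) + (b + 1) = (S.filter (p · ≠ r)).card + 1
    · have := h4 (htight r ht)
      omega
    · omega) with h | h
  · exact .inl (h.extend Finset.sdiff_subset hR hv hu (by simp) (by simp))
  · exact .inr (h.extend Finset.sdiff_subset hB hv hw (by simp) (by simp))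

/-- Suppose no bichromatic cherry meets both the largest part and the part of `v`, and the edge
`uv` between these parts has the first color. Then either that color has a matching of size `a`,
or there is some cherry while every part misses at least `a + b` vertices. -/
lemma hasMatchingIn_or_cherry {p : V → ι} {R B : SimpleGraph V} {S : Finset V} {a b : ℕ}
    (hcov : ∀ x y, p x ≠ p y → R.Adj x y ∨ B.Adj x y)
    (hb : 1 ≤ b)
    (h1 : 2 * a + b ≤ S.card + 1)
    (hout : ∀ r, a + b ≤ (S.filter (p · ≠ r)).card + 1)
    {u v : V} (hu : u ∈ S) (hv : v ∈ S) (huv : p u ≠ p v) (hR : R.Adj u v)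
    (hmax : ∀ r, r ≠ p u → (S.filter (p · = r)).card ≤ (S.filter (p · = p u)).card)
    (hno : ∀ x y z, IsCherry R B S x y z →
      ¬ ((p x = p u ∨ p y = p u ∨ p z = p u) ∧ (p x = p v ∨ p y = p v ∨ p z = p v))) :
    HasMatchingIn R S a ∨ ((∃ x y z, IsCherry R B S x y z) ∧
      ∀ r, a + b ≠ (S.filter (p · ≠ r)).card + 1) := by
  have hfirst : ∀ w ∈ S, p w ≠ p u → R.Adj u w := by
    intro w hw hwu
    by_cases hwv : w = v
    · rwa [hwv]
    · rcases hcov u w hwu.symm with h | h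
      · exact h
      · exact absurd ⟨.inl rfl, .inr (.inl rfl)⟩ (hno u v w ⟨hu, hv, hw, Ne.symm hwv, hR, h⟩)
  have hsecond : ∀ x ∈ S, p x = p u → R.Adj v x := by
    intro x hx hxu
    by_cases hxe : x = u
    · rw [hxe]; exact hR.symm
    · rcases hcov v x (by rw [hxu]; exact huv.symm) with h | h
      · exact h
      · exact absurd ⟨.inr (.inl rfl), .inl rfl⟩
          (hno v u x ⟨hv, hu, hx, Ne.symm hxe, hR.symm, h⟩)
  have hpart : ∀ x ∈ S, p x = p u → ∀ w ∈ S, p w ≠ p u → R.Adj x w := by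
    intro x hx hxu w hw hwu
    by_cases hwv : w = v
    · rw [hwv]; exact (hsecond x hx hxu).symm
    · rcases hcov x w (by rw [hxu]; exact hwu.symm) with h | h
      · exact h
      · exact absurd ⟨.inl hxu, .inr (.inl rfl)⟩
          (hno x v w ⟨hx, hv, hw, Ne.symm hwv, (hsecond x hx hxu).symm, h⟩)
  by_cases ht : ∃ r, a + b = (S.filter (p · ≠ r)).card + 1
  · left
    obtain ⟨r, hr⟩ := ht
    have h3 := card_part_add_card_outside p S r
    have h4 : (S.filter (p · = r)).card ≤ (S.filter (p · = p u)).card := by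
      by_cases hru : r = p u
      · rw [hru]
      · exact hmax r hru
    have h5 := hout (p u)
    obtain ⟨M, hM, hMS, hc⟩ := exists_matching_of_biclique (G := R) a
      (S.filter (p · = p u)) (S.filter (p · ≠ p u)) (by
        intro x hx w hw
        rw [Finset.mem_filter] at hx hw
        exact hpart x hx.1 hx.2 w hw.1 hw.2) (by omega) (by omega)
    refine ⟨M, hM, ?_, hc⟩
    rintro w ⟨e, he, rfl | rfl⟩
    · exact (Finset.mem_filter.1 (hMS e he).1).1
    · exact (Finset.mem_filter.1 (hMS e he).2).1
  · by_cases hch : ∃ x y z, IsCherry R B S x y z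
    · exact .inr ⟨hch, fun r hr => ht ⟨r, hr⟩⟩
    · left
      refine hasMatchingIn_of_multipartite p a S ?_ (by omega) (fun r => by
        have := hout r; omega)
      intro x hx y hy hxy
      by_cases hxu : p x = p u
      · exact hpart x hx hxu y hy (by rw [← hxu]; exact hxy.symm)
      · by_cases hyu : p y = p u
        · exact (hpart y hy hyu x hx hxu).symm
        · rcases hcov x y hxy with h | h
          · exact h
          · exact absurd ⟨x, u, y, hx, hu, hy, fun h => hyu (by rw [h]),
              (hfirst x hx hxu).symm, h⟩ hch

/-- Two-colored complete multipartite graphs: a Cockayne–Lorimer type theorem. -/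
theorem hasMatchingIn_of_two_coloring {p : V → ι} {R B : SimpleGraph V}
    (hcov : ∀ x y, p x ≠ p y → R.Adj x y ∨ B.Adj x y) (a : ℕ) :
    ∀ (b : ℕ) (S : Finset V), 2 * a + b ≤ S.card + 1 → a + 2 * b ≤ S.card + 1 →
    (∀ r, a + b ≤ (S.filter (p · ≠ r)).card + 1) →
    HasMatchingIn R S a ∨ HasMatchingIn B S b := by
  induction a with
  | zero => exact fun b S _ _ _ => .inl (hasMatchingIn_zero R S)
  | succ a ih =>
    rintro (_ | b) S h1 h2 hout
    · exact .inr (hasMatchingIn_zero B S)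
    obtain ⟨u, hu, v, hv, huv, hmax⟩ := exists_two_largest_parts p S
      (Finset.card_pos.1 (by omega)) (fun r => by have := hout r; omega)
    have htight : ∀ r, (a + 1) + (b + 1) = (S.filter (p · ≠ r)).card + 1 →
        r = p u ∨ r = p v := by
      intro r hr
      by_contra! hne
      have h3 := card_parts_le_outside p S huv hne.1 hne.2
      obtain ⟨h4, h5⟩ := hmax r hne.1
      have h6 := h5 hne.2
      have h7 := card_part_add_card_outside p S r
      omega
    by_cases hch : ∃ x y z, IsCherry R B S x y z ∧
      ((p x = p u ∨ p y = p u ∨ p z = p u) ∧ (p x = p v ∨ p y = p v ∨ p z = p v))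
    · obtain ⟨x, y, z, hxyz, hPu, hPv⟩ := hch
      refine hasMatchingIn_of_cherry hxyz (ih b _) h1 h2 hout fun r hr => ?_
      rcases htight r hr with rfl | rfl <;> simpa
    · push Not at hch
      have finish : (∃ x y z, IsCherry R B S x y z) →
          (∀ r, (a + 1) + (b + 1) ≠ (S.filter (p · ≠ r)).card + 1) →
          HasMatchingIn R S (a + 1) ∨ HasMatchingIn B S (b + 1) := by
        rintro ⟨x, y, z, hxyz⟩ hnt
        exact hasMatchingIn_of_cherry hxyz (ih b _) h1 h2 hout fun r hr => absurd hr (hnt r)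
      rcases hcov u v huv with hR | hB
      · rcases hasMatchingIn_or_cherry hcov (by omega) h1 hout hu hv huv hR
          (fun r hr => (hmax r hr).1)
          (fun x y z h h' => by have := hch x y z h h'.1; tauto) with h | ⟨h, h'⟩
        · exact .inl h
        · exact finish h h'
      · rcases hasMatchingIn_or_cherry (a := b + 1) (b := a + 1) (R := B) (B := R)
          (fun x y h => (hcov x y h).symm) (by omega) (by omega)
          (fun r => by have := hout r; omega) hu hv huv hB
          (fun r hr => (hmax r hr).1)
          (fun x y z ⟨hx, hy, hz, hyz, e1, e2⟩ h' => by
            have := hch x z y ⟨hx, hz, hy, hyz.symm, e2, e1⟩ (by tauto)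
            tauto) with h | ⟨⟨x, y, z, hx, hy, hz, hyz, e1, e2⟩, h'⟩
        · exact .inr h
        · exact finish ⟨x, z, y, hx, hz, hy, hyz.symm, e2, e1⟩
            (fun r hr => h' r (by omega))

end Multipartite

section Recoloring

variable {ι : Type*}

/-- `R` together with all multipartite edges that are not inside `C`. -/
def fillOutside (p : V → ι) (R : SimpleGraph V) (C : Set V) : SimpleGraph V where
  Adj u v := R.Adj u v ∨ (p u ≠ p v ∧ ¬ (u ∈ C ∧ v ∈ C))
  symm := ⟨fun u v h => by
    rcases h with h | ⟨h, h'⟩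
    · exact .inl h.symm
    · exact .inr ⟨h.symm, fun h'' => h' h''.symm⟩⟩
  loopless := ⟨fun u h => by
    rcases h with h | ⟨h, -⟩
    · exact R.loopless.irrefl u h
    · exact h rfl⟩

open Classical in
/-- One exchange step: an edge outside `R` can be traded for edges of `R`. -/
lemma exists_matching_fewer_filled [Finite V] {p : V → ι} {R B : SimpleGraph V}
    (hR : ∀ x y, R.Adj x y → p x ≠ p y)
    (hcov : ∀ x y, p x ≠ p y → R.Adj x y ∨ B.Adj x y)
    (C : B.ConnectedComponent)
    (hC : ∀ D : B.ConnectedComponent, D.supp.ncard ≤ C.supp.ncard)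
    {M : Finset (V × V)} (hM : IsMatchingSet (fillOutside p R C.supp) M)
    {e : V × V} (he : e ∈ M) (heR : ¬ R.Adj e.1 e.2) :
    ∃ M', IsMatchingSet (fillOutside p R C.supp) M' ∧ M'.card = M.card ∧
      (M'.filter fun f => ¬ R.Adj f.1 f.2).card < (M.filter fun f => ¬ R.Adj f.1 f.2).card := by
  obtain ⟨y₁, y₂⟩ := e
  have hy : p y₁ ≠ p y₂ ∧ ¬ (y₁ ∈ C.supp ∧ y₂ ∈ C.supp) := (hM.1 _ he).resolve_left heR
  have hyB : B.Adj y₁ y₂ := (hcov _ _ hy.1).resolve_left heR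
  set D := B.connectedComponentMk y₁ with hD
  have hyD : B.connectedComponentMk y₂ = D :=
    (SimpleGraph.ConnectedComponent.sound hyB.reachable).symm
  have hDC : D ≠ C := by
    intro h
    exact hy.2 ⟨h, hyD.trans h⟩
  have hcross : ∀ x y, B.connectedComponentMk x ≠ B.connectedComponentMk y → p x ≠ p y →
      R.Adj x y := fun x y hxy hp =>
    (hcov x y hp).resolve_right fun h => hxy (SimpleGraph.ConnectedComponent.sound h.reachable)
  set N := M.erase (y₁, y₂) with hN
  have hNM : N ⊆ M := Finset.erase_subset _ _
  have hNmatch := hM.subset hNM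
  obtain ⟨hc₁, hc₂⟩ := hM.not_covers_erase he
  have hNcard : N.card + 1 = M.card := Finset.card_erase_add_one he
  have hbad : (N.filter fun f => ¬ R.Adj f.1 f.2).card <
      (M.filter fun f => ¬ R.Adj f.1 f.2).card := by
    apply Finset.card_lt_card
    rw [hN, Finset.filter_erase]
    exact Finset.erase_ssubset (Finset.mem_filter.2 ⟨he, heR⟩)
  have hfilter : ∀ (u v : V) (L : Finset (V × V)), R.Adj u v →
      ((insert (u, v) L).filter fun f => ¬ R.Adj f.1 f.2) = L.filter fun f => ¬ R.Adj f.1 f.2 :=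
    fun u v L h => by rw [Finset.filter_insert, if_neg (by simpa using h)]
  by_cases hswap : ∃ f ∈ N, B.connectedComponentMk f.1 ≠ D ∧ B.connectedComponentMk f.2 ≠ D
  · obtain ⟨⟨x₁, x₂⟩, hf, hx₁, hx₂⟩ := hswap
    have hx : p x₁ ≠ p x₂ := by
      rcases hNmatch.1 _ hf with h | h
      · exact hR _ _ h
      · exact h.1
    set L := N.erase (x₁, x₂) with hL
    have hLN : L ⊆ N := Finset.erase_subset _ _
    obtain ⟨hd₁, hd₂⟩ := hNmatch.not_covers_erase hf
    have hLcard : L.card + 1 = N.card := Finset.card_erase_add_one hf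
    have hLbad : (L.filter fun f => ¬ R.Adj f.1 f.2).card ≤
        (N.filter fun f => ¬ R.Adj f.1 f.2).card :=
      Finset.card_le_card (Finset.filter_subset_filter _ hLN)
    have finish : ∀ z₁ z₂, R.Adj y₁ z₁ → R.Adj y₂ z₂ → ¬ Covers L z₁ → ¬ Covers L z₂ →
        z₁ ≠ z₂ → y₁ ≠ z₂ → y₂ ≠ z₁ →
        ∃ M', IsMatchingSet (fillOutside p R C.supp) M' ∧ M'.card = M.card ∧
          (M'.filter fun f => ¬ R.Adj f.1 f.2).card <
            (M.filter fun f => ¬ R.Adj f.1 f.2).card := by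
      intro z₁ z₂ h₁ h₂ hz₁ hz₂ hz hyz₁ hyz₂
      obtain ⟨m₁, k₁⟩ := (hNmatch.subset hLN).insert (u := y₁) (v := z₁) (.inl h₁)
        (fun h => hc₁ (h.mono hLN)) hz₁
      obtain ⟨m₂, k₂⟩ := m₁.insert (u := y₂) (v := z₂) (.inl h₂)
        (by
          rw [covers_insert]
          rintro (h | h | h)
          · exact hyB.ne h.symm
          · exact hyz₂ h
          · exact hc₂ (h.mono hLN))
        (by
          rw [covers_insert]
          rintro (h | h | h)
          · exact hyz₁ h.symm
          · exact hz h.symm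
          · exact hz₂ h)
      refine ⟨_, m₂, by omega, ?_⟩
      rw [hfilter _ _ _ h₂, hfilter _ _ _ h₁]
      omega
    have hne₁ : ∀ y, B.connectedComponentMk y = D → y ≠ x₁ := fun y h h' => hx₁ (by rw [← h', h])
    have hne₂ : ∀ y, B.connectedComponentMk y = D → y ≠ x₂ := fun y h h' => hx₂ (by rw [← h', h])
    have adj₁ : ∀ y, B.connectedComponentMk y = D → p y ≠ p x₁ → R.Adj y x₁ := fun y h hp =>
      hcross _ _ (by rw [h]; exact hx₁.symm) hp
    have adj₂ : ∀ y, B.connectedComponentMk y = D → p y ≠ p x₂ → R.Adj y x₂ := fun y h hp =>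
      hcross _ _ (by rw [h]; exact hx₂.symm) hp
    have hxne : x₁ ≠ x₂ := fun h => hx (congrArg p h)
    by_cases hpar : p y₁ ≠ p x₁ ∧ p y₂ ≠ p x₂
    · exact finish x₁ x₂ (adj₁ _ rfl hpar.1) (adj₂ _ hyD hpar.2) hd₁ hd₂ hxne
        (hne₂ _ rfl) (hne₁ _ hyD)
    · have hpar' : p y₁ ≠ p x₂ ∧ p y₂ ≠ p x₁ := by grind
      exact finish x₂ x₁ (adj₂ _ rfl hpar'.1) (adj₁ _ hyD hpar'.2) hd₂ hd₁ hxne.symm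
        (hne₁ _ rfl) (hne₂ _ hyD)
  · have htouch : ∀ f ∈ M, B.connectedComponentMk f.1 = D ∨ B.connectedComponentMk f.2 = D := by
      intro f hf
      by_contra! hno
      have hfe : f ≠ (y₁, y₂) := by
        rintro rfl
        exact hno.1 rfl
      exact hswap ⟨f, Finset.mem_erase.2 ⟨hfe, hf⟩, hno⟩
    have hfree : ∃ x ∈ C.supp, ¬ Covers M x := by
      by_contra! hall
      have hup : C.supp.ncard ≤ N.card := by
        have hsub : C.supp ⊆
            (N.image fun f => if B.connectedComponentMk f.1 = C then f.1 else f.2 : Finset V) := by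
          intro x hx
          obtain ⟨f, hf, hfx⟩ := hall x hx
          rw [SimpleGraph.ConnectedComponent.mem_supp_iff] at hx
          have ht := htouch f hf
          have hfe : f ≠ (y₁, y₂) := by
            rintro rfl
            rcases hfx with rfl | rfl
            · exact hDC hx
            · exact hDC (hyD.symm.trans hx)
          rw [Finset.mem_coe, Finset.mem_image]
          refine ⟨f, Finset.mem_erase.2 ⟨hfe, hf⟩, ?_⟩
          rcases hfx with rfl | rfl
          · rw [if_pos hx]
          · rw [if_neg]
            intro h
            rcases ht with ht | ht
            · exact hDC (ht.symm.trans h)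
            · exact hDC (ht.symm.trans hx)
        refine (Set.ncard_le_ncard hsub (Finset.finite_toSet _)).trans ?_
        rw [Set.ncard_coe_finset]
        exact Finset.card_image_le
      have hlow : M.card ≤ D.supp.ncard := by
        rw [← Set.ncard_coe_finset]
        refine Set.ncard_le_ncard_of_injOn
          (fun f => if B.connectedComponentMk f.1 = D then f.1 else f.2) ?_ ?_ (Set.toFinite _)
        · intro f hf
          rcases htouch f hf with h | h
          · simp [h]
          · by_cases h' : B.connectedComponentMk f.1 = D <;> simp [h, h']
        · intro f hf g hg hfg
          by_contra hne
          obtain ⟨h1, h2, h3, h4⟩ := hM.2 f hf g hg hne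
          simp only at hfg
          split_ifs at hfg <;> contradiction
      have := hC D
      omega
    obtain ⟨x, hxC, hxM⟩ := hfree
    rw [SimpleGraph.ConnectedComponent.mem_supp_iff] at hxC
    have hxN : ¬ Covers N x := fun h => hxM (h.mono hNM)
    have finish : ∀ y, B.connectedComponentMk y = D → p y ≠ p x → ¬ Covers N y →
        ∃ M', IsMatchingSet (fillOutside p R C.supp) M' ∧ M'.card = M.card ∧
          (M'.filter fun f => ¬ R.Adj f.1 f.2).card <
            (M.filter fun f => ¬ R.Adj f.1 f.2).card := by
      intro y hyd hp hyN
      have h : R.Adj y x := hcross _ _ (by rw [hyd, hxC]; exact hDC) hp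
      obtain ⟨m, k⟩ := hNmatch.insert (u := y) (v := x) (.inl h) hyN hxN
      refine ⟨_, m, by omega, ?_⟩
      rw [hfilter _ _ _ h]
      exact hbad
    by_cases hp : p y₁ = p x
    · exact finish y₂ hyD (by rw [← hp]; exact hy.1.symm) hc₂
    · exact finish y₁ rfl hp hc₁

lemma exists_matching_of_filled [Finite V] {p : V → ι} {R B : SimpleGraph V}
    (hR : ∀ x y, R.Adj x y → p x ≠ p y)
    (hcov : ∀ x y, p x ≠ p y → R.Adj x y ∨ B.Adj x y)
    (C : B.ConnectedComponent)
    (hC : ∀ D : B.ConnectedComponent, D.supp.ncard ≤ C.supp.ncard)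
    {M : Finset (V × V)} (hM : IsMatchingSet (fillOutside p R C.supp) M) :
    ∃ M', IsMatchingSet R M' ∧ M'.card = M.card := by
  classical
  induction hk : (M.filter fun f => ¬ R.Adj f.1 f.2).card using Nat.strong_induction_on
    generalizing M with
  | _ k ih =>
    by_cases h : ∃ e ∈ M, ¬ R.Adj e.1 e.2
    · obtain ⟨e, he, heR⟩ := h
      obtain ⟨M', hM', hcard, hlt⟩ := exists_matching_fewer_filled hR hcov C hC hM he heR
      obtain ⟨M'', h1, h2⟩ := ih _ (hk ▸ hlt) hM' rfl
      exact ⟨M'', h1, h2.trans hcard⟩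
    · push Not at h
      exact ⟨M, hM.mono h, rfl⟩

/-- If all edges of `R` lie in one component, the two-color theorem yields connected matchings. -/
lemma exists_connMatching_of_edges_reachable [Fintype V] [DecidableEq ι]
    {p : V → ι} {R B : SimpleGraph V}
    (hR : ∀ x y, R.Adj x y → p x ≠ p y)
    (hcov : ∀ x y, p x ≠ p y → R.Adj x y ∨ B.Adj x y) {a b : ℕ}
    (h1 : 2 * a + b ≤ Fintype.card V + 1) (h2 : a + 2 * b ≤ Fintype.card V + 1)
    (hout : ∀ r, a + b ≤ (Finset.univ.filter (p · ≠ r)).card + 1)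
    (hconn : ∀ u v u' v', R.Adj u v → R.Adj u' v' → R.Reachable u u') :
    (∃ M, ConnMatching R M ∧ M.card = a) ∨ (∃ M, ConnMatching B M ∧ M.card = b) := by
  classical
  rcases isEmpty_or_nonempty V with hV | hV
  · rw [Fintype.card_eq_zero] at h1 h2
    have : a = 0 ∨ b = 0 := by omega
    rcases this with rfl | rfl
    · exact .inl ⟨∅, ⟨⟨by simp, by simp⟩, by simp⟩, rfl⟩
    · exact .inr ⟨∅, ⟨⟨by simp, by simp⟩, by simp⟩, rfl⟩
  have : Nonempty B.ConnectedComponent := hV.map B.connectedComponentMk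
  obtain ⟨C, hC⟩ := Finite.exists_max fun D : B.ConnectedComponent => D.supp.ncard
  let B' : SimpleGraph V :=
    { Adj := fun u v => B.Adj u v ∧ u ∈ C.supp ∧ v ∈ C.supp
      symm := ⟨fun u v h => ⟨h.1.symm, h.2.2, h.2.1⟩⟩
      loopless := ⟨fun u h => B.loopless.irrefl u h.1⟩ }
  have hcov' : ∀ x y, p x ≠ p y → (fillOutside p R C.supp).Adj x y ∨ B'.Adj x y := by
    intro x y hxy
    by_cases hx : x ∈ C.supp ∧ y ∈ C.supp
    · rcases hcov x y hxy with h | h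
      · exact .inl (.inl h)
      · exact .inr ⟨h, hx⟩
    · exact .inl (.inr ⟨hxy, hx⟩)
  rcases hasMatchingIn_of_two_coloring hcov' a b Finset.univ h1 h2 hout with
    ⟨M, hM, -, rfl⟩ | ⟨M, hM, -, rfl⟩
  · obtain ⟨M', hM', hcard⟩ := exists_matching_of_filled hR hcov C hC hM
    exact .inl ⟨M', ⟨hM', fun e he f hf => hconn _ _ _ _ (hM'.1 e he) (hM'.1 f hf)⟩, hcard⟩
  · refine .inr ⟨M, ⟨hM.mono fun e he => (hM.1 e he).1, fun e he f hf => ?_⟩, rfl⟩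
    exact SimpleGraph.ConnectedComponent.exact ((hM.1 e he).2.1.trans (hM.1 f hf).2.1.symm)

end Recoloring

section Disconnected

variable {ι : Type*}

/-- Two edges of `R` in different components that join the same two parts: if `B` is disconnected,
the graph is bipartite with both sides split in two and monochromatic between the pieces. -/
lemma exists_connMatching_of_aligned [Fintype V] [DecidableEq ι]
    {p : V → ι} {R B : SimpleGraph V}
    (hcov : ∀ x y, p x ≠ p y → R.Adj x y ∨ B.Adj x y) {a b : ℕ}
    (hout : ∀ r, a + b ≤ (Finset.univ.filter (p · ≠ r)).card + 1)
    (hB : ¬ ∀ z w, B.Reachable z w)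
    {u v u' v' : V} (huv : R.Adj u v) (huv' : R.Adj u' v') (hdis : ¬ R.Reachable u u')
    (hpu : p u = p u') (hpv : p v = p v') (hp : p u ≠ p v) :
    (∃ M, ConnMatching R M ∧ M.card = a) ∨ (∃ M, ConnMatching B M ∧ M.card = b) := by
  classical
  have hcross : ∀ x y, R.Reachable u x → ¬ R.Reachable u y → p x ≠ p y → B.Adj x y :=
    fun x y hx hy hxy => (hcov x y hxy).resolve_left fun h => hy (hx.trans h.reachable)
  have hv := huv.reachable
  have hv' : ¬ R.Reachable u v' := fun h => hdis (h.trans huv'.symm.reachable)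
  have e1 : B.Adj u v' := hcross u v' (.refl u) hv' (by rwa [← hpv])
  have e2 : B.Adj v u' := hcross v u' hv hdis (by rw [← hpu]; exact hp.symm)
  have hjoin : ¬ B.Reachable u v := by
    intro h
    apply hB
    have hall : ∀ z, B.Reachable u z := by
      intro z
      by_cases hz : R.Reachable u z
      · by_cases hzu : p z = p u
        · exact (h.trans e2.reachable).trans ((h.trans e2.reachable).symm.trans
            (e1.reachable.trans (hcross z v' hz hv' (by rw [hzu, ← hpv]; exact hp)).symm.reachable))
        · exact (h.trans e2.reachable).trans
            (hcross z u' hz hdis (by rw [← hpu]; exact hzu)).symm.reachable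
      · by_cases hzu : p u = p z
        · exact h.trans (hcross v z hv hz (by rw [← hzu]; exact hp.symm)).reachable
        · exact (hcross u z (.refl u) hz hzu).reachable
    exact fun z w => (hall z).symm.trans (hall w)
  have hparts : ∀ z, p z = p u ∨ p z = p v := by
    intro z
    by_contra! hz
    apply hjoin
    by_cases hzR : R.Reachable u z
    · exact e1.reachable.trans
        ((hcross z v' hzR hv' (by rw [← hpv]; exact hz.2)).symm.reachable.trans
        ((hcross z u' hzR hdis (by rw [← hpu]; exact hz.1)).reachable.trans e2.symm.reachable))
    · exact (hcross u z (.refl u) hzR hz.1.symm).reachable.trans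
        (hcross v z hv hzR hz.2.symm).symm.reachable
  let A₁ := Finset.univ.filter fun z => p z = p u ∧ R.Reachable u z
  let A₂ := Finset.univ.filter fun z => p z = p u ∧ ¬ R.Reachable u z
  let B₁ := Finset.univ.filter fun z => p z = p v ∧ R.Reachable u z
  let B₂ := Finset.univ.filter fun z => p z = p v ∧ ¬ R.Reachable u z
  have hA : a + b ≤ A₁.card + A₂.card + 1 := by
    refine (hout (p v)).trans (Nat.add_le_add_right ((Finset.card_le_card ?_).trans
      (Finset.card_union_le _ _)) 1)
    intro z hz
    have := hparts z
    simp only [Finset.mem_filter, Finset.mem_univ, true_and, Finset.mem_union, A₁, A₂] at hz ⊢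
    tauto
  have hB' : a + b ≤ B₁.card + B₂.card + 1 := by
    refine (hout (p u)).trans (Nat.add_le_add_right ((Finset.card_le_card ?_).trans
      (Finset.card_union_le _ _)) 1)
    intro z hz
    have := hparts z
    simp only [Finset.mem_filter, Finset.mem_univ, true_and, Finset.mem_union, B₁, B₂] at hz ⊢
    tauto
  have a12 : ∀ x ∈ A₁, ∀ y ∈ B₂, B.Adj x y := by
    intro x hx y hy
    simp only [Finset.mem_filter, Finset.mem_univ, true_and, A₁, B₂] at hx hy
    exact hcross x y hx.2 hy.2 (by rw [hx.1, hy.1]; exact hp)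
  have a21 : ∀ x ∈ A₂, ∀ y ∈ B₁, B.Adj x y := by
    intro x hx y hy
    simp only [Finset.mem_filter, Finset.mem_univ, true_and, A₂, B₁] at hx hy
    exact (hcross y x hy.2 hx.2 (by rw [hx.1, hy.1]; exact hp.symm)).symm
  have mu : u ∈ A₁ := by simp [A₁]
  have mv : v ∈ B₁ := by simp [B₁, hv]
  have mu' : u' ∈ A₂ := by simp [A₂, hpu, hdis]
  have mv' : v' ∈ B₂ := by simp [B₂, hpv, hv']
  have a11 : ∀ x ∈ A₁, ∀ y ∈ B₁, R.Adj x y := by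
    intro x hx y hy
    have hxy : p x ≠ p y := by
      rw [(Finset.mem_filter.1 hx).2.1, (Finset.mem_filter.1 hy).2.1]; exact hp
    refine (hcov x y hxy).resolve_right fun h => hjoin ?_
    exact (a12 u mu v' mv').reachable.trans ((a12 x hx v' mv').symm.reachable.trans
      (h.reachable.trans ((a21 u' mu' y hy).symm.reachable.trans (a21 u' mu' v mv).reachable)))
  have a22 : ∀ x ∈ A₂, ∀ y ∈ B₂, R.Adj x y := by
    intro x hx y hy
    have hxy : p x ≠ p y := by
      rw [(Finset.mem_filter.1 hx).2.1, (Finset.mem_filter.1 hy).2.1]; exact hp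
    refine (hcov x y hxy).resolve_right fun h => hjoin ?_
    exact (a12 u mu y hy).reachable.trans (h.symm.reachable.trans (a21 x hx v mv).reachable)
  by_contra hno
  rw [not_or] at hno
  have f11 : ¬ (a ≤ A₁.card ∧ a ≤ B₁.card) := fun h =>
    hno.1 (exists_connMatching_of_biclique a11 h.1 h.2)
  have f22 : ¬ (a ≤ A₂.card ∧ a ≤ B₂.card) := fun h =>
    hno.1 (exists_connMatching_of_biclique a22 h.1 h.2)
  have f12 : ¬ (b ≤ A₁.card ∧ b ≤ B₂.card) := fun h =>
    hno.2 (exists_connMatching_of_biclique a12 h.1 h.2)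
  have f21 : ¬ (b ≤ A₂.card ∧ b ≤ B₁.card) := fun h =>
    hno.2 (exists_connMatching_of_biclique a21 h.1 h.2)
  omega

/-- Connected version of the two-color theorem for complete multipartite graphs. -/
theorem exists_connMatching_of_two_coloring [Fintype V] [DecidableEq ι]
    {p : V → ι} {R B : SimpleGraph V}
    (hR : ∀ x y, R.Adj x y → p x ≠ p y) (hB : ∀ x y, B.Adj x y → p x ≠ p y)
    (hcov : ∀ x y, p x ≠ p y → R.Adj x y ∨ B.Adj x y) {a b : ℕ}
    (h1 : 2 * a + b ≤ Fintype.card V + 1) (h2 : a + 2 * b ≤ Fintype.card V + 1)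
    (hout : ∀ r, a + b ≤ (Finset.univ.filter (p · ≠ r)).card + 1) :
    (∃ M, ConnMatching R M ∧ M.card = a) ∨ (∃ M, ConnMatching B M ∧ M.card = b) := by
  by_cases hRc : ∀ u v u' v', R.Adj u v → R.Adj u' v' → R.Reachable u u'
  · exact exists_connMatching_of_edges_reachable hR hcov h1 h2 hout hRc
  by_cases hBc : ∀ z w, B.Reachable z w
  · exact (exists_connMatching_of_edges_reachable hB (fun x y h => (hcov x y h).symm)
      (by omega) (by omega) (fun r => by rw [add_comm]; exact hout r)
      (fun u _ u' _ _ _ => hBc u u')).symm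
  push Not at hRc
  obtain ⟨u, v, u', v', huv, huv', hdis⟩ := hRc
  have hp := hR _ _ huv
  have hp' := hR _ _ huv'
  by_cases hs : p u = p u' ∧ p v = p v'
  · exact exists_connMatching_of_aligned hcov hout hBc huv huv' hdis hs.1 hs.2 hp
  by_cases ht : p u = p v' ∧ p v = p u'
  · exact exists_connMatching_of_aligned hcov hout hBc huv huv'.symm
      (fun h => hdis (h.trans huv'.symm.reachable)) ht.1 ht.2 hp
  exfalso
  apply hBc
  have hv := huv.reachable
  have hv' : ¬ R.Reachable u v' := fun h => hdis (h.trans huv'.symm.reachable)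
  have hcross : ∀ x y, R.Reachable u x → ¬ R.Reachable u y → p x ≠ p y → B.Reachable x y :=
    fun x y hx hy hxy =>
      ((hcov x y hxy).resolve_left fun h => hy (hx.trans h.reachable)).reachable
  have c1 := hcross u u' (.refl u) hdis
  have c2 := hcross u v' (.refl u) hv'
  have c3 := hcross v u' hv hdis
  have c4 := hcross v v' hv hv'
  have hfour : B.Reachable u v ∧ B.Reachable u u' ∧ B.Reachable u v' := by
    have : (p u ≠ p u' ∧ p u ≠ p v' ∧ p v ≠ p u') ∨ (p u ≠ p u' ∧ p u ≠ p v' ∧ p v ≠ p v') ∨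
        (p u ≠ p u' ∧ p v ≠ p u' ∧ p v ≠ p v') ∨ (p u ≠ p v' ∧ p v ≠ p u' ∧ p v ≠ p v') := by
      grind
    rcases this with ⟨x, y, z⟩ | ⟨x, y, z⟩ | ⟨x, y, z⟩ | ⟨x, y, z⟩
    · exact ⟨(c1 x).trans (c3 z).symm, c1 x, c2 y⟩
    · exact ⟨(c2 y).trans (c4 z).symm, c1 x, c2 y⟩
    · exact ⟨(c1 x).trans (c3 y).symm, c1 x, ((c1 x).trans (c3 y).symm).trans (c4 z)⟩
    · exact ⟨(c2 x).trans (c4 z).symm, ((c2 x).trans (c4 z).symm).trans (c3 y), c2 x⟩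
  have hall : ∀ z, B.Reachable u z := by
    intro z
    by_cases hz : R.Reachable u z
    · by_cases hzu : p z = p u'
      · exact hfour.2.2.trans (hcross z v' hz hv' (by rw [hzu]; exact hp')).symm
      · exact hfour.2.1.trans (hcross z u' hz hdis hzu).symm
    · by_cases hzu : p u = p z
      · exact hfour.1.trans (hcross v z hv hz (by rw [← hzu]; exact hp.symm))
      · exact hcross u z (.refl u) hz hzu
  exact fun z w => (hall z).symm.trans (hall w)

end Disconnected

lemma ConnMatching.mono {G G' : SimpleGraph V} (h : G ≤ G') {M : Finset (V × V)}
    (hM : ConnMatching G M) : ConnMatching G' M :=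
  ⟨hM.1.mono fun e he => h (hM.1.1 e he), fun e he f hf => (hM.2 e he f hf).mono h⟩

/-- Claim "no-large": in a 3-edge-colored `K_N`, `N = 2x₁ + x₂ + x₃ - 2`, if
for some color `i ∈ {2,3}` every component of `Gᵢ` has at most
`x₁ + xᵢ - 1` vertices, then some color `j` has a connected matching of size
at least `xⱼ`. -/
theorem stmt13 (x : Fin 3 → ℕ) (h1 : 1 ≤ x 1) (h2 : 1 ≤ x 2)
    (h12 : x 1 ≤ x 0) (h13 : x 2 ≤ x 0)
    (N : ℕ) (hN : N = 2 * x 0 + x 1 + x 2 - 2)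
    (c : Sym2 (Fin N) → Fin 3)
    (i : Fin 3) (hi : i ≠ 0)
    (hsmall : ∀ v : Fin N,
      Nat.card {u : Fin N |
        (colorSub (⊤ : SimpleGraph (Fin N)) c i).Reachable v u} ≤
      x 0 + x i - 1) :
    ∃ j : Fin 3, ∃ M,
      ConnMatching (colorSub (⊤ : SimpleGraph (Fin N)) c j) M ∧ x j ≤ M.card := by
  classical
  set G : Fin 3 → SimpleGraph (Fin N) := colorSub (⊤ : SimpleGraph (Fin N)) c with hG
  obtain ⟨j, hj0, hji, hxi, hsum, hxj⟩ : ∃ j : Fin 3, j ≠ 0 ∧ j ≠ i ∧ 1 ≤ x i ∧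
      x i + x j = x 1 + x 2 ∧ 1 ≤ x j ∧ x j ≤ x 0 := by
    fin_cases i
    · exact absurd rfl hi
    · exact ⟨2, by decide, by decide, h1, rfl, h2, h13⟩
    · exact ⟨1, by decide, by decide, h2, add_comm _ _, h1, h12⟩
  have hcol : ∀ k : Fin 3, k = i ∨ k = 0 ∨ k = j := by
    intro k
    have : ∀ i j k : Fin 3, i ≠ 0 → j ≠ 0 → j ≠ i → k = i ∨ k = 0 ∨ k = j := by decide
    exact this i j k hi hj0 hji
  have hadj : ∀ u v, u ≠ v → (G (c s(u, v))).Adj u v := by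
    intro u v huv
    simp [hG, colorSub, SimpleGraph.fromRel_adj, huv]
  let p : Fin N → (G i).ConnectedComponent := (G i).connectedComponentMk
  let H : SimpleGraph (Fin N) := SimpleGraph.comap p ⊤
  have hcov : ∀ u v, p u ≠ p v → (G 0 ⊓ H).Adj u v ∨ (G j ⊓ H).Adj u v := by
    intro u v huv
    have h := hadj u v fun h => huv (congrArg p h)
    rcases hcol (c s(u, v)) with hk | hk | hk <;> rw [hk] at h
    · exact absurd (SimpleGraph.ConnectedComponent.sound h.reachable) huv
    · exact .inl ⟨h, huv⟩
    · exact .inr ⟨h, huv⟩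
  have hout : ∀ r, x 0 + x j ≤ (Finset.univ.filter (p · ≠ r)).card + 1 := by
    intro r
    induction r using SimpleGraph.ConnectedComponent.ind with
    | _ v =>
      have h3 := card_part_add_card_outside p Finset.univ (p v)
      have h4 : (Finset.univ.filter (p · = p v)).card ≤ x 0 + x i - 1 := by
        refine le_trans (le_of_eq ?_) (hsmall v)
        rw [Nat.card_eq_fintype_card, Fintype.card_subtype]
        congr 1
        ext u
        simp only [Finset.mem_filter, Finset.mem_univ, true_and, Set.mem_ofPred_eq, p,
          SimpleGraph.ConnectedComponent.eq]
        exact SimpleGraph.reachable_comm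
      rw [Finset.card_univ, Fintype.card_fin] at h3
      change x 0 + x j ≤ (Finset.univ.filter (p · ≠ p v)).card + 1
      omega
  rcases exists_connMatching_of_two_coloring (p := p) (R := G 0 ⊓ H) (B := G j ⊓ H)
      (fun u v h => h.2) (fun u v h => h.2) hcov
      (a := x 0) (b := x j) (by rw [Fintype.card_fin]; omega) (by rw [Fintype.card_fin]; omega)
      hout with ⟨M, hM, hc⟩ | ⟨M, hM, hc⟩
  · exact ⟨0, M, hM.mono inf_le_left, hc.ge⟩
  · exact ⟨j, M, hM.mono inf_le_left, hc.ge⟩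
end
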